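/- arXiv:2209.07847 — 3 statements merged into one kernel-verified Lean document; each statement's English description precedes it below -/
import Mathlib

section
/- Let G be a cochordal finite simple graph (i.e., the complement G^c is chordal). Then for every k with 1 ≤ k ≤ ν(G), the squarefree power I(G)^{[k]} has linear quotients. -/
open MvPolynomial

section Preamble

variable (K : Type*) [Field K] {σ : Type*} [Fintype σ] [DecidableEq σ]

/-- A (monic) monomial of the polynomial ring. -/
def IsMonomial (f : MvPolynomial σ K) : Prop :=
  ∃ d : σ →₀ ℕ, f = monomial d 1

/-- An ideal generated by monomials. -/
def IsMonomialIdeal (I : Ideal (MvPolynomial σ K)) : Prop :=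
  ∃ A : Set (MvPolynomial σ K), (∀ u ∈ A, IsMonomial K u) ∧ I = Ideal.span A

/-- The unique minimal set of monomial generators `G(I)` of a monomial ideal:
the monomials of `I` that are minimal with respect to divisibility. -/
def minGens (I : Ideal (MvPolynomial σ K)) : Set (MvPolynomial σ K) :=
  {u | IsMonomial K u ∧ u ∈ I ∧ ∀ v, IsMonomial K v → v ∈ I → v ∣ u → v = u}

/-- A squarefree monomial ideal. -/
def IsSqfreeMonomialIdeal (I : Ideal (MvPolynomial σ K)) : Prop :=
  IsMonomialIdeal K I ∧ ∀ u ∈ minGens K I, Squarefree u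

/-- The `k`-th squarefree power `I^{[k]}`: the ideal generated by the squarefree
products of `k` minimal monomial generators of `I`. -/
noncomputable def sqPow (I : Ideal (MvPolynomial σ K)) (k : ℕ) : Ideal (MvPolynomial σ K) :=
  Ideal.span {u | Squarefree u ∧ ∃ l : List (MvPolynomial σ K),
    l.length = k ∧ (∀ f ∈ l, f ∈ minGens K I) ∧ u = l.prod}

/-- `ν(I)`: the maximum length of a regular sequence of monomials in `I`. -/
noncomputable def monNu (I : Ideal (MvPolynomial σ K)) : ℕ :=
  sSup {m | ∃ l : List (MvPolynomial σ K), l.length = m ∧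
    (∀ f ∈ l, IsMonomial K f ∧ f ∈ I) ∧
    RingTheory.Sequence.IsRegular (MvPolynomial σ K) l}

/-- The minimal degree `d` of a minimal monomial generator of `I`
(so `d_k = minDeg (I^{[k]})`). -/
noncomputable def minDeg (I : Ideal (MvPolynomial σ K)) : ℕ :=
  sInf (totalDegree '' minGens K I)

/-- `depth(S/I)`: the maximum length of an `S/I`-regular sequence of elements of
the graded maximal ideal `(x_1, …, x_n)`. -/
noncomputable def qdepth (I : Ideal (MvPolynomial σ K)) : ℕ :=
  sSup {m | ∃ l : List (MvPolynomial σ K), l.length = m ∧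
    (∀ f ∈ l, f ∈ Ideal.span (Set.range (X : σ → MvPolynomial σ K))) ∧
    RingTheory.Sequence.IsRegular (MvPolynomial σ K ⧸ I) l}

/-- `I` has linear quotients with respect to the ordering `L` of its minimal
monomial generators: each successive colon ideal is generated by variables. -/
def HasLinearQuotientsOrder (I : Ideal (MvPolynomial σ K))
    (L : List (MvPolynomial σ K)) : Prop :=
  L.Nodup ∧ (∀ u, u ∈ L ↔ u ∈ minGens K I) ∧
  ∀ i : Fin L.length, 0 < (i : ℕ) →
    ∃ A : Set σ,
      Submodule.colon (Ideal.span {u | u ∈ L.take (i : ℕ)}) (Ideal.span {L.get i})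
        = Ideal.span (X '' A)

/-- A monomial ideal with linear quotients. -/
def HasLinearQuotients (I : Ideal (MvPolynomial σ K)) : Prop :=
  ∃ L, HasLinearQuotientsOrder K I L

/-- A polymatroidal ideal: a monomial ideal generated in a single degree whose
minimal generators satisfy the exchange property. -/
def IsPolymatroidal (I : Ideal (MvPolynomial σ K)) : Prop :=
  IsMonomialIdeal K I ∧
  (∃ d, ∀ u ∈ minGens K I, totalDegree u = d) ∧
  ∀ u ∈ minGens K I, ∀ v ∈ minGens K I, ∀ k : σ,
    degreeOf k v < degreeOf k u →
    ∃ l : σ, degreeOf l u < degreeOf l v ∧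
      ∃ w, u = X k * w ∧ X l * w ∈ minGens K I

/-- A matroidal ideal: a polymatroidal ideal all of whose minimal generators are
squarefree. -/
def IsMatroidal (I : Ideal (MvPolynomial σ K)) : Prop :=
  IsPolymatroidal K I ∧ ∀ u ∈ minGens K I, Squarefree u

/-- The squarefree part of a monomial ideal: the ideal generated by its squarefree
minimal generators. -/
noncomputable def sqfPart (I : Ideal (MvPolynomial σ K)) : Ideal (MvPolynomial σ K) :=
  Ideal.span {u | u ∈ minGens K I ∧ Squarefree u}

/-- The squarefree Veronese ideal `𝔪^{[d]}`, generated by all squarefree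
monomials of degree `d`. -/
noncomputable def veronese (d : ℕ) : Ideal (MvPolynomial σ K) :=
  Ideal.span {u | ∃ F : Finset σ, F.card = d ∧ u = ∏ i ∈ F, X i}

/-- A chordal graph: no induced cycle of length greater than 3. -/
def IsChordal {V : Type*} (G : SimpleGraph V) : Prop :=
  ∀ m : ℕ, 4 ≤ m → ¬ ∃ f : ZMod m → V, Function.Injective f ∧
    ∀ i j : ZMod m, G.Adj (f i) (f j) ↔ (i = j + 1 ∨ j = i + 1)

/-- A matching of `G`: a finite set of pairwise vertex-disjoint edges of `G`. -/
def IsMatching (G : SimpleGraph σ) (M : Finset (Sym2 σ)) : Prop :=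
  (↑M ⊆ G.edgeSet) ∧ (M : Set (Sym2 σ)).Pairwise fun e f => ∀ v, v ∈ e → v ∉ f

/-- A `k`-matching of `G`. -/
def IsKMatching (G : SimpleGraph σ) (M : Finset (Sym2 σ)) (k : ℕ) : Prop :=
  IsMatching G M ∧ M.card = k

/-- The vertex set `V(M)` of a matching. -/
def mVerts (M : Finset (Sym2 σ)) : Finset σ :=
  Finset.univ.filter fun v => ∃ e ∈ M, v ∈ e

/-- The squarefree monomial `∏_{v ∈ V(M)} x_v` attached to a matching. -/
noncomputable def matchMon (M : Finset (Sym2 σ)) : MvPolynomial σ K :=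
  ∏ v ∈ mVerts M, X v

/-- The edge ideal `I(G)` of a finite simple graph `G`. -/
noncomputable def edgeIdeal (G : SimpleGraph σ) : Ideal (MvPolynomial σ K) :=
  Ideal.span {u | ∃ i j, G.Adj i j ∧ u = X i * X j}

/-- The `k`-th squarefree power `I(G)^{[k]}` of the edge ideal, generated by the
monomials `∏_{v ∈ V(M)} x_v` of the `k`-matchings `M` of `G`. -/
noncomputable def matchPow (G : SimpleGraph σ) (k : ℕ) : Ideal (MvPolynomial σ K) :=
  Ideal.span {u | ∃ M : Finset (Sym2 σ), IsKMatching G M k ∧ u = matchMon K M}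

/-- The matching number `ν(G)`. -/
noncomputable def matchNum (G : SimpleGraph σ) : ℕ :=
  sSup {k | ∃ M : Finset (Sym2 σ), IsKMatching G M k}

end Preamble

inductive PMat {V : Type*} (F : SimpleGraph V) : ℕ → Finset V → Prop
  | nil : PMat F 0 ∅
  | cons {k : ℕ} {X Y : Finset V} {a b : V} (hab : F.Adj a b) (ha : a ∉ X) (hb : b ∉ X)
      (h : PMat F k X) (hY : ∀ z, z ∈ Y ↔ z = a ∨ z = b ∨ z ∈ X) : PMat F (k+1) Y

namespace PMat
variable {V : Type*} {F : SimpleGraph V}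

theorem remove {k : ℕ} {X : Finset V} (h : PMat F k X) : ∀ v ∈ X,
    ∃ (w : V) (k' : ℕ) (X' : Finset V), k = k' + 1 ∧ F.Adj v w ∧ PMat F k' X' ∧ v ∉ X' ∧ w ∉ X' ∧
      ∀ z, z ∈ X ↔ z = v ∨ z = w ∨ z ∈ X' := by
  classical
  induction h with
  | nil => simp
  | @cons k X Y a b hab ha hb h hY ih =>
    intro v hv
    by_cases hva : v = a
    · subst hva
      exact ⟨b, k, X, rfl, hab, h, ha, hb, hY⟩
    by_cases hvb : v = b
    · subst hvb
      exact ⟨a, k, X, rfl, hab.symm, h, hb, ha, fun z => by grind⟩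
    have hvX : v ∈ X := by grind
    obtain ⟨w, k', X', rfl, hvw, hX', h1, h2, h3⟩ := ih v hvX
    refine ⟨w, k' + 1, insert a (insert b X'), rfl, hvw, ?_, ?_, ?_, ?_⟩
    · exact cons hab (by grind) (by grind) hX' (by grind)
    · grind
    · grind
    · grind

theorem card {k : ℕ} {X : Finset V} (h : PMat F k X) : X.card = 2 * k := by
  classical
  induction h with
  | nil => simp
  | @cons k X Y a b hab ha hb h hY ih =>
    have : Y = insert a (insert b X) := by ext; grind
    have := hab.ne
    rw [‹Y = _›, Finset.card_insert_of_notMem (by grind), Finset.card_insert_of_notMem (by grind)]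
    omega

theorem mono {F' : SimpleGraph V} (hF : ∀ a b, F.Adj a b → F'.Adj a b) {k : ℕ} {X : Finset V}
    (h : PMat F k X) : PMat F' k X := by
  induction h with
  | nil => exact nil
  | cons hab ha hb h hY ih => exact cons (hF _ _ hab) ha hb ih hY

theorem split {F' : SimpleGraph V} {b q : V}
    (hF : ∀ x y, F'.Adj x y → F.Adj x y ∨ (x = b ∧ y = q) ∨ (x = q ∧ y = b)) {k : ℕ} {X : Finset V}
    (h : PMat F' k X) : PMat F k X ∨ ∃ k' X', k = k' + 1 ∧ PMat F k' X' ∧ b ∉ X' ∧ q ∉ X' ∧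
      ∀ z, z ∈ X ↔ z = b ∨ z = q ∨ z ∈ X' := by
  classical
  induction h with
  | nil => exact .inl nil
  | @cons k X Y x y hab ha hb h hY ih =>
    rcases ih with ih | ⟨k', X', rfl, h1, h2, h3, h4⟩
    · rcases hF _ _ hab with h' | ⟨rfl, rfl⟩ | ⟨rfl, rfl⟩
      · exact .inl (cons h' ha hb ih hY)
      · exact .inr ⟨k, X, rfl, ih, ha, hb, hY⟩
      · exact .inr ⟨k, X, rfl, ih, hb, ha, by grind⟩
    · rcases hF _ _ hab with h' | ⟨rfl, rfl⟩ | ⟨rfl, rfl⟩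
      · right
        exact ⟨k' + 1, insert x (insert y X'), rfl, cons h' (by grind) (by grind) h1 (by grind),
          by grind, by grind, by grind⟩
      · grind
      · grind

set_option maxHeartbeats 2000000 in
theorem core (k : ℕ) : ∀ (F : SimpleGraph V) (L : Set V) (j l : V) (_ : j ≠ l) (_ : j ∉ L)
    (_ : l ∉ L) (_ : ∀ p ∈ L, F.Adj p j ∨ F.Adj p l)
    (_ : ∀ a b, F.Adj a b → (a ∈ L ∨ a = j) ∨ (b ∈ L ∨ b = j))
    (X Y : Finset V) (_ : PMat F k X) (_ : PMat F (k+1) Y) (_ : j ∉ X) (_ : l ∉ X),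
    ∃ Z b, PMat F (k+1) Z ∧ b ∈ Y ∧ ∀ z ∈ Z, z ∈ X ∨ z = j ∨ z = l ∨ z = b := by
  classical
  induction k with
  | zero =>
    intro F L j l hjl hj hl hL hE X Y hX hY hjX hlX
    have hc := hX.card
    have hc' := hY.card
    obtain rfl : X = ∅ := by simpa using hc
    by_cases hsub : ∀ z ∈ Y, z = j ∨ z = l
    · obtain ⟨b, hb⟩ : Y.Nonempty := by rw [← Finset.card_pos]; omega
      exact ⟨Y, b, hY, hb, fun z hz => by grind⟩
    by_cases hv : ∃ v ∈ Y, v ∈ L ∧ v ≠ j ∧ v ≠ l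
    · obtain ⟨v, hvY, hvL, hvX⟩ := hv
      rcases hL v hvL with h | h
      · exact ⟨{v, j}, v, cons h (by simp) (by simp) nil (by simp), hvY, by grind⟩
      · exact ⟨{v, l}, v, cons h (by simp) (by simp) nil (by simp), hvY, by grind⟩
    push Not at hsub
    obtain ⟨b, hbY, hbj, hbl⟩ := hsub
    obtain ⟨p, k', Y', hk, hbp, hY', hbY', hpY', hYY⟩ := hY.remove b hbY
    have hpj : p = j := by
      have := hE b p hbp
      grind
    subst hpj
    exact ⟨{b, p}, b, cons hbp (by simp) (by simp) nil (by simp), hbY, by grind⟩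
  | succ k ih =>
    intro F L j l hjl hj hl hL hE X Y hX hY hjX hlX
    have hc' := hY.card
    by_cases hsub : ∀ z ∈ Y, z ∈ X ∨ z = j ∨ z = l
    · obtain ⟨b, hb⟩ : Y.Nonempty := by rw [← Finset.card_pos]; omega
      exact ⟨Y, b, hY, hb, fun z hz => by grind⟩
    by_cases hv : ∃ v ∈ Y, v ∈ L ∧ v ∉ X
    · obtain ⟨v, hvY, hvL, hvX⟩ := hv
      rcases hL v hvL with h | h
      · exact ⟨insert v (insert j X), v, cons h hvX hjX hX (by simp), hvY, by grind⟩
      · exact ⟨insert v (insert l X), v, cons h hvX hlX hX (by simp), hvY, by grind⟩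
    push Not at hsub hv
    obtain ⟨b, hbY, hbX, hbj, hbl⟩ := hsub
    obtain ⟨p, k', Y', hk, hbp, hY', hbY', hpY', hYY⟩ := hY.remove b hbY
    obtain rfl : k' = k + 1 := by omega
    have hbL : b ∉ L := fun h => hbX (hv b hbY h)
    by_cases hpj : p = j
    · subst hpj
      exact ⟨insert b (insert p X), b, cons hbp hbX hjX hX (by simp), hbY, by grind⟩
    have hpL : p ∈ L := by
      have := hE b p hbp
      grind
    have hpX : p ∈ X := hv p (by grind) hpL
    obtain ⟨p', k', X', hk', hpp, hX', hpX', hpX'', hXX⟩ := hX.remove p hpX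
    obtain rfl : k' = k := by omega
    have hne := hpp.ne
    by_cases hp'L : p' ∈ L
    · have hL' := hL p' hp'L
      clear ih hE hL hv
      rcases hL' with h | h
      · refine ⟨insert b (insert p (insert p' (insert j X'))), b,
          cons (X := insert p' (insert j X')) hbp (by grind) (by grind)
          (cons (X := X') h (by grind) (by grind) hX' (by simp)) (by simp), hbY, by grind⟩
      · refine ⟨insert b (insert p (insert p' (insert l X'))), b,
          cons (X := insert p' (insert l X')) hbp (by grind) (by grind)
          (cons (X := X') h (by grind) (by grind) hX' (by simp)) (by simp), hbY, by grind⟩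
    by_cases hp'Y : p' ∈ Y
    · have hp'Y' : p' ∈ Y' := by grind
      obtain ⟨q, k'', Y'', hk'', hp'q, hY'', hp'Y'', hqY'', hYY'⟩ := hY'.remove p' hp'Y'
      obtain rfl : k'' = k' := by omega
      have hq : q ∈ L ∨ q = j := by
        have := hE p' q hp'q
        grind
      have hbq : b ≠ q := by grind
      obtain ⟨F', hF'⟩ : ∃ F' : SimpleGraph V, ∀ x y, F'.Adj x y ↔
          F.Adj x y ∨ (x = b ∧ y = q) ∨ (x = q ∧ y = b) := by
        refine ⟨F ⊔ SimpleGraph.edge b q, fun x y => ?_⟩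
        simp only [SimpleGraph.sup_adj, SimpleGraph.edge_adj]
        grind
      have g1 : b ∉ Y'' := by clear ih hE hL; grind
      have g2 : j ∉ X' := by clear ih hE hL; grind
      have g3 : l ∉ X' := by clear ih hE hL; grind
      obtain ⟨Z, c, hZ, hc, hZX⟩ := ih F' L j l hjl hj hl
        (fun p hp => by simp only [hF']; have := hL p hp; tauto)
        (fun a b => by rw [hF']; rintro (h | h); exacts [hE _ _ h, by clear ih hE hL hv; grind])
        X' (insert b (insert q Y'')) (hX'.mono fun x y h => (hF' x y).2 (.inl h))
        (cons (X := Y'') (a := b) (b := q) ((hF' b q).2 (.inr (.inl ⟨rfl, rfl⟩))) g1 hqY'' (hY''.mono fun x y h => (hF' x y).2 (.inl h)) (by simp))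
        g2 g3
      clear ih hE hL hv
      simp only [Finset.mem_insert] at hc
      rcases hZ.split (F := F) (b := b) (q := q) (fun x y => (hF' x y).1) with
        h | ⟨k3, Z', hk3, hZ', hbZ', hqZ', hZZ⟩
      · exact ⟨insert p (insert p' Z), c, cons hpp (by grind) (by grind) h (by simp), by grind,
          by grind⟩
      · obtain rfl : k3 = k'' := by omega
        refine ⟨insert b (insert p (insert p' (insert q Z'))), c,
          cons (X := insert p' (insert q Z')) hbp (by grind) (by grind)
          (cons (X := Z') hp'q (by grind) (by grind) hZ' (by simp)) (by simp), by grind, by grind⟩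
    · obtain ⟨Z, c, hZ, hc, hZX⟩ := ih F L j l hjl hj hl hL hE X' Y' hX' hY' (by clear ih hE hL; grind)
        (by clear ih hE hL; grind)
      clear ih hE hL hv
      exact ⟨insert p (insert p' Z), c, cons hpp (by grind) (by grind) hZ (by simp), by grind,
        by grind⟩

end PMat

namespace Dirac
variable {V : Type*} {H : SimpleGraph V}

/-- A sequence from `s` to `t` of length `m` whose inner vertices lie in `D`. -/
def Seq (H : SimpleGraph V) (D : Set V) (s t : V) (m : ℕ) (x : ℕ → V) : Prop :=
  x 0 = s ∧ x m = t ∧ (∀ i < m, H.Adj (x i) (x (i+1))) ∧ ∀ i, 0 < i → i < m → x i ∈ D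

theorem exists_seq {D : Set V} {s t c d : V} (hc : c ∈ D)
    (h : Relation.ReflTransGen (fun a b => H.Adj a b ∧ b ∈ D) c d)
    (hs : H.Adj s c) (ht : H.Adj d t) : ∃ m x, Seq H D s t m x := by
  induction h generalizing t with
  | refl =>
    refine ⟨2, fun i => if i = 0 then s else if i = 1 then c else t, by simp, by simp, ?_, ?_⟩
    · intro i hi
      interval_cases i <;> simp [hs, ht]
    · intro i h0 h2
      obtain rfl : i = 1 := by omega
      simpa using hc
  | @tail d e hcd hde ih =>
    obtain ⟨m, x, h0, hm, hx, hD⟩ := ih hde.1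
    refine ⟨m + 1, fun i => if i ≤ m then x i else t, by simpa using h0, by simp, ?_, ?_⟩
    · intro i hi
      by_cases him : i = m
      · subst him; simpa [hm] using ht
      · have : i + 1 ≤ m := by omega
        have h2 : i ≤ m := by omega
        simpa [this, h2] using hx i (by omega)
    · intro i h1 h2
      have h3 : i ≤ m := by omega
      simp only [h3, if_true]
      by_cases him : i = m
      · subst him; rw [hm]; exact hde.2
      · exact hD i h1 (by omega)

theorem seq_shortcut {D : Set V} {s t : V} {m : ℕ} {x : ℕ → V} (hx : Seq H D s t m x)
    {i j : ℕ} (hij : i < j) (hj : j ≤ m) (h : H.Adj (x i) (x j)) :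
    ∃ y, Seq H D s t (m - (j - i - 1)) y := by
  obtain ⟨h0, hm, hx, hD⟩ := hx
  refine ⟨fun k => if k ≤ i then x k else x (k + (j - i - 1)), by simpa using h0, ?_, ?_, ?_⟩
  · have : ¬ (m - (j - i - 1) ≤ i) := by omega
    simp only [this, if_false]
    rw [← hm]; congr 1; omega
  · intro k hk
    rcases lt_trichotomy k i with h1 | h1 | h1
    · have h2 : k ≤ i := by omega
      have h3 : k + 1 ≤ i := by omega
      simpa [h2, h3] using hx k (by omega)
    · subst h1
      have : k + 1 + (j - k - 1) = j := by omega
      simpa [this] using h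
    · have h2 : ¬ k ≤ i := by omega
      have h3 : ¬ k + 1 ≤ i := by omega
      have := hx (k + (j - i - 1)) (by omega)
      have h4 : k + 1 + (j - i - 1) = k + (j - i - 1) + 1 := by omega
      simpa only [h2, h3, if_false, h4] using this
  · intro k hk0 hk
    by_cases h1 : k ≤ i
    · simpa only [h1, if_true] using hD k hk0 (by omega)
    · simpa only [h1, if_false] using hD (k + (j - i - 1)) (by omega) (by omega)

theorem seq_cut {D : Set V} {s t : V} {m : ℕ} {x : ℕ → V} (hx : Seq H D s t m x)
    {i j : ℕ} (hij : i < j) (hj : j ≤ m) (h : x i = x j) :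
    ∃ y, Seq H D s t (m - (j - i)) y := by
  obtain ⟨h0, hm, hx, hD⟩ := hx
  refine ⟨fun k => if k ≤ i then x k else x (k + (j - i)), by simpa using h0, ?_, ?_, ?_⟩
  · by_cases h1 : m - (j - i) ≤ i
    · have h2 : j = m := by omega
      have h3 : m - (j - i) = i := by omega
      simp only [h3, le_refl, if_true]
      rw [h, h2, hm]
    · simp only [h1, if_false]
      rw [← hm]; congr 1; omega
  · intro k hk
    rcases lt_trichotomy k i with h1 | h1 | h1
    · have h2 : k ≤ i := by omega
      have h3 : k + 1 ≤ i := by omega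
      simpa [h2, h3] using hx k (by omega)
    · subst h1
      have h4 : k + 1 + (j - k) = j + 1 := by omega
      have := hx j (by omega)
      simpa [h4, h] using this
    · have h2 : ¬ k ≤ i := by omega
      have h3 : ¬ k + 1 ≤ i := by omega
      have := hx (k + (j - i)) (by omega)
      have h4 : k + 1 + (j - i) = k + (j - i) + 1 := by omega
      simpa only [h2, h3, if_false, h4] using this
  · intro k hk0 hk
    by_cases h1 : k ≤ i
    · simpa only [h1, if_true] using hD k hk0 (by omega)
    · simpa only [h1, if_false] using hD (k + (j - i)) (by omega) (by omega)

theorem clique_aux (hH : IsChordal H) {D : Set V} {v s t c d : V}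
    (hvD : ∀ x ∈ D, x ≠ v ∧ ¬ H.Adj v x) (hvs : H.Adj v s) (hvt : H.Adj v t) (hst : s ≠ t)
    (hc : c ∈ D)
    (h : Relation.ReflTransGen (fun a b => H.Adj a b ∧ b ∈ D) c d)
    (hs : H.Adj s c) (ht : H.Adj d t) : H.Adj s t := by
  classical
  by_contra hnst
  have hex : ∃ m, ∃ x, Seq H D s t m x := exists_seq hc h hs ht
  obtain ⟨x, hx⟩ := Nat.find_spec hex
  have hmin : ∀ m' < Nat.find hex, ¬ ∃ x, Seq H D s t m' x := fun m' h => Nat.find_min hex h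
  set m := Nat.find hex with hm
  clear_value m
  have hinj : ∀ i j, i < j → j ≤ m → x i ≠ x j := fun i j hij hj h =>
    hmin _ (by omega) (seq_cut hx hij hj h)
  have hadj : ∀ i j, i < j → j ≤ m → H.Adj (x i) (x j) → j = i + 1 := by
    intro i j hij hj h
    by_contra hne
    exact hmin _ (by omega) (seq_shortcut hx hij hj h)
  obtain ⟨h0, hxm, hxa, hD⟩ := hx
  have hm0 : m ≠ 0 := by rintro rfl; exact hst (h0.symm.trans hxm)
  have hm1 : m ≠ 1 := by
    rintro rfl
    have := hxa 0 (by omega)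
    rw [h0, hxm] at this
    exact hnst this
  have hxv : ∀ i ≤ m, x i ≠ v := by
    intro i hi
    by_cases hi0 : i = 0
    · subst hi0; rw [h0]; exact hvs.ne'
    by_cases him : i = m
    · subst him; rw [hxm]; exact hvt.ne'
    exact (hvD _ (hD i (by omega) (by omega))).1
  have hxva : ∀ i ≤ m, H.Adj v (x i) ↔ i = 0 ∨ i = m := by
    intro i hi
    by_cases hi0 : i = 0
    · subst hi0; rw [h0]; simp [hvs]
    by_cases him : i = m
    · subst him; rw [hxm]; simp [hvt]
    have := (hvD _ (hD i (by omega) (by omega))).2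
    simp [this, hi0, him]
  have hxx : ∀ i j, i ≤ m → j ≤ m → (H.Adj (x i) (x j) ↔ i = j + 1 ∨ j = i + 1) := by
    intro i j hi hj
    constructor
    · intro h
      rcases lt_trichotomy i j with h1 | h1 | h1
      · right; exact hadj i j h1 hj h
      · subst h1; exact absurd h (H.loopless.irrefl _)
      · left; exact hadj j i h1 hi h.symm
    · rintro (rfl | rfl)
      · exact (hxa j (by omega)).symm
      · exact hxa i (by omega)
  refine hH (m + 2) (by omega) ⟨fun z => if (show Fin (m+2) from z).val ≤ m then
    x (show Fin (m+2) from z).val else v, ?_, ?_⟩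
  · change Function.Injective fun z : Fin (m+2) => if z.val ≤ m then x z.val else v
    intro a b hab
    simp only at hab
    ext
    have ha := a.2
    have hb := b.2
    split_ifs at hab with h1 h2 h2
    · rcases lt_trichotomy a.val b.val with h3 | h3 | h3
      · exact absurd hab (hinj _ _ h3 h2)
      · exact h3
      · exact absurd hab.symm (hinj _ _ h3 h1)
    · exact absurd hab (hxv _ h1)
    · exact absurd hab.symm (hxv _ h2)
    · omega
  · change ∀ a b : Fin (m+2), H.Adj (if a.val ≤ m then x a.val else v)
      (if b.val ≤ m then x b.val else v) ↔ (a = b + 1 ∨ b = a + 1)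
    intro a b
    have key : ∀ a b : Fin (m+2), a = b + 1 ↔ (a.val = b.val + 1 ∨ (a.val = 0 ∧ b.val = m + 1)) := by
      intro a b
      have ha := a.2
      have hb := b.2
      rw [Fin.ext_iff, Fin.val_add_one]
      split_ifs with h
      · rw [Fin.ext_iff] at h
        simp at h
        omega
      · rw [Fin.ext_iff] at h
        simp at h
        omega
    rw [key, key]
    have ha := a.2
    have hb := b.2
    split_ifs with h1 h2 h2
    · rw [hxx _ _ h1 h2]; omega
    · rw [H.adj_comm, hxva _ h1]; omega
    · rw [hxva _ h2]; clear hxx hxva hxv hadj hinj hmin; omega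
    · exact iff_of_false (H.loopless.irrefl _) (by omega)

/-- `u` is simplicial in `H[A]`. -/
def Simp (H : SimpleGraph V) (A : Finset V) (u : V) : Prop :=
  ∀ a ∈ A, ∀ b ∈ A, a ≠ b → H.Adj u a → H.Adj u b → H.Adj a b

theorem dirac (hH : IsChordal H) : ∀ (N : ℕ) (A : Finset V), A.card = N → ∀ v ∈ A,
    (∃ w ∈ A, w ≠ v ∧ ¬ H.Adj v w) → ∃ u ∈ A, u ≠ v ∧ ¬ H.Adj v u ∧ Simp H A u := by
  classical
  intro N
  induction N using Nat.strong_induction_on with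
  | _ N ih =>
  rintro A rfl v hv ⟨w, hwA, hwv, hvw⟩
  set D : Set V := {x | x ∈ A ∧ x ≠ v ∧ ¬ H.Adj v x} with hD
  have hwD : w ∈ D := ⟨hwA, hwv, hvw⟩
  set R := fun a b : V => H.Adj a b ∧ b ∈ D with hR
  set C : Set V := {x | Relation.ReflTransGen R w x} with hC
  have hCD : ∀ x ∈ C, x ∈ D := by
    intro x hx
    rcases Relation.ReflTransGen.cases_tail hx with h | ⟨y, -, h⟩
    · rw [h]; exact hwD
    · exact h.2
  have hCstep : ∀ x ∈ C, ∀ y, H.Adj x y → y ∈ D → y ∈ C := fun x hx y hxy hy =>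
    Relation.ReflTransGen.tail hx ⟨hxy, hy⟩
  have hCsym : ∀ x ∈ C, Relation.ReflTransGen R x w := by
    intro x hx
    induction hx with
    | refl => exact .refl
    | @tail y z hwy hyz ih' =>
      exact Relation.ReflTransGen.head ⟨hyz.1.symm, hCD y hwy⟩ ih'
  set S : Set V := {s | s ∈ A ∧ H.Adj v s ∧ ∃ c ∈ C, H.Adj s c} with hS
  have hSclique : ∀ s ∈ S, ∀ t ∈ S, s ≠ t → H.Adj s t := by
    rintro s ⟨hsA, hvs, c, hc, hsc⟩ t ⟨htA, hvt, d, hd, htd⟩ hst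
    exact clique_aux hH (D := D) (v := v) (fun x hx => hx.2) hvs hvt hst (hCD c hc)
      ((hCsym c hc).trans hd) hsc htd.symm
  set B : Finset V := A.filter (fun x => x ∈ C ∨ x ∈ S) with hB
  have hBA : B.card < A.card := by
    apply Finset.card_lt_card
    rw [Finset.ssubset_iff_of_subset (Finset.filter_subset _ _)]
    refine ⟨v, hv, ?_⟩
    rw [Finset.mem_filter]
    rintro ⟨-, h | h⟩
    · exact (hCD v h).2.1 rfl
    · exact H.loopless.irrefl _ h.2.1
  have hCB : ∀ c ∈ C, c ∈ B := fun c hc => by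
    rw [hB, Finset.mem_filter]; exact ⟨(hCD c hc).1, .inl hc⟩
  have hSB : ∀ c ∈ S, c ∈ B := fun c hc => by
    rw [hB, Finset.mem_filter]; exact ⟨hc.1, .inr hc⟩
  -- neighbours of `C` inside `A` lie in `B`
  have hnb : ∀ c ∈ C, ∀ y ∈ A, H.Adj c y → y ∈ B := by
    intro c hc y hy hcy
    by_cases hyv : H.Adj v y
    · exact hSB y ⟨hy, hyv, c, hc, hcy.symm⟩
    · have : y ≠ v := by
        rintro rfl
        exact (hCD c hc).2.2 hcy.symm
      exact hCB y (hCstep c hc y hcy ⟨hy, this, hyv⟩)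
  suffices h : ∃ u ∈ C, Simp H B u by
    obtain ⟨u, hu, hsimp⟩ := h
    refine ⟨u, (hCD u hu).1, (hCD u hu).2.1, (hCD u hu).2.2, ?_⟩
    intro a ha b hb hab hua hub
    exact hsimp a (hnb u hu a ha hua) b (hnb u hu b hb hub) hab hua hub
  have hBCS : ∀ x ∈ B, x ∈ C ∨ x ∈ S := fun x hx => (Finset.mem_filter.1 hx).2
  by_cases h1 : ∃ s ∈ S, ∃ y ∈ B, y ≠ s ∧ ¬ H.Adj s y
  · obtain ⟨s, hs, hy⟩ := h1
    obtain ⟨u, huB, hus, hsu, hsimp⟩ := ih _ hBA B rfl s (hSB s hs) hy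
    rcases hBCS u huB with h | h
    · exact ⟨u, h, hsimp⟩
    · exact absurd (hSclique s hs u h hus.symm) hsu
  · push Not at h1
    by_cases h2 : ∃ y ∈ B, y ≠ w ∧ ¬ H.Adj w y
    · obtain ⟨u, huB, hus, hsu, hsimp⟩ := ih _ hBA B rfl w (hCB w .refl) h2
      rcases hBCS u huB with h | h
      · exact ⟨u, h, hsimp⟩
      · exact absurd (h1 u h w (hCB w .refl) hus.symm).symm hsu
    · push Not at h2
      by_cases h3 : ∃ c ∈ C, ∃ y ∈ B, y ≠ c ∧ ¬ H.Adj c y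
      · obtain ⟨c, hc, hy⟩ := h3
        obtain ⟨u, huB, hus, hsu, hsimp⟩ := ih _ hBA B rfl c (hCB c hc) hy
        rcases hBCS u huB with h | h
        · exact ⟨u, h, hsimp⟩
        · exact absurd (h1 u h c (hCB c hc) hus.symm).symm hsu
      · push Not at h3
        refine ⟨w, .refl, ?_⟩
        intro a ha b hb hab _ _
        rcases hBCS a ha with h | h
        · exact h3 a h b hb hab.symm
        · exact h1 a h b hb hab.symm

theorem exists_simp (hH : IsChordal H) (A : Finset V) (hA : A.Nonempty) :
    ∃ u ∈ A, Simp H A u := by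
  by_cases h : ∃ v ∈ A, ∃ w ∈ A, w ≠ v ∧ ¬ H.Adj v w
  · obtain ⟨v, hv, hw⟩ := h
    obtain ⟨u, hu, -, -, h⟩ := dirac hH _ A rfl v hv hw
    exact ⟨u, hu, h⟩
  · push Not at h
    obtain ⟨u, hu⟩ := hA
    exact ⟨u, hu, fun a ha b hb hab _ _ => h a ha b hb hab.symm⟩

theorem exists_peo (G : SimpleGraph V) (hH : IsChordal Gᶜ) : ∀ (N : ℕ) (A : Finset V), A.card = N →
    ∃ r : V → ℕ, Set.InjOn r A ∧ (∀ x ∈ A, r x < N) ∧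
      ∀ i ∈ A, ∀ j ∈ A, ∀ l ∈ A, r i < r j → r i < r l → G.Adj j l → G.Adj i j ∨ G.Adj i l := by
  classical
  intro N
  induction N with
  | zero =>
    intro A hA
    obtain rfl : A = ∅ := by simpa using hA
    exact ⟨fun _ => 0, by simp, by simp, by simp⟩
  | succ N ih =>
    intro A hA
    obtain ⟨u, hu, hs⟩ := exists_simp hH A (by rw [← Finset.card_pos]; omega)
    obtain ⟨r, hr1, hr2, hr3⟩ := ih (A.erase u) (by rw [Finset.card_erase_of_mem hu]; omega)
    simp only [Finset.mem_erase] at hr2 hr3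
    refine ⟨fun x => if x = u then 0 else r x + 1, ?_, ?_, ?_⟩
    · intro a ha b hb hab
      have ha' : a ∈ A := ha
      have hb' : b ∈ A := hb
      by_cases h1 : a = u <;> by_cases h2 : b = u <;> simp [h1, h2] at hab ⊢
      exact hr1 (by simp [h1, ha']) (by simp [h2, hb']) hab
    · intro x hx
      by_cases h1 : x = u
      · simp [h1]
      · simpa [h1] using hr2 x ⟨h1, hx⟩
    · intro i hi j hj l hl hij hil hjl
      have h1 : j ≠ u := by rintro rfl; simp at hij
      have h2 : l ≠ u := by rintro rfl; simp at hil
      by_cases h3 : i = u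
      · subst h3
        by_contra hcon
        push Not at hcon
        have := hs j hj l hl hjl.ne (by simp [hcon.1, h1.symm]) (by simp [hcon.2, h2.symm])
        simp at this
        exact this.2 hjl
      · simp only [h1, h2, h3, if_false] at hij hil
        exact hr3 i ⟨h3, hi⟩ j ⟨h1, hj⟩ l ⟨h2, hl⟩ (by omega) (by omega) hjl

end Dirac

namespace CoCh
variable {σ : Type*} [Fintype σ] [DecidableEq σ]

theorem mem_mVerts {M : Finset (Sym2 σ)} {v : σ} : v ∈ mVerts M ↔ ∃ e ∈ M, v ∈ e := by
  simp [mVerts]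

theorem IsMatching.mono {G : SimpleGraph σ} {M M' : Finset (Sym2 σ)} (h : IsMatching G M)
    (hM : M' ⊆ M) : IsMatching G M' :=
  ⟨fun e he => h.1 (hM he), h.2.mono (by exact_mod_cast hM)⟩

theorem pmat_of_matching {F : SimpleGraph σ} (M : Finset (Sym2 σ)) (h : IsMatching F M) :
    PMat F M.card (mVerts M) := by
  induction M using Finset.induction_on with
  | empty =>
    have : mVerts (∅ : Finset (Sym2 σ)) = ∅ := by ext; simp [mVerts]
    rw [this]; exact PMat.nil
  | @insert e M he ih =>
    rw [Finset.card_insert_of_notMem he]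
    induction e using Sym2.ind with
    | _ a b =>
    have hab : F.Adj a b := h.1 (show s(a, b) ∈ _ by simp)
    have hd : ∀ f ∈ M, ∀ v, v ∈ s(a, b) → v ∉ f := by
      intro f hf
      exact h.2 (by simp) (by simp [hf]) (by rintro rfl; exact he hf)
    refine PMat.cons hab ?_ ?_ (ih (IsMatching.mono h (Finset.subset_insert _ _))) ?_
    · rw [mem_mVerts]; rintro ⟨f, hf, ha⟩; exact hd f hf a (by simp) ha
    · rw [mem_mVerts]; rintro ⟨f, hf, ha⟩; exact hd f hf b (by simp) ha
    · intro z; simp [mem_mVerts, or_assoc]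

theorem matching_of_pmat {F : SimpleGraph σ} {k : ℕ} {X : Finset σ} (h : PMat F k X) :
    ∃ M, IsKMatching F M k ∧ mVerts M = X := by
  induction h with
  | nil => exact ⟨∅, ⟨⟨by simp, by simp⟩, rfl⟩, by ext; simp [mVerts]⟩
  | @cons k X Y a b hab ha hb h hY ih =>
    obtain ⟨M, ⟨⟨hM1, hM2⟩, hc⟩, hX⟩ := ih
    have hd : ∀ f ∈ M, ∀ v, v ∈ s(a, b) → v ∉ f := by
      intro f hf v hv hvf
      have hvX : v ∈ X := by rw [← hX, mem_mVerts]; exact ⟨f, hf, hvf⟩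
      rw [Sym2.mem_iff] at hv
      rcases hv with rfl | rfl
      · exact ha hvX
      · exact hb hvX
    have he : s(a, b) ∉ M := fun h => hd _ h a (by simp) (by simp)
    refine ⟨insert s(a, b) M, ⟨⟨?_, ?_⟩, ?_⟩, ?_⟩
    · intro e he'
      rw [Finset.coe_insert] at he'
      rcases he' with rfl | he'
      · exact hab
      · exact hM1 he'
    · rw [Finset.coe_insert]
      refine hM2.insert ?_
      intro f hf _
      exact ⟨hd f hf, fun v hv hv' => hd f hf v hv' hv⟩
    · rw [Finset.card_insert_of_notMem he, hc]
    · ext z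
      rw [hY, ← hX]; simp [mem_mVerts, or_assoc]

/-- The code of an edge. -/
def ecode (r : σ → ℕ) (n : ℕ) : Sym2 σ → ℕ :=
  Sym2.lift ⟨fun a b => n * min (r a) (r b) + max (r a) (r b), fun a b => by
    beta_reduce
    rw [min_comm (r a), max_comm (r a)]⟩

theorem ecode_mk (r : σ → ℕ) (n : ℕ) (a b : σ) :
    ecode r n s(a, b) = n * min (r a) (r b) + max (r a) (r b) := rfl

theorem ecode_inj {r : σ → ℕ} {n : ℕ} (hr : Function.Injective r) (hn : ∀ x, r x < n) :
    Function.Injective (ecode r n) := by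
  intro e f
  induction e using Sym2.ind with
  | _ a b =>
  induction f using Sym2.ind with
  | _ c d =>
  intro h
  rw [ecode_mk, ecode_mk] at h
  have h1 : max (r a) (r b) < n := max_lt (hn a) (hn b)
  have h2 : max (r c) (r d) < n := max_lt (hn c) (hn d)
  have hmax : max (r a) (r b) = max (r c) (r d) := by
    have := congrArg (· % n) h
    simpa [Nat.mul_add_mod, Nat.mod_eq_of_lt h1, Nat.mod_eq_of_lt h2] using this
  have hmin : min (r a) (r b) = min (r c) (r d) := by
    rw [hmax] at h
    have h0 : 0 < n := by omega
    exact Nat.eq_of_mul_eq_mul_left h0 (by omega)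
  rw [Sym2.eq_iff]
  have : (r a = r c ∧ r b = r d) ∨ (r a = r d ∧ r b = r c) := by omega
  rcases this with ⟨h3, h4⟩ | ⟨h3, h4⟩
  · exact .inl ⟨hr h3, hr h4⟩
  · exact .inr ⟨hr h3, hr h4⟩

theorem ecode_lt {r : σ → ℕ} {n : ℕ} (hn : ∀ x, r x < n) {a b c d : σ}
    (h : min (r a) (r b) < min (r c) (r d)) : ecode r n s(a, b) < ecode r n s(c, d) := by
  rw [ecode_mk, ecode_mk]
  have h1 : max (r a) (r b) < n := max_lt (hn a) (hn b)
  have : n * (min (r a) (r b) + 1) ≤ n * min (r c) (r d) := Nat.mul_le_mul_left _ h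
  rw [Nat.mul_add] at this
  omega

/-- The key of a matching (colex order). -/
def key (w : Sym2 σ → ℕ) (M : Finset (Sym2 σ)) : ℕ := ∑ e ∈ M, 2 ^ w e

theorem key_eq {w : Sym2 σ → ℕ} (hw : Function.Injective w) (M : Finset (Sym2 σ)) :
    key w M = ∑ i ∈ M.image w, 2 ^ i := by
  rw [Finset.sum_image (fun _ _ _ _ h => hw h)]; rfl

theorem key_inj {w : Sym2 σ → ℕ} (hw : Function.Injective w) : Function.Injective (key w) := by
  intro M N h
  rw [key_eq hw, key_eq hw] at h
  exact Finset.image_injective hw (Finset.geomSum_injective le_rfl h)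

theorem key_lt_iff {w : Sym2 σ → ℕ} (hw : Function.Injective w) {M N : Finset (Sym2 σ)} :
    key w N < key w M ↔ ∃ e ∈ M, e ∉ N ∧ ∀ f, w e < w f → (f ∈ N ↔ f ∈ M) := by
  rw [key_eq hw, key_eq hw, Finset.geomSum_lt_geomSum_iff_toColex_lt_toColex le_rfl,
    Finset.Colex.lt_iff_exists_filter_lt]
  simp only [Finset.mem_sdiff, Finset.mem_image, Finset.ext_iff, Finset.mem_filter]
  constructor
  · rintro ⟨c, ⟨⟨e, he, rfl⟩, hN⟩, h⟩
    refine ⟨e, he, fun h' => hN ⟨e, h', rfl⟩, fun f hf => ?_⟩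
    have := h (w f)
    simpa [hf, hw.eq_iff] using this
  · rintro ⟨e, he, hN, h⟩
    refine ⟨w e, ⟨⟨e, he, rfl⟩, ?_⟩, ?_⟩
    · rintro ⟨f, hf, hfe⟩
      rw [hw hfe] at hf
      exact hN hf
    · intro a
      constructor
      · rintro ⟨⟨f, hf, rfl⟩, hlt⟩
        exact ⟨⟨f, (h f hlt).1 hf, rfl⟩, hlt⟩
      · rintro ⟨⟨f, hf, rfl⟩, hlt⟩
        exact ⟨⟨f, (h f hlt).2 hf, rfl⟩, hlt⟩

theorem comb {G : SimpleGraph σ} {r : σ → ℕ} {n : ℕ} (hr : Function.Injective r)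
    (hn : ∀ x, r x < n)
    (hp : ∀ i j l, r i < r j → r i < r l → G.Adj j l → G.Adj i j ∨ G.Adj i l) {k : ℕ}
    {M N : Finset (Sym2 σ)} (hM : IsKMatching G M k) (hN : IsKMatching G N k)
    (hlt : key (ecode r n) N < key (ecode r n) M) :
    ∃ M' b, IsKMatching G M' k ∧ key (ecode r n) M' < key (ecode r n) M ∧ b ∈ mVerts N ∧
      mVerts M' ⊆ insert b (mVerts M) := by
  have hw := ecode_inj hr hn
  obtain ⟨e, heM, heN, hef⟩ := (key_lt_iff hw).1 hlt
  obtain ⟨j, l, rfl, hjl⟩ : ∃ j l, e = s(j, l) ∧ r j ≤ r l := by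
    induction e using Sym2.ind with
    | _ a b =>
    rcases le_total (r a) (r b) with h | h
    · exact ⟨a, b, rfl, h⟩
    · exact ⟨b, a, Sym2.eq_swap, h⟩
  set w := ecode r n with hwdef
  have hGjl : G.Adj j l := hM.1.1 heM
  have hne : j ≠ l := hGjl.ne
  have hjl' : r j < r l := lt_of_le_of_ne hjl fun h => hne (hr h)
  set c := w s(j, l) with hc
  let F : SimpleGraph σ :=
    { Adj := fun a b => G.Adj a b ∧ w s(a, b) < c
      symm := ⟨fun a b h => ⟨h.1.symm, by rw [Sym2.eq_swap]; exact h.2⟩⟩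
      loopless := ⟨fun a h => G.loopless.irrefl _ h.1⟩ }
  have hFe : ∀ f, f ∈ F.edgeSet ↔ f ∈ G.edgeSet ∧ w f < c := by
    intro f
    induction f using Sym2.ind with
    | _ a b => rfl
  set B := M.filter (fun f => c < w f) with hB
  set M0 := M.filter (fun f => w f < c) with hM0
  set N0 := N.filter (fun f => w f < c) with hN0
  have hMd : ∀ f ∈ M, ∀ g ∈ M, f ≠ g → ∀ v, v ∈ f → v ∉ g := fun f hf g hg h => hM.1.2 hf hg h
  have hNd : ∀ f ∈ N, ∀ g ∈ N, f ≠ g → ∀ v, v ∈ f → v ∉ g := fun f hf g hg h => hN.1.2 hf hg h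
  have hMeq : M = insert s(j, l) (B ∪ M0) := by
    ext f
    simp only [hB, hM0, Finset.mem_insert, Finset.mem_union, Finset.mem_filter]
    constructor
    · intro h
      rcases lt_trichotomy c (w f) with h1 | h1 | h1
      · exact .inr (.inl ⟨h, h1⟩)
      · exact .inl (hw h1.symm)
      · exact .inr (.inr ⟨h, h1⟩)
    · rintro (rfl | h | h)
      exacts [heM, h.1, h.1]
  have hNeq : N = B ∪ N0 := by
    ext f
    simp only [hB, hN0, Finset.mem_union, Finset.mem_filter]
    constructor
    · intro h
      rcases lt_trichotomy c (w f) with h1 | h1 | h1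
      · exact .inl ⟨(hef f h1).1 h, h1⟩
      · rw [hw h1] at heN; exact absurd h heN
      · exact .inr ⟨h, h1⟩
    · rintro (h | h)
      exacts [(hef f h.2).2 h.1, h.1]
  have hBN : ∀ f ∈ B, f ∈ N := fun f hf => by rw [hNeq]; exact Finset.mem_union_left _ hf
  have hBM : ∀ f ∈ B, f ∈ M := fun f hf => (Finset.mem_filter.1 hf).1
  have hdis1 : Disjoint B M0 := by
    rw [Finset.disjoint_left]; intro f h1 h2
    have := (Finset.mem_filter.1 h1).2
    have := (Finset.mem_filter.1 h2).2
    omega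
  have hdis2 : Disjoint B N0 := by
    rw [Finset.disjoint_left]; intro f h1 h2
    have := (Finset.mem_filter.1 h1).2
    have := (Finset.mem_filter.1 h2).2
    omega
  have hcM : M.card = B.card + M0.card + 1 := by
    conv_lhs => rw [hMeq]
    rw [Finset.card_insert_of_notMem (by simp [hB, hM0, hc]), Finset.card_union_of_disjoint hdis1]
  have hcN : N.card = B.card + N0.card := by
    conv_lhs => rw [hNeq]
    rw [Finset.card_union_of_disjoint hdis2]
  have hcard : N0.card = M0.card + 1 := by have := hM.2; have := hN.2; omega
  have hM0F : IsMatching F M0 := by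
    refine ⟨fun f hf => ?_, (IsMatching.mono hM.1 (Finset.filter_subset _ _)).2⟩
    have := Finset.mem_filter.1 hf
    exact (hFe f).2 ⟨hM.1.1 this.1, this.2⟩
  have hN0F : IsMatching F N0 := by
    refine ⟨fun f hf => ?_, (IsMatching.mono hN.1 (Finset.filter_subset _ _)).2⟩
    have := Finset.mem_filter.1 hf
    exact (hFe f).2 ⟨hN.1.1 this.1, this.2⟩
  have hjM0 : ∀ v ∈ s(j, l), v ∉ mVerts M0 := by
    intro v hv hv'
    obtain ⟨f, hf, hvf⟩ := mem_mVerts.1 hv'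
    have := Finset.mem_filter.1 hf
    exact hMd _ heM f this.1 (by rintro rfl; omega) v hv hvf
  have hPN := pmat_of_matching N0 hN0F
  rw [hcard] at hPN
  obtain ⟨Z, b, hZ, hbN0, hZX⟩ := PMat.core M0.card F {v | r v < r j} j l hne (by simp)
    (by simpa using hjl) (by
      intro p hpj
      have hpj : r p < r j := hpj
      have h1 : w s(p, j) < c := ecode_lt hn (by omega)
      have h2 : w s(p, l) < c := ecode_lt hn (by omega)
      rcases hp p j l hpj (by omega) hGjl with h | h
      · exact .inl ⟨h, h1⟩
      · exact .inr ⟨h, h2⟩)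
    (by
      intro x y hxy
      by_contra hcon
      simp only [Set.mem_setOf_eq, not_or, not_lt] at hcon
      have h1 : r x ≠ r j := fun h => hcon.1.2 (hr h)
      have h2 : r y ≠ r j := fun h => hcon.2.2 (hr h)
      have h3 : c < w s(x, y) := ecode_lt hn (by omega)
      have := hxy.2
      omega)
    (mVerts M0) (mVerts N0) (pmat_of_matching M0 hM0F) hPN (hjM0 j (by simp)) (hjM0 l (by simp))
  obtain ⟨M1, ⟨hM1, hM1c⟩, hM1Z⟩ := matching_of_pmat hZ
  have hM1w : ∀ f ∈ M1, f ∈ G.edgeSet ∧ w f < c := fun f hf => (hFe f).1 (hM1.1 hf)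
  have hBZ : ∀ f ∈ B, ∀ v ∈ f, v ∉ Z := by
    intro f hf v hvf hvZ
    have hcf : c < w f := (Finset.mem_filter.1 hf).2
    have hjl0 : ∀ v ∈ s(j, l), v ∉ f := hMd _ heM f (hBM f hf) (by rintro rfl; omega)
    rcases hZX v hvZ with h | rfl | rfl | rfl
    · obtain ⟨g, hg, hvg⟩ := mem_mVerts.1 h
      have hg' := Finset.mem_filter.1 hg
      exact hMd f (hBM f hf) g hg'.1 (by rintro rfl; omega) v hvf hvg
    · exact hjl0 v (by simp) hvf
    · exact hjl0 v (by simp) hvf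
    · obtain ⟨g, hg, hvg⟩ := mem_mVerts.1 hbN0
      have hg' := Finset.mem_filter.1 hg
      exact hNd f (hBN f hf) g hg'.1 (by rintro rfl; omega) v hvf hvg
  have hBM1 : ∀ f ∈ B, ∀ g ∈ M1, ∀ v, v ∈ f → v ∉ g := by
    intro f hf g hg v hvf hvg
    exact hBZ f hf v hvf (by rw [← hM1Z]; exact mem_mVerts.2 ⟨g, hg, hvg⟩)
  refine ⟨B ∪ M1, b, ⟨⟨?_, ?_⟩, ?_⟩, ?_, ?_, ?_⟩
  · intro f hf
    rcases Finset.mem_union.1 (Finset.mem_coe.1 hf) with h | h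
    · exact hM.1.1 (hBM f h)
    · exact (hM1w f h).1
  · intro f hf g hg hfg
    rcases Finset.mem_union.1 (Finset.mem_coe.1 hf) with h | h <;>
      rcases Finset.mem_union.1 (Finset.mem_coe.1 hg) with h' | h'
    · exact hMd f (hBM f h) g (hBM g h') hfg
    · exact hBM1 f h g h'
    · exact fun v hv hv' => hBM1 g h' f h v hv' hv
    · exact hM1.2 h h' hfg
  · rw [Finset.card_union_of_disjoint, hM1c, ← hM.2, hcM]
    · omega
    · rw [Finset.disjoint_left]; intro f h1 h2
      have := (Finset.mem_filter.1 h1).2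
      have := (hM1w f h2).2
      omega
  · rw [key_lt_iff hw]
    refine ⟨s(j, l), heM, ?_, ?_⟩
    · rw [Finset.mem_union]
      rintro (h | h)
      · have := (Finset.mem_filter.1 h).2
        omega
      · have := (hM1w _ h).2
        omega
    · intro f hf
      rw [Finset.mem_union]
      constructor
      · rintro (h | h)
        · exact hBM f h
        · have := (hM1w _ h).2
          omega
      · intro h
        exact .inl (Finset.mem_filter.2 ⟨h, hf⟩)
  · obtain ⟨g, hg, hvg⟩ := mem_mVerts.1 hbN0
    exact mem_mVerts.2 ⟨g, (Finset.mem_filter.1 hg).1, hvg⟩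
  · intro v hv
    rw [Finset.mem_insert]
    obtain ⟨f, hf, hvf⟩ := mem_mVerts.1 hv
    rcases Finset.mem_union.1 hf with h | h
    · exact .inr (mem_mVerts.2 ⟨f, hBM f h, hvf⟩)
    · have : v ∈ Z := by rw [← hM1Z]; exact mem_mVerts.2 ⟨f, h, hvf⟩
      rcases hZX v this with h | rfl | rfl | rfl
      · obtain ⟨g, hg, hvg⟩ := mem_mVerts.1 h
        exact .inr (mem_mVerts.2 ⟨g, (Finset.mem_filter.1 hg).1, hvg⟩)
      · exact .inr (mem_mVerts.2 ⟨_, heM, by simp⟩)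
      · exact .inr (mem_mVerts.2 ⟨_, heM, by simp⟩)
      · exact .inl rfl

end CoCh

namespace CoCh
section Alg
variable {σ : Type*} [Fintype σ] [DecidableEq σ]

/-- Indicator exponent of a finite set. -/
noncomputable def ind (U : Finset σ) : σ →₀ ℕ := ∑ v ∈ U, Finsupp.single v 1

theorem ind_apply (U : Finset σ) (v : σ) : ind U v = if v ∈ U then 1 else 0 := by
  simp [ind, Finsupp.finsetSum_apply, Finsupp.single_apply]

theorem ind_le {U : Finset σ} {d : σ →₀ ℕ} : ind U ≤ d ↔ ∀ v ∈ U, d v ≠ 0 := by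
  rw [Finsupp.le_def]
  constructor
  · intro h v hv
    have := h v
    rw [ind_apply, if_pos hv] at this
    omega
  · intro h v
    rw [ind_apply]
    split_ifs with hv
    · have := h v hv
      omega
    · omega

theorem ind_le_ind {U V : Finset σ} : ind U ≤ ind V ↔ U ⊆ V := by
  rw [ind_le]
  constructor
  · intro h v hv
    have := h v hv
    rw [ind_apply] at this
    by_contra hc
    exact this (if_neg hc)
  · intro h v hv
    rw [ind_apply, if_pos (h hv)]
    simp

variable (K : Type*) [Field K]

theorem prod_eq (U : Finset σ) :
    (∏ v ∈ U, X v : MvPolynomial σ K) = monomial (ind U) 1 := by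
  rw [ind, monomial_sum_one]; rfl

theorem mono_inj {a b : σ →₀ ℕ} (h : (monomial a (1 : K)) = monomial b 1) : a = b :=
  monomial_left_injective one_ne_zero h

theorem mono_mem {T : Set (σ →₀ ℕ)} {d : σ →₀ ℕ} :
    monomial d (1 : K) ∈ Ideal.span ((fun s => monomial s (1 : K)) '' T) ↔ ∃ t ∈ T, t ≤ d := by
  classical
  rw [mem_ideal_span_monomial_image]
  simp [support_monomial]

theorem colon_eq (P : Set (Finset σ)) (U : Finset σ)
    (h : ∀ V ∈ P, ∃ W ∈ P, ∃ b ∈ V, b ∉ U ∧ W ⊆ insert b U) :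
    Submodule.colon (Ideal.span ((fun s => monomial s (1 : K)) '' (ind '' P)))
      (Ideal.span {monomial (ind U) (1 : K)} : Ideal (MvPolynomial σ K))
      = Ideal.span (X '' {b | b ∉ U ∧ ∃ W ∈ P, W ⊆ insert b U}) := by
  apply le_antisymm
  · intro f hf
    rw [Ideal.mem_colon_span_singleton, mem_ideal_span_monomial_image] at hf
    rw [mem_ideal_span_X_image]
    intro d hd
    have hd' : d + ind U ∈ (f * monomial (ind U) 1).support := by
      rw [mem_support_iff, coeff_mul_monomial, mul_one]
      exact mem_support_iff.1 hd
    obtain ⟨_, ⟨V, hV, rfl⟩, hle⟩ := hf _ hd'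
    obtain ⟨W, hW, b, hbV, hbU, hWU⟩ := h V hV
    refine ⟨b, ⟨hbU, W, hW, hWU⟩, ?_⟩
    have := ind_le.1 hle b hbV
    rw [Finsupp.add_apply, ind_apply, if_neg hbU] at this
    simpa using this
  · rw [Ideal.span_le]
    rintro _ ⟨b, ⟨hbU, W, hW, hWU⟩, rfl⟩
    rw [SetLike.mem_coe, Ideal.mem_colon_span_singleton]
    rw [X, monomial_mul, one_mul, mono_mem]
    refine ⟨_, ⟨W, hW, rfl⟩, ind_le.2 fun v hv => ?_⟩
    rw [Finsupp.add_apply, ind_apply, Finsupp.single_apply]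
    rcases Finset.mem_insert.1 (hWU hv) with rfl | h
    · simp
    · simp [h]

theorem minGens_eq (P : Set (Finset σ)) (c : ℕ) (hc : ∀ U ∈ P, U.card = c)
    (u : MvPolynomial σ K) :
    u ∈ minGens K (Ideal.span ((fun s => monomial s (1 : K)) '' (ind '' P))) ↔
      ∃ U ∈ P, u = monomial (ind U) 1 := by
  constructor
  · rintro ⟨⟨d, rfl⟩, hu, hmin⟩
    obtain ⟨_, ⟨U, hU, rfl⟩, hle⟩ := (mono_mem K).1 hu
    refine ⟨U, hU, (hmin _ ⟨_, rfl⟩ ((mono_mem K).2 ⟨_, ⟨U, hU, rfl⟩, le_rfl⟩) ?_).symm⟩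
    rw [monomial_dvd_monomial]
    exact ⟨.inr hle, dvd_rfl⟩
  · rintro ⟨U, hU, rfl⟩
    refine ⟨⟨_, rfl⟩, (mono_mem K).2 ⟨_, ⟨U, hU, rfl⟩, le_rfl⟩, ?_⟩
    rintro _ ⟨d, rfl⟩ hd hdvd
    obtain ⟨_, ⟨V, hV, rfl⟩, hle⟩ := (mono_mem K).1 hd
    rw [monomial_dvd_monomial] at hdvd
    have hdle : d ≤ ind U := hdvd.1.resolve_left one_ne_zero
    have hVU : V = U := Finset.eq_of_subset_of_card_le (ind_le_ind.1 (hle.trans hdle))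
      (by rw [hc U hU, hc V hV])
    subst hVU
    rw [le_antisymm hdle hle]

theorem linquot (S : Finset (Finset σ)) (c : ℕ) (hc : ∀ U ∈ S, U.card = c)
    (κ : Finset σ → ℕ) (hinj : Set.InjOn κ S)
    (hex : ∀ U ∈ S, ∀ V ∈ S, κ V < κ U → ∃ W ∈ S, κ W < κ U ∧ ∃ b ∈ V, b ∉ U ∧ W ⊆ insert b U) :
    HasLinearQuotients K
      (Ideal.span ((fun s => monomial s (1 : K)) '' (ind '' (S : Set (Finset σ))))) := by
  obtain ⟨l, hl, hs⟩ : ∃ l : List (Finset σ), (∀ U, U ∈ l ↔ U ∈ S) ∧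
      l.Pairwise (fun a b => κ a < κ b) := by
    let T := (S.image κ).sort (· ≤ ·)
    have hT : ∀ t ∈ T, ∃ U ∈ S, κ U = t := by
      intro t ht
      simpa [T] using ht
    choose! g hg using hT
    refine ⟨T.map g, ?_, ?_⟩
    · intro U
      rw [List.mem_map]
      constructor
      · rintro ⟨t, ht, rfl⟩
        exact (hg t ht).1
      · intro hU
        have ht : κ U ∈ T := by simp only [T, Finset.mem_sort]; exact Finset.mem_image_of_mem _ hU
        exact ⟨κ U, ht, hinj (hg _ ht).1 hU (hg _ ht).2⟩
    · rw [List.pairwise_map]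
      have : T.Pairwise (· < ·) := (Finset.sortedLT_sort (S.image κ)).pairwise
      refine this.imp_of_mem ?_
      intro a b ha hb hab
      rw [(hg a ha).2, (hg b hb).2]
      exact hab
  refine ⟨l.map fun U => monomial (ind U) 1, ?_, ?_, ?_⟩
  · refine List.Nodup.map ?_ (hs.imp fun h => by rintro rfl; exact lt_irrefl _ h)
    intro a b h
    have := mono_inj K h
    exact Finset.Subset.antisymm (ind_le_ind.1 this.le) (ind_le_ind.1 this.ge)
  · intro u
    rw [minGens_eq K _ c (by simpa using hc), List.mem_map]
    simp only [hl, Finset.mem_coe]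
    constructor <;> rintro ⟨U, hU, h⟩ <;> exact ⟨U, hU, h.symm⟩
  · rintro ⟨i, hi⟩ -
    have hi' : i < l.length := by simpa using hi
    have hU : l[i] ∈ S := (hl _).1 (List.getElem_mem _)
    have htake : ∀ V, V ∈ l.take i ↔ V ∈ S ∧ κ V < κ l[i] := by
      intro V
      rw [List.pairwise_iff_getElem] at hs
      rw [List.mem_take_iff_getElem]
      constructor
      · rintro ⟨j, hj, rfl⟩
        have : j < i := by omega
        exact ⟨(hl _).1 (List.getElem_mem _), hs _ _ _ _ this⟩
      · rintro ⟨hV, hlt⟩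
        obtain ⟨j, hj, rfl⟩ := List.getElem_of_mem ((hl V).2 hV)
        refine ⟨j, ?_, rfl⟩
        by_contra hcon
        have hij : i ≤ j := by omega
        rcases hij.eq_or_lt with rfl | hij
        · exact lt_irrefl _ hlt
        · exact lt_asymm hlt (hs _ _ _ _ hij)
    have := colon_eq K {V | V ∈ S ∧ κ V < κ l[i]} l[i] (by
      rintro V ⟨hV, hlt⟩
      obtain ⟨W, hW, h1, b, hb, h2⟩ := hex _ hU V hV hlt
      exact ⟨W, ⟨hW, h1⟩, b, hb, h2⟩)
    refine ⟨_, Eq.trans ?_ this⟩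
    have e1 : {u | u ∈ (l.map fun U => monomial (ind U) (1 : K)).take i} =
        (fun s => monomial s (1 : K)) '' (ind '' {V | V ∈ S ∧ κ V < κ l[i]}) := by
      ext u
      have h : u ∈ (l.map fun U => monomial (ind U) (1 : K)).take i ↔
          ∃ V, (V ∈ S ∧ κ V < κ l[i]) ∧ monomial (ind V) (1 : K) = u := by
        rw [← List.map_take, List.mem_map]
        simp only [htake]
      refine Iff.trans h ?_
      simp
    have e2 : (l.map fun U => monomial (ind U) (1 : K)).get ⟨i, hi⟩ = monomial (ind l[i]) 1 := by
      simp
    rw [e2, ← e1]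

end Alg

theorem main (K : Type*) [Field K] {n : ℕ} (G : SimpleGraph (Fin n)) (hchord : IsChordal Gᶜ)
    (k : ℕ) : HasLinearQuotients K (matchPow K G k) := by
  classical
  obtain ⟨r, hr, hn, hp⟩ := Dirac.exists_peo G hchord n Finset.univ (by simp)
  replace hr : Function.Injective r := by simpa [Set.injOn_univ] using hr
  replace hn : ∀ x, r x < n := fun x => hn x (by simp)
  replace hp : ∀ i j l, r i < r j → r i < r l → G.Adj j l → G.Adj i j ∨ G.Adj i l :=
    fun i j l => hp i (by simp) j (by simp) l (by simp)
  have hw := ecode_inj hr hn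
  have hcomb := fun M N => @comb _ _ _ G r n hr hn hp k M N
  set w := ecode r n
  let S : Finset (Finset (Fin n)) :=
    Finset.univ.filter fun U => ∃ M, IsKMatching G M k ∧ mVerts M = U
  have hcan : ∀ U ∈ S, ∃ M, (IsKMatching G M k ∧ mVerts M = U) ∧
      ∀ M', IsKMatching G M' k → mVerts M' = U → key w M ≤ key w M' := by
    intro U hU
    have hU : ∃ M, IsKMatching G M k ∧ mVerts M = U := (Finset.mem_filter.1 hU).2
    obtain ⟨M, hM, hmin⟩ := Finset.exists_min_image
      (Finset.univ.filter fun M => IsKMatching G M k ∧ mVerts M = U) (key w)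
      (by obtain ⟨M, hM⟩ := hU; exact ⟨M, by simpa using hM⟩)
    exact ⟨M, by simpa using hM, fun M' h1 h2 => hmin M' (by simp [h1, h2])⟩
  choose! m hm hmin using hcan
  have hSm : ∀ M, IsKMatching G M k → mVerts M ∈ S := fun M hM => by
    simp only [S, Finset.mem_filter, Finset.mem_univ, true_and]
    exact ⟨M, hM, rfl⟩
  have hcard : ∀ U ∈ S, U.card = 2 * k := by
    intro U hU
    have h := hm U hU
    have := (pmat_of_matching _ h.1.1).card
    rw [h.2, h.1.2] at this
    exact this
  have key := linquot K S (2 * k) hcard (fun U => key w (m U)) (by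
      intro U hU V hV h
      have h' := key_inj hw h
      rw [← (hm U hU).2, ← (hm V hV).2, h']) (by
      intro U hU V hV hlt
      obtain ⟨M', b, hM', hlt', hb, hsub⟩ := hcomb _ _ (hm U hU).1 (hm V hV).1 hlt
      rw [(hm U hU).2] at hsub
      rw [(hm V hV).2] at hb
      have hle := hmin _ (hSm M' hM') M' hM' rfl
      refine ⟨mVerts M', hSm M' hM', lt_of_le_of_lt hle hlt', b, hb, ?_, hsub⟩
      intro hbU
      rw [Finset.insert_eq_of_mem hbU] at hsub
      have heq : mVerts M' = U := Finset.eq_of_subset_of_card_le hsub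
        (by rw [hcard U hU, hcard _ (hSm M' hM')])
      have := hmin U hU M' hM' heq
      omega)
  have heq : matchPow K G k =
      Ideal.span ((fun s => monomial s (1 : K)) '' (ind '' (S : Set (Finset (Fin n))))) := by
    unfold matchPow
    congr 1
    ext u
    simp only [matchMon, prod_eq, Set.mem_image, Finset.mem_coe, exists_exists_and_eq_and]
    constructor
    · rintro ⟨M, hM, rfl⟩
      exact ⟨_, hSm M hM, rfl⟩
    · rintro ⟨U, hU, rfl⟩
      exact ⟨m U, (hm U hU).1, by rw [(hm U hU).2]⟩
  rw [heq]
  exact key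

end CoCh

/-- Let `G` be a cochordal graph (i.e. `G^c` is chordal). Then
for every `1 ≤ k ≤ ν(G)` the squarefree power `I(G)^{[k]}` has linear quotients. -/
theorem matchPow_hasLinearQuotients_of_cochordal {K : Type*} [Field K] {n : ℕ}
    (G : SimpleGraph (Fin n)) (hchord : IsChordal Gᶜ) :
    ∀ k : ℕ, 1 ≤ k → k ≤ matchNum G → HasLinearQuotients K (matchPow K G k) :=
  fun k _ _ => CoCh.main K G hchord k
end

section
/- Let G be a finite simple graph on [n] with no isolated vertices and let 1 ≤ k ≤ ν(G) be such that I(G)^{[k]} has linear quotients. If g_{I(G)}(k) = 0 (i.e. depth(S/I(G)^{[k]}) = 2k − 1), then G has a dominating k-matching. In particular, this holds for every cochordal graph G with no isolated vertices. -/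
open MvPolynomial

section MatchingAux

set_option linter.unusedSectionVars false
set_option linter.unusedVariables false

variable {σ : Type*} [Fintype σ] [DecidableEq σ]

lemma mem_mVerts' {M : Finset (Sym2 σ)} {v : σ} : v ∈ mVerts M ↔ ∃ e ∈ M, v ∈ e := by
  simp [mVerts]

lemma exists_partner {M : Finset (Sym2 σ)} {v : σ} (hv : v ∈ mVerts M) :
    ∃ w, s(v, w) ∈ M := by
  obtain ⟨e, he, hve⟩ := mem_mVerts'.1 hv
  obtain ⟨w, rfl⟩ := Sym2.mem_iff_exists.1 hve
  exact ⟨w, he⟩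

lemma mem_mVerts_left {M : Finset (Sym2 σ)} {v w : σ} (h : s(v, w) ∈ M) : v ∈ mVerts M :=
  mem_mVerts'.2 ⟨_, h, by simp⟩

lemma mem_mVerts_right {M : Finset (Sym2 σ)} {v w : σ} (h : s(v, w) ∈ M) : w ∈ mVerts M :=
  mem_mVerts'.2 ⟨_, h, by simp⟩

lemma IsMatching.adj {G : SimpleGraph σ} {M : Finset (Sym2 σ)} (h : IsMatching G M) {a b : σ}
    (hab : s(a, b) ∈ M) : G.Adj a b := by
  have := h.1 (show s(a,b) ∈ (M : Set (Sym2 σ)) from hab)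
  simpa using this

lemma IsMatching.eq_of_mem {G : SimpleGraph σ} {M : Finset (Sym2 σ)} (h : IsMatching G M)
    {e f : Sym2 σ} (he : e ∈ M) (hf : f ∈ M) {v : σ} (hve : v ∈ e) (hvf : v ∈ f) : e = f := by
  by_contra hne
  exact h.2 he hf hne v hve hvf

lemma IsMatching.subset {G : SimpleGraph σ} {M N : Finset (Sym2 σ)} (h : IsMatching G M)
    (hN : N ⊆ M) : IsMatching G N :=
  ⟨fun e he => h.1 (hN he), fun e he f hf hne => h.2 (hN he) (hN hf) hne⟩

lemma IsMatching.insert {G : SimpleGraph σ} {M : Finset (Sym2 σ)} (h : IsMatching G M) {p z : σ}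
    (hpz : G.Adj p z) (hp : p ∉ mVerts M) (hz : z ∉ mVerts M) :
    IsMatching G (insert s(p, z) M) := by
  refine ⟨?_, ?_⟩
  · intro e he
    simp only [Finset.coe_insert, Set.mem_insert_iff, Finset.mem_coe] at he
    rcases he with rfl | he
    · simpa using hpz
    · exact h.1 he
  · intro e he f hf hne v hve hvf
    simp only [Finset.coe_insert, Set.mem_insert_iff, Finset.mem_coe] at he hf
    rcases he with rfl | he <;> rcases hf with rfl | hf
    · exact hne rfl
    · have : v ∈ mVerts M := mem_mVerts'.2 ⟨f, hf, hvf⟩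
      rcases Sym2.mem_iff.1 hve with rfl | rfl <;> contradiction
    · have : v ∈ mVerts M := mem_mVerts'.2 ⟨e, he, hve⟩
      rcases Sym2.mem_iff.1 hvf with rfl | rfl <;> contradiction
    · exact h.2 he hf hne v hve hvf

lemma mVerts_insert' (M : Finset (Sym2 σ)) (p z : σ) :
    mVerts (insert s(p, z) M) = insert p (insert z (mVerts M)) := by
  ext v
  simp [mem_mVerts', or_assoc]

lemma IsMatching.mVerts_erase {G : SimpleGraph σ} {M : Finset (Sym2 σ)} (h : IsMatching G M)
    {p z : σ} (hpz : s(p, z) ∈ M) :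
    mVerts (M.erase s(p, z)) = ((mVerts M).erase p).erase z := by
  ext v
  simp only [mem_mVerts', Finset.mem_erase]
  constructor
  · rintro ⟨e, ⟨hne, he⟩, hv⟩
    refine ⟨?_, ?_, e, he, hv⟩
    · rintro rfl
      exact hne (h.eq_of_mem he hpz hv (by simp))
    · rintro rfl
      exact hne (h.eq_of_mem he hpz hv (by simp))
  · rintro ⟨h1, h2, e, he, hv⟩
    refine ⟨e, ⟨?_, he⟩, hv⟩
    rintro rfl
    rcases Sym2.mem_iff.1 hv with rfl | rfl <;> contradiction

lemma IsMatching.card_mVerts {G : SimpleGraph σ} {M : Finset (Sym2 σ)} (h : IsMatching G M) :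
    (mVerts M).card = 2 * M.card := by
  induction hn : M.card generalizing M with
  | zero =>
    rw [Finset.card_eq_zero] at hn
    subst hn
    simp [mVerts]
  | succ n ih =>
    obtain ⟨e, he⟩ : M.Nonempty := Finset.card_pos.1 (by omega)
    induction e using Sym2.ind with
    | _ p z =>
      have h' := ih (h.subset (M.erase_subset s(p, z))) (by rw [Finset.card_erase_of_mem he]; omega)
      have hne : p ≠ z := (h.adj he).ne
      rw [h.mVerts_erase he, Finset.card_erase_of_mem, Finset.card_erase_of_mem] at h'
      · have h1 : (mVerts M).card ≥ 2 := by
          have : ({p, z} : Finset σ) ⊆ mVerts M := by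
            intro v hv
            simp only [Finset.mem_insert, Finset.mem_singleton] at hv
            rcases hv with rfl | rfl
            · exact mem_mVerts_left he
            · exact mem_mVerts_right he
          have h2 := Finset.card_le_card this
          rwa [Finset.card_pair hne] at h2
        omega
      · exact mem_mVerts_left he
      · exact Finset.mem_erase.2 ⟨hne.symm, mem_mVerts_right he⟩

/-- Augmentation lemma (Berge). -/
lemma augment {G : SimpleGraph σ} {M N : Finset (Sym2 σ)} (hM : IsMatching G M)
    (hN : IsMatching G N) (hc : M.card < N.card) :
    ∃ M2, IsMatching G M2 ∧ M2 ⊆ M ∪ N ∧ M2.card = M.card + 1 ∧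
      ∃ p q, p ≠ q ∧ p ∈ mVerts N ∧ q ∈ mVerts N ∧ p ∉ mVerts M ∧ q ∉ mVerts M ∧
        mVerts M2 = insert p (insert q (mVerts M)) := by
  induction hn : M.card generalizing M N with
  | zero =>
    obtain ⟨e, he⟩ : N.Nonempty := Finset.card_pos.1 (by omega)
    rw [Finset.card_eq_zero] at hn
    subst hn
    induction e using Sym2.ind with
    | _ p z =>
      refine ⟨{s(p, z)}, hN.subset (by simpa using he), by simpa using he, by simp, p, z,
        (hN.adj he).ne, mem_mVerts_left he, mem_mVerts_right he, by simp [mVerts], by simp [mVerts],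
        ?_⟩
      exact mVerts_insert' ∅ p z
  | succ n ih =>
    obtain ⟨p, hpN, hpM⟩ : ∃ p ∈ mVerts N, p ∉ mVerts M := by
      by_contra! hcon
      have := Finset.card_le_card (show mVerts N ⊆ mVerts M from hcon)
      rw [hM.card_mVerts, hN.card_mVerts] at this
      omega
    obtain ⟨z, hpz⟩ := exists_partner hpN
    have hadj := hN.adj hpz
    by_cases hzM : z ∈ mVerts M
    · obtain ⟨z', hzz⟩ := exists_partner hzM
      have hadj' := hM.adj hzz
      obtain ⟨M2, hM2, hsub, hcard, p2, q2, hne, hp2, hq2, hp2', hq2', hV⟩ :=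
        ih (M := M.erase s(z, z')) (N := N.erase s(p, z)) (hM.subset (Finset.erase_subset _ _))
          (hN.subset (Finset.erase_subset _ _))
          (by rw [Finset.card_erase_of_mem hzz, Finset.card_erase_of_mem hpz]; omega)
          (by rw [Finset.card_erase_of_mem hzz]; omega)
      have hsub' : M2 ⊆ M ∪ N := hsub.trans (Finset.union_subset_union (Finset.erase_subset _ _)
        (Finset.erase_subset _ _))
      rw [hN.mVerts_erase hpz] at hp2 hq2
      rw [hM.mVerts_erase hzz] at hp2' hq2' hV
      have hz' := mem_mVerts_right hzz
      have hzne := hadj'.ne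
      have hpne := hadj.ne
      simp only [Finset.mem_erase] at hp2 hq2 hp2' hq2'
      have hpz' : p ≠ z' := by rintro rfl; exact hpM hz'
      by_cases h2 : z' = p2
      · subst h2
        refine ⟨insert s(p, z) M2, hM2.insert hadj ?_ ?_, ?_, ?_, p, q2, ?_, hpN, hq2.2.2, hpM, ?_, ?_⟩
        · rw [hV]; simp; grind
        · rw [hV]; simp; grind
        · exact Finset.insert_subset (by simp [hpz]) hsub'
        · rw [Finset.card_insert_of_notMem, hcard]
          intro hmem
          have := mem_mVerts_left hmem
          rw [hV] at this; simp at this; grind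
        · exact fun h => hq2.2.1 h.symm
        · grind
        · rw [mVerts_insert', hV]; ext v; simp; grind
      by_cases h3 : z' = q2
      · subst h3
        refine ⟨insert s(p, z) M2, hM2.insert hadj ?_ ?_, ?_, ?_, p, p2, ?_, hpN, hp2.2.2, hpM, ?_, ?_⟩
        · rw [hV]; simp; grind
        · rw [hV]; simp; grind
        · exact Finset.insert_subset (by simp [hpz]) hsub'
        · rw [Finset.card_insert_of_notMem, hcard]
          intro hmem
          have := mem_mVerts_left hmem
          rw [hV] at this; simp at this; grind
        · exact fun h => hp2.2.1 h.symm
        · grind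
        · rw [mVerts_insert', hV]; ext v; simp; grind
      · refine ⟨insert s(z, z') M2, hM2.insert hadj' ?_ ?_, ?_, ?_, p2, q2, hne, hp2.2.2, hq2.2.2, ?_, ?_, ?_⟩
        · rw [hV]; simp; grind
        · rw [hV]; simp; grind
        · exact Finset.insert_subset (by simp [hzz]) hsub'
        · rw [Finset.card_insert_of_notMem, hcard]
          intro hmem
          have := mem_mVerts_left hmem
          rw [hV] at this; simp at this; grind
        · grind
        · grind
        · rw [mVerts_insert', hV]; ext v; simp; grind
    · refine ⟨insert s(p, z) M, hM.insert hadj hpM hzM, ?_, ?_, p, z, hadj.ne, hpN,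
        mem_mVerts_right hpz, hpM, hzM, mVerts_insert' _ _ _⟩
      · exact Finset.insert_subset (by simp [hpz]) Finset.subset_union_left
      · rw [Finset.card_insert_of_notMem, hn]
        exact fun h => hpM (mem_mVerts_left h)

/-- weight of a set of edges, w.r.t. a rank function -/
def mWt (r : Sym2 σ → ℕ) (M : Finset (Sym2 σ)) : ℕ := ∑ i ∈ M.image r, 2 ^ i

lemma mWt_lt_iff {r : Sym2 σ → ℕ} (hr : Function.Injective r) {M N : Finset (Sym2 σ)} :
    mWt r N < mWt r M ↔ ∃ e ∈ M, e ∉ N ∧ ∀ f ∈ N, f ∉ M → r f < r e := by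
  unfold mWt
  rw [Finset.geomSum_lt_geomSum_iff_toColex_lt_toColex le_rfl,
    Finset.Colex.toColex_lt_toColex_iff_exists_forall_lt]
  constructor
  · rintro ⟨a, ha, ha', h⟩
    obtain ⟨e, he, rfl⟩ := Finset.mem_image.1 ha
    refine ⟨e, he, fun h' => ha' (Finset.mem_image_of_mem _ h'), fun f hf hf' => ?_⟩
    refine h _ (Finset.mem_image_of_mem _ hf) ?_
    rwa [hr.mem_finset_image]
  · rintro ⟨e, he, he', h⟩
    refine ⟨r e, Finset.mem_image_of_mem _ he, by rwa [hr.mem_finset_image], ?_⟩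
    intro b hb hb'
    obtain ⟨f, hf, rfl⟩ := Finset.mem_image.1 hb
    exact h f hf (fun h' => hb' (Finset.mem_image_of_mem _ h'))

set_option maxHeartbeats 1000000 in
lemma matching_exchange {G : SimpleGraph σ} {r : Sym2 σ → ℕ} (hr : Function.Injective r)
    (hR : ∀ a b x y, G.Adj a b → G.Adj x y → a ≠ x → a ≠ y → b ≠ x → b ≠ y →
      r s(a, b) < r s(x, y) →
      ∃ m t, (m = a ∨ m = b) ∧ (t = x ∨ t = y) ∧ G.Adj m t ∧ r s(m, t) < r s(x, y))
    {M N : Finset (Sym2 σ)} (hM : IsMatching G M) (hN : IsMatching G N) (hc : M.card = N.card)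
    (hlt : mWt r N < mWt r M)
    (hmin : ∀ M', IsMatching G M' → mVerts M' = mVerts M → mWt r M ≤ mWt r M') :
    ∃ M', IsMatching G M' ∧ M'.card = M.card ∧ mWt r M' < mWt r M ∧
      ∃ a ∈ mVerts N, a ∉ mVerts M ∧ ∃ b ∈ mVerts M,
        mVerts M' = insert a ((mVerts M).erase b) := by
  obtain ⟨e, heM, heN, hlt'⟩ := (mWt_lt_iff hr).1 hlt
  induction e using Sym2.ind with
  | _ x y =>
  have hxy := (hM.adj heM)
  have hxyne := hxy.ne
  have hxyne' := hxy.ne'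
  have hxM := mem_mVerts_left heM
  have hyM := mem_mVerts_right heM
  have hcpos : 0 < M.card := Finset.card_pos.2 ⟨_, heM⟩
  have hM1 := hM.subset (M.erase_subset s(x, y))
  obtain ⟨M2, hM2, hsub, hcard, p, q, hpq, hpN, hqN, hp, hq, hV⟩ := augment hM1 hN
    (by rw [Finset.card_erase_of_mem heM]; omega)
  have hV1 := hM.mVerts_erase heM
  rw [hV1] at hp hq hV
  rw [Finset.card_erase_of_mem heM] at hcard
  have hcard2 : M2.card = M.card := by omega
  have hM2lt : ∀ f ∈ M2, f ∉ M → r f < r s(x, y) := by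
    intro f hf hfM
    have := hsub hf
    simp only [Finset.mem_union, Finset.mem_erase] at this
    exact hlt' f (by tauto) hfM
  have heM2 : s(x, y) ∉ M2 := by
    intro h
    have := hsub h
    simp at this
    tauto
  have hM2w : mWt r M2 < mWt r M := (mWt_lt_iff hr).2 ⟨_, heM, heM2, hM2lt⟩
  simp only [Finset.mem_erase] at hp hq
  by_cases hpx : p ∈ mVerts M
  · by_cases hqx : q ∈ mVerts M
    · exfalso
      have := hmin M2 hM2 (by rw [hV]; ext v; simp; grind)
      omega
    · have : p = x ∨ p = y := by tauto
      rcases this with rfl | rfl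
      · exact ⟨M2, hM2, hcard2, hM2w, q, hqN, hqx, y, hyM, by rw [hV]; ext v; simp; grind⟩
      · exact ⟨M2, hM2, hcard2, hM2w, q, hqN, hqx, x, hxM, by rw [hV]; ext v; simp; grind⟩
  · by_cases hqx : q ∈ mVerts M
    · have : q = x ∨ q = y := by tauto
      rcases this with rfl | rfl
      · exact ⟨M2, hM2, hcard2, hM2w, p, hpN, hpx, y, hyM, by rw [hV]; ext v; simp; grind⟩
      · exact ⟨M2, hM2, hcard2, hM2w, p, hpN, hpx, x, hxM, by rw [hV]; ext v; simp; grind⟩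
    · have hpx' : p ≠ x := by rintro rfl; exact hpx hxM
      have hpy' : p ≠ y := by rintro rfl; exact hpx hyM
      have hqx' : q ≠ x := by rintro rfl; exact hqx hxM
      have hqy' : q ≠ y := by rintro rfl; exact hqx hyM
      have hxM2 : x ∉ mVerts M2 := by rw [hV]; simp; grind
      have hyM2 : y ∉ mVerts M2 := by rw [hV]; simp; grind
      obtain ⟨z, hpz⟩ := exists_partner (M := M2) (v := p) (by rw [hV]; simp)
      have hpzM : s(p, z) ∉ M := fun h => hpx (mem_mVerts_left h)
      have hzM2 := mem_mVerts_right hpz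
      have hzx : z ≠ x := by rintro rfl; exact hxM2 hzM2
      have hzy : z ≠ y := by rintro rfl; exact hyM2 hzM2
      have hadj := hM2.adj hpz
      obtain ⟨m, t, hm, ht, hmt, hmtr⟩ := hR p z x y hadj hxy hpx' hpy' hzx hzy
        (hM2lt _ hpz hpzM)
      have htM : t ∈ mVerts M := by rcases ht with rfl | rfl <;> assumption
      -- the other endpoint
      obtain ⟨t', ht'M, htt', hset⟩ : ∃ t' ∈ mVerts M, t ≠ t' ∧
          ∀ v, (v = x ∨ v = y) ↔ (v = t ∨ v = t') := by
        rcases ht with rfl | rfl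
        · exact ⟨y, hyM, hxy.ne, by tauto⟩
        · exact ⟨x, hxM, hxy.ne', by tauto⟩
      have htM2 : t ∉ mVerts M2 := by rcases ht with rfl | rfl <;> assumption
      rcases hm with rfl | rfl
      · refine ⟨insert s(m, t) (M.erase s(x, y)), hM1.insert hmt ?_ ?_, ?_, ?_, m, hpN, hpx, t',
          ht'M, ?_⟩
        · rw [hV1]; simp; grind
        · rw [hV1]; simp; grind
        · rw [Finset.card_insert_of_notMem, Finset.card_erase_of_mem heM]
          · omega
          · intro h; exact hpx (mem_mVerts_left (Finset.mem_of_mem_erase h))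
        · refine (mWt_lt_iff hr).2 ⟨_, heM, ?_, ?_⟩
          · simp; grind
          · intro f hf hfM
            simp only [Finset.mem_insert, Finset.mem_erase] at hf
            rcases hf with rfl | hf
            · exact hmtr
            · exact absurd hf.2 hfM
        · clear hR hmin hlt' hM2lt hsub hr; rw [mVerts_insert', hV1]; ext v; have h1 := hset v; simp; grind
      · have hM2e := hM2.mVerts_erase hpz
        have hM3 := hM2.subset (M2.erase_subset s(p, m))
        have hpm := hadj.ne
        refine ⟨insert s(m, t) (M2.erase s(p, m)), hM3.insert hmt ?_ ?_, ?_, ?_, q, hqN, hqx, t',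
          ht'M, ?_⟩
        · rw [hM2e]; simp
        · rw [hM2e]; simp; grind
        · rw [Finset.card_insert_of_notMem, Finset.card_erase_of_mem hpz]
          · omega
          · intro h; exact htM2 (mem_mVerts_right (Finset.mem_of_mem_erase h))
        · refine (mWt_lt_iff hr).2 ⟨_, heM, ?_, ?_⟩
          · simp only [Finset.mem_insert, Finset.mem_erase]; grind
          · intro f hf hfM
            simp only [Finset.mem_insert, Finset.mem_erase] at hf
            rcases hf with rfl | hf
            · exact hmtr
            · exact hM2lt f hf.2 hfM
        · have hm2 : m ∈ mVerts M2 := hzM2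
          rw [hV] at hm2
          clear hR hmin hlt' hM2lt hsub hr; rw [mVerts_insert', hM2e, hV]; ext v; have h1 := hset v; simp at hm2 ⊢; grind

end MatchingAux

section ChordalAux

lemma chordal_path {V : Type*} {H : SimpleGraph V} (hH : IsChordal H) {v x y : V}
    (hx : H.Adj v x) (hy : H.Adj v y) (hxy : x ≠ y)
    (hp : ∃ (l : ℕ) (p : ℕ → V), p 0 = x ∧ p l = y ∧ (∀ i < l, H.Adj (p i) (p (i + 1))) ∧
      ∀ i, 0 < i → i < l → p i ≠ v ∧ ¬ H.Adj v (p i)) : H.Adj x y := by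
  classical
  by_contra hn
  let l := Nat.find hp
  obtain ⟨p, hp0, hpl, hadj, hint⟩ := Nat.find_spec hp
  have hmin : ∀ l' < l, ¬ _ := fun l' h => Nat.find_min hp h
  change p l = y at hpl
  change ∀ i < l, _ at hadj
  change ∀ i, 0 < i → i < l → _ at hint
  clear_value l
  have hl0 : l ≠ 0 := by rintro rfl; exact hxy (hp0.symm.trans hpl)
  have hl1 : l ≠ 1 := by
    rintro rfl
    have := hadj 0 (by omega)
    rw [hp0] at this; simp only [zero_add, hpl] at this; exact hn this
  have short : ∀ i d, 1 ≤ d → i + d ≤ l → (i + d < l → H.Adj (p i) (p (i + d + 1))) →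
      (i + d = l → p i = p l) → False := by
    intro i d hd hidl h1 h2
    refine hmin (l - d) (by omega) ⟨fun t => if t ≤ i then p t else p (t + d), ?_, ?_, ?_, ?_⟩
    · simp [hp0]
    · by_cases h : l - d ≤ i
      · have : l - d = i := by omega
        simp only [this, le_refl, if_true]
        rw [h2 (by omega), hpl]
      · simp only [h, if_false]
        rw [show l - d + d = l by omega, hpl]
    · intro t ht
      by_cases h : t + 1 ≤ i
      · simp only [h, if_true, show t ≤ i by omega]
        exact hadj t (by omega)
      · by_cases h' : t ≤ i
        · have : t = i := by omega
          subst this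
          simp only [h, h', if_true, if_false]
          rw [show t + 1 + d = t + d + 1 by omega]
          exact h1 (by omega)
        · simp only [h, h', if_false]
          rw [show t + 1 + d = t + d + 1 by omega]
          exact hadj _ (by omega)
    · intro t ht0 htl
      by_cases h : t ≤ i
      · simp only [h, if_true]; exact hint t ht0 (by omega)
      · simp only [h, if_false]; exact hint _ (by omega) (by omega)
  have hvp : ∀ i ≤ l, p i ≠ v ∧ (H.Adj v (p i) ↔ (i = 0 ∨ i = l)) := by
    intro i hi
    rcases Nat.eq_zero_or_pos i with rfl | h0
    · rw [hp0]; exact ⟨hx.ne', by simp [hx]⟩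
    · rcases hi.eq_or_lt with rfl | h1
      · rw [hpl]; exact ⟨hy.ne', by simp [hy]⟩
      · have := hint i h0 h1
        exact ⟨this.1, by simp only [this.2, false_iff]; omega⟩
  let q : ℕ → V := fun t => if t ≤ l then p t else v
  have key : ∀ a b, a < b → b < l + 2 → q a ≠ q b ∧
      (H.Adj (q a) (q b) ↔ (b = a + 1 ∨ (a = 0 ∧ b = l + 1))) := by
    intro a b hab hb
    have ha : a ≤ l := by omega
    have hqa : q a = p a := by simp [q, ha]
    rw [hqa]
    by_cases hbl : b ≤ l
    · have hqb : q b = p b := by simp [q, hbl]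
      rw [hqb]
      constructor
      · intro h
        refine short a (b - a) (by omega) (by omega) ?_ ?_
        · intro h1
          rw [h, show a + (b - a) + 1 = b + 1 by omega]
          exact hadj b (by omega)
        · intro h1
          rw [h]; congr 1; omega
      · constructor
        · intro h
          by_contra hc
          refine short a (b - a - 1) (by omega) (by omega) ?_ ?_
          · intro _
            rwa [show a + (b - a - 1) + 1 = b by omega]
          · intro h1; omega
        · rintro (rfl | h)
          · exact hadj a (by omega)
          · omega
    · have hqb : q b = v := by simp [q, hbl]
      rw [hqb]
      refine ⟨(hvp a ha).1, ?_⟩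
      rw [H.adj_comm, (hvp a ha).2]
      omega
  have : NeZero (l + 2) := ⟨by omega⟩
  have : Fact (1 < l + 2) := ⟨by omega⟩
  refine hH (l + 2) (by omega) ⟨fun i => q i.val, ?_, ?_⟩
  · intro i j h
    apply ZMod.val_injective
    rcases lt_trichotomy i.val j.val with h1 | h1 | h1
    · exact absurd h (key _ _ h1 (ZMod.val_lt j)).1
    · exact h1
    · exact absurd h.symm (key _ _ h1 (ZMod.val_lt i)).1
  · intro i j
    have hs : ∀ i j : ZMod (l + 2), i = j + 1 ↔
        (i.val = j.val + 1 ∨ (i.val = 0 ∧ j.val = l + 1)) := by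
      intro i j
      rw [← (ZMod.val_injective (l + 2)).eq_iff, ZMod.val_add, ZMod.val_one]
      have h1 := ZMod.val_lt i
      have h2 := ZMod.val_lt j
      by_cases h : j.val + 1 < l + 2
      · rw [Nat.mod_eq_of_lt h]; omega
      · have : j.val + 1 = l + 2 := by omega
        rw [this, Nat.mod_self]; omega
    rw [hs, hs]
    have h1 := ZMod.val_lt i
    have h2 := ZMod.val_lt j
    rcases lt_trichotomy i.val j.val with h | h | h
    · have := (key _ _ h h2).2
      simp only [this]; omega
    · simp only [h, SimpleGraph.irrefl, false_iff]; omega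
    · have := (key _ _ h h1).2
      rw [H.adj_comm]
      simp only [this]; omega

lemma seq_of_reflTransGen {V : Type*} {R : V → V → Prop} {a b : V}
    (h : Relation.ReflTransGen R a b) :
    ∃ (l : ℕ) (p : ℕ → V), p 0 = a ∧ p l = b ∧ ∀ i < l, R (p i) (p (i + 1)) := by
  induction h with
  | refl => exact ⟨0, fun _ => a, rfl, rfl, by simp⟩
  | @tail b c _ hbc ih =>
    obtain ⟨l, p, h0, hl, hp⟩ := ih
    refine ⟨l + 1, fun t => if t ≤ l then p t else c, by simp [h0], by simp, ?_⟩
    intro i hi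
    by_cases h : i + 1 ≤ l
    · simp only [h, show i ≤ l by omega, if_true]; exact hp i (by omega)
    · have : i = l := by omega
      subst this
      simp [hl, hbc]

lemma exists_simplicial {V : Type*} [DecidableEq V] {H : SimpleGraph V} (hH : IsChordal H) :
    ∀ (N : ℕ) (S T : Finset V), S.card = N → T ⊆ S →
      (∀ a ∈ T, ∀ b ∈ T, a ≠ b → H.Adj a b) → (∃ s ∈ S, s ∉ T) →
      ∃ c ∈ S, c ∉ T ∧ ∀ a ∈ S, ∀ b ∈ S, H.Adj c a → H.Adj c b → a ≠ b → H.Adj a b := by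
  classical
  intro N
  induction N using Nat.strong_induction_on with
  | _ N ih =>
  intro S T hSN hTS hT hne
  by_cases hcl : ∀ a ∈ S, ∀ b ∈ S, a ≠ b → H.Adj a b
  · obtain ⟨s, hs, hsT⟩ := hne
    exact ⟨s, hs, hsT, fun a ha b hb _ _ hab => hcl a ha b hb hab⟩
  obtain ⟨v, hv, w, hw, hvw, hnadj, hTv⟩ : ∃ v ∈ S, ∃ w ∈ S, w ≠ v ∧ ¬ H.Adj v w ∧
      ∀ t ∈ T, t ≠ v → H.Adj v t := by
    by_cases hu : ∃ t ∈ T, ∃ w ∈ S, w ≠ t ∧ ¬ H.Adj t w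
    · obtain ⟨t, ht, w, hw, h1, h2⟩ := hu
      exact ⟨t, hTS ht, w, hw, h1, h2, fun t' ht' h => hT t ht t' ht' h.symm⟩
    · push Not at hu hcl
      obtain ⟨a, ha, b, hb, hab, hn⟩ := hcl
      exact ⟨a, ha, b, hb, hab.symm, hn, fun t ht h => (hu t ht a ha h.symm).symm⟩
  let D : V → Prop := fun d => d ∈ S ∧ d ≠ v ∧ ¬ H.Adj v d
  let R : V → V → Prop := fun a b => D a ∧ D b ∧ H.Adj a b
  have hRsymm : ∀ a b, R a b → R b a := fun a b h => ⟨h.2.1, h.1, h.2.2.symm⟩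
  let C : Finset V := S.filter fun c => Relation.ReflTransGen R w c
  let T' : Finset V := S.filter fun t => t ∉ C ∧ ∃ c ∈ C, H.Adj c t
  have hwD : D w := ⟨hw, hvw, hnadj⟩
  have hCm : ∀ c, c ∈ C ↔ c ∈ S ∧ Relation.ReflTransGen R w c := fun c => by simp [C]
  have hCD : ∀ c ∈ C, D c := by
    intro c hc
    rcases Relation.ReflTransGen.cases_tail ((hCm c).1 hc).2 with h | ⟨b, -, h⟩
    · rw [h]; exact hwD
    · exact h.2.1
  have hT'm : ∀ t, t ∈ T' ↔ t ∈ S ∧ t ∉ C ∧ ∃ c ∈ C, H.Adj c t := fun t => by simp [T']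
  have hT'v : ∀ t ∈ T', H.Adj v t := by
    intro t ht
    obtain ⟨htS, htC, c, hc, hct⟩ := (hT'm t).1 ht
    by_contra hn
    have htv : t ≠ v := by
      rintro rfl
      exact (hCD c hc).2.2 hct.symm
    exact htC ((hCm t).2 ⟨htS, ((hCm c).1 hc).2.tail ⟨hCD c hc, ⟨htS, htv, hn⟩, hct⟩⟩)
  have hT'c : ∀ a ∈ T', ∀ b ∈ T', a ≠ b → H.Adj a b := by
    intro a ha b hb hab
    obtain ⟨-, -, c, hc, hca⟩ := (hT'm a).1 ha
    obtain ⟨-, -, d, hd, hdb⟩ := (hT'm b).1 hb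
    have : Std.Symm R := ⟨hRsymm⟩
    have hcd : Relation.ReflTransGen R c d :=
      (Relation.ReflTransGen.stdSymm.symm _ _ ((hCm c).1 hc).2).trans ((hCm d).1 hd).2
    obtain ⟨l, p, h0, hl, hp⟩ := seq_of_reflTransGen hcd
    have hpD : ∀ i ≤ l, D (p i) := by
      intro i hi
      rcases hi.eq_or_lt with rfl | h
      · rw [hl]; exact hCD d hd
      · exact (hp i h).1
    refine chordal_path hH (hT'v a ha) (hT'v b hb) hab
      ⟨l + 2, fun t => if t = 0 then a else if t ≤ l + 1 then p (t - 1) else b, by simp, by simp,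
        ?_, ?_⟩
    · intro i hi
      rcases Nat.eq_zero_or_pos i with rfl | h
      · simpa [h0] using hca.symm
      · by_cases h1 : i + 1 ≤ l + 1
        · have := (hp (i - 1) (by omega)).2.2
          rw [show i - 1 + 1 = i by omega] at this
          simpa [h.ne', h1, show i ≤ l + 1 by omega, show i ≤ l by omega] using this
        · have : i = l + 1 := by omega
          subst this
          simpa [hl] using hdb
    · intro i h1 h2
      have := hpD (i - 1) (by omega)
      simp only [h1.ne', if_false, show i ≤ l + 1 by omega, if_true]
      exact this.2
  have hvS' : v ∉ C ∪ T' := by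
    intro h
    rcases Finset.mem_union.1 h with h | h
    · exact (hCD v h).2.1 rfl
    · exact (hT'v v h).ne rfl
  have hS'S : C ∪ T' ⊆ S := Finset.union_subset (Finset.filter_subset _ _) (Finset.filter_subset _ _)
  have hlt : (C ∪ T').card < N := by
    rw [← hSN]
    exact Finset.card_lt_card ⟨hS'S, fun h => hvS' (h hv)⟩
  have hwC : w ∈ C := (hCm w).2 ⟨hw, Relation.ReflTransGen.refl⟩
  obtain ⟨c, hc, hcT', hsimp⟩ := ih _ hlt (C ∪ T') T' rfl Finset.subset_union_right hT'c
    ⟨w, Finset.mem_union_left _ hwC, fun h => ((hT'm w).1 h).2.1 hwC⟩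
  have hcC : c ∈ C := by
    rcases Finset.mem_union.1 hc with h | h
    · exact h
    · exact absurd h hcT'
  have hnb : ∀ a ∈ S, H.Adj c a → a ∈ C ∪ T' := by
    intro a ha hca
    by_cases h : a ∈ C
    · exact Finset.mem_union_left _ h
    · exact Finset.mem_union_right _ ((hT'm a).2 ⟨ha, h, c, hcC, hca⟩)
  refine ⟨c, hS'S hc, ?_, ?_⟩
  · intro hcT
    exact (hCD c hcC).2.2 (hTv c hcT (hCD c hcC).2.1)
  · intro a ha b hb hca hcb hab
    exact hsimp a (hnb a ha hca) b (hnb b hb hcb) hca hcb hab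

lemma exists_peo {V : Type*} [DecidableEq V] {H : SimpleGraph V} (hH : IsChordal H) :
    ∀ (N : ℕ) (S : Finset V), S.card = N → ∃ pos : V → ℕ, Set.InjOn pos S ∧
      ∀ i ∈ S, ∀ j ∈ S, ∀ l ∈ S, pos i < pos j → pos i < pos l → H.Adj i j → H.Adj i l →
        j ≠ l → H.Adj j l := by
  intro N
  induction N with
  | zero =>
    intro S hS
    rw [Finset.card_eq_zero] at hS
    subst hS
    exact ⟨fun _ => 0, by simp, by simp⟩
  | succ N ih =>
    intro S hS
    have hne : S.Nonempty := by rw [← Finset.card_pos]; omega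
    obtain ⟨s, hs⟩ := hne
    obtain ⟨c, hc, -, hsimp⟩ := exists_simplicial hH _ S ∅ rfl (by simp) (by simp) ⟨s, hs, by simp⟩
    obtain ⟨pos, hinj, hpos⟩ := ih (S.erase c) (by rw [Finset.card_erase_of_mem hc]; omega)
    refine ⟨fun v => if v = c then 0 else pos v + 1, ?_, ?_⟩
    · intro a ha b hb h
      by_cases h1 : a = c <;> by_cases h2 : b = c
      · rw [h1, h2]
      · simp [h1, h2] at h
      · simp [h1, h2] at h
      · simp only [h1, h2, if_false, Nat.add_right_cancel_iff] at h
        exact hinj (by simp [h1]; exact ha) (by simp [h2]; exact hb) h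
    · intro i hi j hj l hl hij hil aij ail hjl
      by_cases h : i = c
      · subst h; exact hsimp j hj l hl aij ail hjl
      · have hj' : j ≠ c := by rintro rfl; simp at hij
        have hl' : l ≠ c := by rintro rfl; simp at hil
        simp only [h, hj', hl', if_false, Nat.add_lt_add_iff_right] at hij hil
        exact hpos i (by simp [h, hi]) j (by simp [hj', hj]) l (by simp [hl', hl]) hij hil aij ail
          hjl

/-- An edge ranking with the exchange property on the complement of a chordal graph. -/
lemma exists_rank {n : ℕ} {G : SimpleGraph (Fin n)} (hG : IsChordal Gᶜ) :
    ∃ r : Sym2 (Fin n) → ℕ, Function.Injective r ∧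
    ∀ a b x y, G.Adj a b → G.Adj x y → a ≠ x → a ≠ y → b ≠ x → b ≠ y →
      r s(a, b) < r s(x, y) →
      ∃ m t, (m = a ∨ m = b) ∧ (t = x ∨ t = y) ∧ G.Adj m t ∧ r s(m, t) < r s(x, y) := by
  obtain ⟨pos, hinj, hpos⟩ := exists_peo hG _ Finset.univ rfl
  simp only [Finset.mem_univ, true_imp_iff] at hpos
  have hinj : Function.Injective pos := by simpa [Set.injOn_univ] using hinj
  obtain ⟨B, hB⟩ : ∃ B : ℕ, ∀ v, pos v < B :=
    ⟨(Finset.univ.sup pos) + 1, fun v => Nat.lt_succ_of_le (Finset.le_sup (Finset.mem_univ v))⟩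
  let r : Sym2 (Fin n) → ℕ := Sym2.lift ⟨fun a b => B * min (pos a) (pos b) + max (pos a) (pos b),
    fun a b => by simp only [min_comm, max_comm]⟩
  have hr : ∀ a b, r s(a, b) = B * min (pos a) (pos b) + max (pos a) (pos b) := fun a b => rfl
  have lex : ∀ a b c d : ℕ, b < B → d < B → B * a + b < B * c + d → a ≤ c := by
    intro a b c d hb hd h
    by_contra hc
    have : B * (c + 1) ≤ B * a := Nat.mul_le_mul_left _ (by omega)
    rw [mul_add] at this
    omega
  have lex' : ∀ a b c d : ℕ, b < B → d < B → a < c → B * a + b < B * c + d := by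
    intro a b c d hb hd h
    have : B * (a + 1) ≤ B * c := Nat.mul_le_mul_left _ (by omega)
    rw [mul_add] at this
    omega
  have hmx : ∀ a b, max (pos a) (pos b) < B := fun a b => max_lt (hB a) (hB b)
  refine ⟨r, ?_, ?_⟩
  · intro e f
    induction e using Sym2.ind with
    | _ a b =>
    induction f using Sym2.ind with
    | _ c d =>
    rw [hr, hr]
    intro h
    have h1 : min (pos a) (pos b) = min (pos c) (pos d) := by
      rcases lt_trichotomy (min (pos a) (pos b)) (min (pos c) (pos d)) with h' | h' | h'
      · have := lex' _ _ _ _ (hmx a b) (hmx c d) h'; omega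
      · exact h'
      · have := lex' _ _ _ _ (hmx c d) (hmx a b) h'; omega
    rw [h1] at h
    have h2 : max (pos a) (pos b) = max (pos c) (pos d) := by omega
    rw [Sym2.eq_iff, ← hinj.eq_iff, ← hinj.eq_iff, ← hinj.eq_iff (a := a) (b := d),
      ← hinj.eq_iff (a := b) (b := c)]
    omega
  · intro a b x y hab hxy hax hay hbx hby h
    rw [hr, hr] at h
    have hle := lex _ _ _ _ (hmx a b) (hmx x y) h
    have e1 := hinj.ne hax
    have e2 := hinj.ne hay
    have e3 := hinj.ne hbx
    have e4 := hinj.ne hby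
    obtain ⟨m, hm, hmx1, hmy1, hmxne, hmyne⟩ : ∃ m, (m = a ∨ m = b) ∧ pos m < pos x ∧
        pos m < pos y ∧ m ≠ x ∧ m ≠ y := by
      rcases le_total (pos a) (pos b) with h' | h'
      · exact ⟨a, Or.inl rfl, by omega, by omega, hax, hay⟩
      · exact ⟨b, Or.inr rfl, by omega, by omega, hbx, hby⟩
    have : G.Adj m x ∨ G.Adj m y := by
      by_contra hc
      push Not at hc
      have := hpos m x y hmx1 hmy1 ((SimpleGraph.compl_adj _ _ _).2 ⟨hmxne, hc.1⟩)
        ((SimpleGraph.compl_adj _ _ _).2 ⟨hmyne, hc.2⟩) hxy.ne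
      exact ((SimpleGraph.compl_adj _ _ _).1 this).2 hxy
    rcases this with h' | h'
    · exact ⟨m, x, hm, Or.inl rfl, h', by
        rw [hr, hr]; exact lex' _ _ _ _ (hmx m x) (hmx x y) (by omega)⟩
    · exact ⟨m, y, hm, Or.inr rfl, h', by
        rw [hr, hr]; exact lex' _ _ _ _ (hmx m y) (hmx x y) (by omega)⟩

end ChordalAux

section MonomialAux

set_option linter.unusedSectionVars false
set_option linter.unusedVariables false

variable (K : Type*) [Field K] {σ : Type*} [Fintype σ] [DecidableEq σ]

/-- exponent vector of a finite set of variables -/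
noncomputable def evec (B : Finset σ) : σ →₀ ℕ := ∑ v ∈ B, Finsupp.single v 1

lemma evec_apply (B : Finset σ) (v : σ) : evec B v = if v ∈ B then 1 else 0 := by
  simp [evec, Finsupp.finset_sum_apply, Finsupp.single_apply]

/-- squarefree monomial of a finite set of variables -/
noncomputable def sqm (B : Finset σ) : MvPolynomial σ K := ∏ v ∈ B, X v

lemma sqm_eq (B : Finset σ) : sqm K B = monomial (evec B) 1 := by
  rw [evec, monomial_sum_one]; rfl

lemma matchMon_eq (M : Finset (Sym2 σ)) : matchMon K M = sqm K (mVerts M) := rfl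

lemma evec_le_iff (B : Finset σ) (d : σ →₀ ℕ) : evec B ≤ d ↔ ∀ v ∈ B, d v ≠ 0 := by
  rw [Finsupp.le_def]
  simp only [evec_apply]
  constructor
  · intro h v hv
    have := h v
    simp [hv] at this; omega
  · intro h v
    by_cases hv : v ∈ B
    · have := h v hv; simp [hv]; omega
    · simp [hv]

lemma evec_injective : Function.Injective (evec : Finset σ → σ →₀ ℕ) := by
  intro B C h
  ext v
  have := DFunLike.congr_fun h v
  rw [evec_apply, evec_apply] at this
  by_cases h1 : v ∈ B <;> by_cases h2 : v ∈ C <;> simp_all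

lemma sqm_injective : Function.Injective (sqm K : Finset σ → MvPolynomial σ K) := by
  intro B C h
  rw [sqm_eq, sqm_eq] at h
  exact evec_injective (monomial_left_injective (one_ne_zero) h)

lemma evec_le_evec (B C : Finset σ) : evec B ≤ evec C ↔ B ⊆ C := by
  rw [evec_le_iff]
  simp [evec_apply, Finset.subset_iff]

lemma mem_span_sqm (F : Set (Finset σ)) (f : MvPolynomial σ K) :
    f ∈ Ideal.span (sqm K '' F) ↔ ∀ d ∈ f.support, ∃ B ∈ F, ∀ v ∈ B, d v ≠ 0 := by
  have : sqm K '' F = (fun s => monomial s (1 : K)) '' (evec '' F) := by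
    rw [Set.image_image]; simp only [← sqm_eq]
  rw [this, mem_ideal_span_monomial_image]
  simp only [Set.exists_mem_image, evec_le_iff]

lemma monomial_mem_span_sqm (F : Set (Finset σ)) (d : σ →₀ ℕ) :
    monomial d (1 : K) ∈ Ideal.span (sqm K '' F) ↔ ∃ B ∈ F, ∀ v ∈ B, d v ≠ 0 := by
  rw [mem_span_sqm]
  simp [support_monomial]

lemma mem_colon_sqm (F : Set (Finset σ)) (B : Finset σ) (f : MvPolynomial σ K) :
    f ∈ Submodule.colon (Ideal.span (sqm K '' F)) (Ideal.span {sqm K B} : Ideal _) ↔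
      ∀ d ∈ f.support, ∃ C ∈ F, ∀ v ∈ C, v ∉ B → d v ≠ 0 := by
  rw [Ideal.mem_colon_span_singleton, mem_span_sqm, sqm_eq]
  constructor
  · intro h d hd
    obtain ⟨C, hC, hv⟩ := h (d + evec B) (by
      rw [mem_support_iff, coeff_mul_monomial]; simpa using hd)
    refine ⟨C, hC, fun v hvC hvB => ?_⟩
    have := hv v hvC
    simpa [evec_apply, hvB] using this
  · intro h d hd
    rw [mem_support_iff, coeff_mul_monomial'] at hd
    have hle : evec B ≤ d := by by_contra hc; simp [hc] at hd
    simp only [hle, if_true, mul_one] at hd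
    obtain ⟨C, hC, hv⟩ := h _ (mem_support_iff.2 hd)
    refine ⟨C, hC, fun v hvC => ?_⟩
    by_cases hvB : v ∈ B
    · exact (evec_le_iff B d).1 hle v hvB
    · have := hv v hvC hvB
      simp [evec_apply, hvB] at this; exact this

lemma colon_sqm_eq (F : Set (Finset σ)) (B : Finset σ)
    (h : ∀ C ∈ F, ∃ c ∈ C, c ∉ B ∧ ∃ D ∈ F, ∀ v ∈ D, v ∉ B → v = c) :
    Submodule.colon (Ideal.span (sqm K '' F)) (Ideal.span {sqm K B} : Ideal _) =
      Ideal.span (X '' {c | ∃ D ∈ F, ∀ v ∈ D, v ∉ B → v = c}) := by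
  ext f
  rw [mem_colon_sqm, mem_ideal_span_X_image]
  constructor
  · intro hf d hd
    obtain ⟨C, hC, hv⟩ := hf d hd
    obtain ⟨c, hc, hcB, hD⟩ := h C hC
    exact ⟨c, hD, hv c hc hcB⟩
  · intro hf d hd
    obtain ⟨c, ⟨D, hD, hDc⟩, hc⟩ := hf d hd
    exact ⟨D, hD, fun v hvD hvB => by rw [hDc v hvD hvB]; exact hc⟩

lemma matchPow_eq (G : SimpleGraph σ) (k : ℕ) :
    matchPow K G k = Ideal.span (sqm K '' {B | ∃ M, IsKMatching G M k ∧ mVerts M = B}) := by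
  unfold matchPow
  congr 1
  ext u
  simp only [Set.mem_setOf_eq, Set.mem_image]
  constructor
  · rintro ⟨M, hM, rfl⟩
    exact ⟨_, ⟨M, hM, rfl⟩, rfl⟩
  · rintro ⟨_, ⟨M, hM, rfl⟩, rfl⟩
    exact ⟨M, hM, rfl⟩

lemma mem_minGens_matchPow (G : SimpleGraph σ) (k : ℕ) (u : MvPolynomial σ K) :
    u ∈ minGens K (matchPow K G k) ↔ ∃ M, IsKMatching G M k ∧ u = matchMon K M := by
  constructor
  · rintro ⟨⟨d, rfl⟩, hu, hmin⟩
    rw [matchPow_eq, monomial_mem_span_sqm] at hu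
    obtain ⟨_, ⟨M, hM, rfl⟩, hB⟩ := hu
    refine ⟨M, hM, (hmin _ ⟨_, sqm_eq K (mVerts M)⟩ ?_ ?_).symm⟩
    · rw [matchPow_eq]
      exact Ideal.subset_span ⟨_, ⟨M, hM, rfl⟩, rfl⟩
    · rw [sqm_eq, monomial_dvd_monomial]
      exact ⟨Or.inr ((evec_le_iff _ _).2 hB), by simp⟩
  · rintro ⟨M, hM, rfl⟩
    refine ⟨⟨_, sqm_eq K (mVerts M)⟩, ?_, ?_⟩
    · rw [matchPow_eq]
      exact Ideal.subset_span ⟨_, ⟨M, hM, rfl⟩, rfl⟩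
    · rintro _ ⟨d, rfl⟩ hd hdvd
      rw [matchPow_eq, monomial_mem_span_sqm] at hd
      obtain ⟨_, ⟨N, hN, rfl⟩, hB⟩ := hd
      rw [matchMon_eq, sqm_eq, monomial_dvd_monomial] at hdvd
      have h1 : d ≤ evec (mVerts M) := by simpa using hdvd.1
      have h2 : evec (mVerts N) ≤ d := (evec_le_iff _ _).2 hB
      have h3 := (evec_le_evec _ _).1 (h2.trans h1)
      have h4 : mVerts N = mVerts M := Finset.eq_of_subset_of_card_le h3 (by
        rw [hM.1.card_mVerts, hN.1.card_mVerts, hM.2, hN.2])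
      rw [h4] at h2
      rw [matchMon_eq, sqm_eq, le_antisymm h1 h2]

lemma mem_take_iff_lt {l : List ℕ} (hl : l.Pairwise (· < ·)) (i : ℕ) (hi : i < l.length) (x : ℕ) :
    x ∈ l.take i ↔ x ∈ l ∧ x < l[i] := by
  have hl' := List.pairwise_iff_getElem.1 hl
  rw [List.mem_take_iff_getElem]
  constructor
  · rintro ⟨j, hj, rfl⟩
    exact ⟨List.getElem_mem _, hl' _ _ _ _ (by omega)⟩
  · rintro ⟨h1, h2⟩
    obtain ⟨j, hj, rfl⟩ := List.getElem_of_mem h1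
    refine ⟨j, ?_, rfl⟩
    have : j < i := by
      by_contra hc
      rcases (not_lt.1 hc).eq_or_lt with h | h
      · subst h; omega
      · have := hl' _ _ hi hj h; omega
    omega

lemma mWt_injective {r : Sym2 σ → ℕ} (hr : Function.Injective r) : Function.Injective (mWt r) :=
  (Finset.geomSum_injective le_rfl).comp (Finset.image_injective hr)

lemma linearQuotients_of_rank (G : SimpleGraph σ) (k : ℕ) {r : Sym2 σ → ℕ}
    (hr : Function.Injective r)
    (hR : ∀ a b x y, G.Adj a b → G.Adj x y → a ≠ x → a ≠ y → b ≠ x → b ≠ y →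
      r s(a, b) < r s(x, y) →
      ∃ m t, (m = a ∨ m = b) ∧ (t = x ∨ t = y) ∧ G.Adj m t ∧ r s(m, t) < r s(x, y)) :
    HasLinearQuotients K (matchPow K G k) := by
  classical
  let can : Finset (Sym2 σ) → Prop := fun M => IsKMatching G M k ∧
    ∀ M', IsMatching G M' → mVerts M' = mVerts M → mWt r M ≤ mWt r M'
  have hcan : ∀ M, IsKMatching G M k → ∃ M', can M' ∧ mVerts M' = mVerts M ∧
      mWt r M' ≤ mWt r M := by
    intro M hM
    let F : Finset (Finset (Sym2 σ)) :=
      Finset.univ.filter fun M' => IsMatching G M' ∧ mVerts M' = mVerts M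
    have hMF : M ∈ F := by simp [F, hM.1]
    obtain ⟨M', hM', hmin⟩ := Finset.exists_min_image F (mWt r) ⟨M, hMF⟩
    have hM'' : IsMatching G M' ∧ mVerts M' = mVerts M := by simpa [F] using hM'
    refine ⟨M', ⟨⟨hM''.1, ?_⟩, ?_⟩, hM''.2, hmin M hMF⟩
    · have h1 := hM''.1.card_mVerts
      have h2 := hM.1.card_mVerts
      rw [hM''.2] at h1
      have := hM.2
      omega
    · intro N hN hNv
      exact hmin N (by simp [F, hN, hNv, hM''.2])
  let W : Finset ℕ := (Finset.univ.filter can).image (mWt r)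
  have hW : ∀ w, w ∈ W ↔ ∃ M, can M ∧ mWt r M = w := by
    intro w; simp [W]
  have hg : ∀ w, ∃ M, w ∈ W → can M ∧ mWt r M = w := by
    intro w
    by_cases h : w ∈ W
    · obtain ⟨M, hM⟩ := (hW w).1 h
      exact ⟨M, fun _ => hM⟩
    · exact ⟨∅, fun h' => absurd h' h⟩
  choose g hg using hg
  have hgM : ∀ M, can M → g (mWt r M) = M := fun M hM =>
    mWt_injective hr (hg _ ((hW _).2 ⟨M, hM, rfl⟩)).2
  let l := W.sort
  have hl : l.Pairwise (· < ·) := (Finset.sortedLT_sort W).pairwise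
  have hmem : ∀ w, w ∈ l ↔ w ∈ W := fun w => Finset.mem_sort _
  clear_value l
  refine ⟨l.map fun w => sqm K (mVerts (g w)), ?_, ?_, ?_⟩
  · refine List.Nodup.map_on ?_ (hl.imp fun h => h.ne)
    intro w hw w' hw' h
    have h := sqm_injective K h
    have c1 := hg w ((hmem w).1 hw)
    have c2 := hg w' ((hmem w').1 hw')
    have := c1.1.2 _ c2.1.1.1 h.symm
    have := c2.1.2 _ c1.1.1.1 h
    omega
  · intro u
    rw [mem_minGens_matchPow, List.mem_map]
    constructor
    · rintro ⟨w, hw, rfl⟩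
      exact ⟨g w, (hg w ((hmem w).1 hw)).1.1, rfl⟩
    · rintro ⟨M, hM, rfl⟩
      obtain ⟨M', hM', hv, -⟩ := hcan M hM
      exact ⟨mWt r M', (hmem _).2 ((hW _).2 ⟨M', hM', rfl⟩), by
        rw [hgM M' hM', hv]; rfl⟩
  · intro i hi0
    have hi : (i : ℕ) < l.length := by simpa using i.2
    let F : Set (Finset σ) := {B | ∃ w ∈ W, w < l[(i : ℕ)] ∧ mVerts (g w) = B}
    have hF : {u | u ∈ (l.map fun w => sqm K (mVerts (g w))).take i} = sqm K '' F := by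
      ext u
      simp only [Set.mem_setOf_eq, ← List.map_take, List.mem_map, mem_take_iff_lt hl _ hi, hmem,
        Set.mem_image, F]
      constructor
      · rintro ⟨w, hw, rfl⟩; exact ⟨_, ⟨w, hw.1, hw.2, rfl⟩, rfl⟩
      · rintro ⟨_, ⟨w, hw, hw', rfl⟩, rfl⟩; exact ⟨w, ⟨hw, hw'⟩, rfl⟩
    have hget : (l.map fun w => sqm K (mVerts (g w))).get i = sqm K (mVerts (g l[(i : ℕ)])) := by
      simp
    rw [hF, hget]
    refine ⟨_, colon_sqm_eq K F _ ?_⟩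
    rintro _ ⟨w', hw', hlt, rfl⟩
    have c1 := hg _ ((hmem _).1 (List.getElem_mem hi))
    have c2 := hg _ hw'
    obtain ⟨M', hM', hcard, hwt, a, haN, haM, b, hb, hV⟩ := matching_exchange hr hR c1.1.1.1
      c2.1.1.1 (c1.1.1.2.trans c2.1.1.2.symm) (by rw [c1.2, c2.2]; exact hlt) c1.1.2
    obtain ⟨M'', hM'', hv, hle⟩ := hcan M' ⟨hM', hcard.trans c1.1.1.2⟩
    refine ⟨a, haN, haM, mVerts M'', ⟨mWt r M'', (hW _).2 ⟨_, hM'', rfl⟩, ?_, by rw [hgM _ hM'']⟩, ?_⟩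
    · rw [c1.2] at hwt; omega
    · intro v hv' hvB
      rw [hv, hV] at hv'
      simp only [Finset.mem_insert, Finset.mem_erase] at hv'
      tauto

end MonomialAux

section DepthAux

open CategoryTheory
open scoped Pointwise

set_option linter.unusedSectionVars false

universe uu

/-- vanishing of Ext below degree `d` -/
def ExtVan {R : Type uu} [CommRing R] (m : Ideal R) (M : Type uu) [AddCommGroup M] [Module R M]
    (d : ℕ) : Prop :=
  ∀ i < d, Subsingleton (Abelian.Ext (ModuleCat.of R (R ⧸ m)) (ModuleCat.of R M) i)

lemma extVan_of_shortExact {R : Type uu} [CommRing R] (m : Ideal R) {M₁ M₂ M₃ : Type uu}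
    [AddCommGroup M₁] [Module R M₁] [AddCommGroup M₂] [Module R M₂] [AddCommGroup M₃] [Module R M₃]
    (f : M₁ →ₗ[R] M₂) (g : M₂ →ₗ[R] M₃) (hf : Function.Injective f) (hg : Function.Surjective g)
    (hfg : Function.Exact f g) {d : ℕ} (h1 : ExtVan m M₁ (d + 1)) (h2 : ExtVan m M₂ d) :
    ExtVan m M₃ d := by
  intro i hi
  let S : ShortComplex (ModuleCat.{uu} R) :=
    ModuleCat.shortComplexOfCompEqZero f g hfg.linearMap_comp_eq_zero
  have hS : S.ShortExact :=
    { exact := (ShortComplex.ShortExact.moduleCat_exact_iff_function_exact S).2 hfg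
      mono_f := (ModuleCat.mono_iff_injective _).2 hf
      epi_g := (ModuleCat.epi_iff_surjective _).2 hg }
  have zero1 := AddCommGrpCat.isZero_of_iff_subsingleton.mpr (h2 i hi)
  have zero2 := AddCommGrpCat.isZero_of_iff_subsingleton.mpr (h1 (i + 1) (by omega))
  exact AddCommGrpCat.subsingleton_of_isZero <| ShortComplex.Exact.isZero_of_both_zeros
    ((Abelian.Ext.covariant_sequence_exact₃' (ModuleCat.of R (R ⧸ m)) hS) i (i + 1) rfl)
    (zero1.eq_zero_of_src _) (zero2.eq_zero_of_tgt _)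

lemma extVan_step {R : Type uu} [CommRing R] (m I J C : Ideal R) (u : R)
    (hC : C = Submodule.colon I (Ideal.span {u} : Ideal R)) (hJ : J = I ⊔ Ideal.span {u})
    {d : ℕ} (h1 : ExtVan m (R ⧸ C) (d + 1)) (h2 : ExtVan m (R ⧸ I) d) : ExtVan m (R ⧸ J) d := by
  have hCm : ∀ x, x ∈ C ↔ x * u ∈ I := fun x => by rw [hC, Ideal.mem_colon_span_singleton]
  have hIJ : I ≤ J := hJ ▸ le_sup_left
  have hCI : C ≤ Submodule.comap (LinearMap.mulRight R u) I := fun x hx => by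
    simpa using (hCm x).1 hx
  refine extVan_of_shortExact m (Submodule.mapQ C I (LinearMap.mulRight R u) hCI)
    (Submodule.factor hIJ) ?_ (Submodule.factor_surjective hIJ) ?_ h1 h2
  · rw [← LinearMap.ker_eq_bot, LinearMap.ker_eq_bot']
    intro x hx
    obtain ⟨x, rfl⟩ := Submodule.Quotient.mk_surjective _ x
    rw [Submodule.mapQ_apply, Submodule.Quotient.mk_eq_zero] at hx
    rw [Submodule.Quotient.mk_eq_zero, hCm]
    simpa using hx
  · intro y
    obtain ⟨y, rfl⟩ := Submodule.Quotient.mk_surjective _ y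
    have : Submodule.factor hIJ (Submodule.Quotient.mk y) = Submodule.Quotient.mk y := rfl
    rw [this, Submodule.Quotient.mk_eq_zero, hJ]
    constructor
    · intro h
      obtain ⟨a, ha, b, hb, rfl⟩ := Submodule.mem_sup.1 h
      obtain ⟨c, rfl⟩ := Ideal.mem_span_singleton'.1 hb
      refine ⟨Submodule.Quotient.mk c, ?_⟩
      rw [Submodule.mapQ_apply, Submodule.Quotient.eq]
      have : c * u - (a + c * u) = -a := by ring
      simpa [this] using ha
    · rintro ⟨x, hx⟩
      obtain ⟨x, rfl⟩ := Submodule.Quotient.mk_surjective _ x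
      rw [Submodule.mapQ_apply, Submodule.Quotient.eq] at hx
      have hx : x * u - y ∈ I := by simpa using hx
      have : y = -(x * u - y) + x * u := by ring
      rw [this]
      exact Submodule.add_mem_sup (I.neg_mem hx) (Ideal.mem_span_singleton'.2 ⟨x, rfl⟩)

lemma smul_top_lt {R : Type uu} [CommRing R] (m I : Ideal R) (hm : m ≠ ⊤) (hI : I ≤ m) :
    m • (⊤ : Submodule R (R ⧸ I)) < ⊤ := by
  rw [lt_top_iff_ne_top]
  intro h
  have h := congrArg (Submodule.comap (Submodule.mkQ I)) h
  rw [Submodule.comap_smul_top_of_surjective _ _ (Submodule.mkQ_surjective _)] at h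
  simp [hI] at h
  exact hm h

lemma support_quot {R : Type uu} [CommRing R] (m : Ideal R) :
    Module.support R (R ⧸ m) = PrimeSpectrum.zeroLocus m := by
  rw [Module.support_eq_zeroLocus, Ideal.annihilator_quotient]

lemma extVan_of_regular {R : Type uu} [CommRing R] [IsNoetherianRing R] (m I : Ideal R)
    (hm : m ≠ ⊤) (hI : I ≤ m) (l : List R) (hl : ∀ r ∈ l, r ∈ m)
    (hreg : RingTheory.Sequence.IsRegular (R ⧸ I) l) : ExtVan m (R ⧸ I) l.length := by
  intro i hi
  exact ModuleCat.subsingleton_ext_of_exists_isRegular m (ModuleCat.of R (R ⧸ m))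
    (support_quot m).subset (ModuleCat.of R (R ⧸ I)) (smul_top_lt _ _ hm hI) l hl hreg i hi

/-- `R/I` modulo `x` -/
noncomputable def quotSMulTopEquiv {R : Type uu} [CommRing R] (I J : Ideal R) (x : R)
    (hJ : J = I ⊔ Ideal.span {x}) : QuotSMulTop x (R ⧸ I) ≃ₗ[R] R ⧸ J :=
  ((Submodule.quotEquivOfEq J _ (by
      rw [hJ, LinearMap.ker_comp, Submodule.ker_mkQ]
      ext y
      rw [Submodule.mem_comap, Submodule.mem_smul_pointwise_iff_exists]
      constructor
      · intro h
        obtain ⟨a, ha, b, hb, rfl⟩ := Submodule.mem_sup.1 h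
        obtain ⟨c, rfl⟩ := Ideal.mem_span_singleton'.1 hb
        refine ⟨Submodule.Quotient.mk c, trivial, ?_⟩
        rw [← Submodule.Quotient.mk_smul, Submodule.mkQ_apply, Submodule.Quotient.eq]
        have : x * c - (a + c * x) = -a := by ring
        simpa [this] using ha
      · rintro ⟨c, -, hc⟩
        obtain ⟨c, rfl⟩ := Submodule.Quotient.mk_surjective _ c
        rw [← Submodule.Quotient.mk_smul, Submodule.mkQ_apply, Submodule.Quotient.eq] at hc
        have hc : x * c - y ∈ I := by simpa using hc
        have : y = -(x * c - y) + c * x := by ring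
        rw [this]
        exact Submodule.add_mem_sup (I.neg_mem hc) (Ideal.mem_span_singleton'.2 ⟨c, rfl⟩))).trans
    (LinearMap.quotKerEquivOfSurjective
      ((Submodule.mkQ (x • (⊤ : Submodule R (R ⧸ I)))).comp (Submodule.mkQ I))
      ((Submodule.mkQ_surjective _).comp (Submodule.mkQ_surjective _)))).symm

section Vars

variable {K : Type*} [Field K] {σ : Type*} [Fintype σ] [DecidableEq σ]

lemma one_notMem_span_X (A : Set σ) : (1 : MvPolynomial σ K) ∉ Ideal.span (X '' A) := by
  rw [mem_ideal_span_X_image]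
  intro h
  obtain ⟨i, -, hi⟩ := h 0 (by simp)
  simp at hi

lemma isRegular_vars (l : List σ) : ∀ (A : Set σ), l.Nodup → (∀ x ∈ l, x ∉ A) →
    RingTheory.Sequence.IsRegular (MvPolynomial σ K ⧸ Ideal.span (X '' A : Set (MvPolynomial σ K)))
      (l.map (X : σ → MvPolynomial σ K)) := by
  induction l with
  | nil =>
    intro A _ _
    have : Nontrivial (MvPolynomial σ K ⧸ Ideal.span (X '' A : Set (MvPolynomial σ K))) :=
      Ideal.Quotient.nontrivial_iff.2 (fun h => one_notMem_span_X A (h ▸ Submodule.mem_top))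
    exact RingTheory.Sequence.IsRegular.nil _ _
  | cons i l ih =>
    intro A hnd hA
    rw [List.map_cons, RingTheory.Sequence.isRegular_cons_iff]
    refine ⟨?_, ?_⟩
    · rw [isSMulRegular_iff_right_eq_zero_of_smul]
      intro f hf
      obtain ⟨f, rfl⟩ := Submodule.Quotient.mk_surjective _ f
      rw [← Submodule.Quotient.mk_smul, Submodule.Quotient.mk_eq_zero, smul_eq_mul,
        mem_ideal_span_X_image] at hf
      rw [Submodule.Quotient.mk_eq_zero, mem_ideal_span_X_image]
      intro d hd
      obtain ⟨j, hj, hj'⟩ := hf (Finsupp.single i 1 + d) (by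
        rw [mem_support_iff, coeff_X_mul]; simpa using hd)
      refine ⟨j, hj, ?_⟩
      have : i ≠ j := by rintro rfl; exact hA i (by simp) hj
      simpa [Finsupp.single_apply, this] using hj'
    · rw [List.nodup_cons] at hnd
      have := ih (insert i A) hnd.2 (by
        intro x hx h
        rcases h with rfl | h
        · exact hnd.1 hx
        · exact hA x (by simp [hx]) h)
      refine ((quotSMulTopEquiv (Ideal.span (X '' A)) _ (X i) ?_).isRegular_congr _).2 this
      rw [Set.image_insert_eq, Ideal.span_insert, sup_comm]

lemma extVan_vars (A : Set σ) (d : ℕ) (hd : A.ncard + d ≤ Fintype.card σ) :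
    ExtVan (Ideal.span (Set.range (X : σ → MvPolynomial σ K)))
      (MvPolynomial σ K ⧸ Ideal.span (X '' A : Set (MvPolynomial σ K))) d := by
  classical
  have hle : Ideal.span (X '' A) ≤ Ideal.span (Set.range (X : σ → MvPolynomial σ K)) :=
    Ideal.span_mono (Set.image_subset_range _ _)
  have hm : Ideal.span (Set.range (X : σ → MvPolynomial σ K)) ≠ ⊤ := by
    rw [← Set.image_univ]
    exact fun h => one_notMem_span_X (K := K) Set.univ (h ▸ Submodule.mem_top)
  let l := (Aᶜ.toFinset).toList
  have hlen : l.length = Fintype.card σ - A.ncard := by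
    simp only [l, Finset.length_toList]
    rw [← Set.ncard_eq_toFinset_card', Set.ncard_compl, Nat.card_eq_fintype_card]
  have hreg := isRegular_vars (K := K) l A (Finset.nodup_toList _) (fun x hx => by simpa [l] using hx)
  intro i hi
  refine extVan_of_regular _ _ hm hle _ ?_ hreg i (by rw [List.length_map]; omega)
  intro r hr
  obtain ⟨x, -, rfl⟩ := List.mem_map.1 hr
  exact Ideal.subset_span ⟨x, rfl⟩

lemma extVan_linearQuotients (L : List (MvPolynomial σ K)) (d : ℕ) (hd : d ≤ Fintype.card σ)
    (h : ∀ (i : ℕ) (hi : i < L.length), ∃ A : Set σ, A.ncard + (d + 1) ≤ Fintype.card σ ∧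
      Submodule.colon (Ideal.span {u | u ∈ L.take i}) (Ideal.span {L[i]} : Ideal _)
        = Ideal.span (X '' A)) (i : ℕ) (hi : i ≤ L.length) :
    ExtVan (Ideal.span (Set.range (X : σ → MvPolynomial σ K)))
      (MvPolynomial σ K ⧸ Ideal.span {u | u ∈ L.take i}) d := by
  induction i with
  | zero =>
    have := extVan_vars (K := K) (∅ : Set σ) d (by simpa using hd)
    have e : {u : MvPolynomial σ K | u ∈ L.take 0} = X '' (∅ : Set σ) := by ext; simp
    rw [e]; exact this
  | succ i ih =>
    obtain ⟨A, hA, hc⟩ := h i (by omega)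
    refine extVan_step _ _ _ _ L[i] hc.symm ?_ (extVan_vars A (d + 1) hA) (ih (by omega))
    rw [← Ideal.span_union]
    congr 1
    ext u
    rw [List.take_succ_eq_append_getElem (by omega)]
    simp only [List.mem_append, List.mem_singleton, Set.mem_union, Set.mem_singleton_iff]
    rfl

lemma qdepth_ne {I : Ideal (MvPolynomial σ K)} {d : ℕ} (hd : 1 ≤ d)
    (hI : I ≤ Ideal.span (Set.range (X : σ → MvPolynomial σ K)))
    (h : ExtVan (Ideal.span (Set.range (X : σ → MvPolynomial σ K))) (MvPolynomial σ K ⧸ I) (d + 1)) :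
    qdepth K I ≠ d := by
  have hm : Ideal.span (Set.range (X : σ → MvPolynomial σ K)) ≠ ⊤ := by
    rw [← Set.image_univ]
    exact fun h => one_notMem_span_X (K := K) Set.univ (h ▸ Submodule.mem_top)
  obtain ⟨rs, hlen, hmem, hreg⟩ := ModuleCat.exists_isRegular_of_exists_subsingleton_ext
    (Ideal.span (Set.range (X : σ → MvPolynomial σ K))) (d + 1) (ModuleCat.of _ _)
    (smul_top_lt _ _ hm hI) (ModuleCat.of _ _) (support_quot _) h
  intro hq
  unfold qdepth at hq
  by_cases hb : BddAbove {m | ∃ l : List (MvPolynomial σ K), l.length = m ∧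
    (∀ f ∈ l, f ∈ Ideal.span (Set.range (X : σ → MvPolynomial σ K))) ∧
    RingTheory.Sequence.IsRegular (MvPolynomial σ K ⧸ I) l}
  · have := le_csSup hb ⟨rs, hlen, hmem, hreg⟩
    omega
  · rw [Nat.sSup_of_not_bddAbove hb] at hq
    omega

end Vars

end DepthAux

lemma exists_kMatching {n : ℕ} (G : SimpleGraph (Fin n)) {k : ℕ} (hk : k ≤ matchNum G) :
    ∃ M : Finset (Sym2 (Fin n)), IsKMatching G M k := by
  have hmem : matchNum G ∈ {k | ∃ M : Finset (Sym2 (Fin n)), IsKMatching G M k} := by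
    refine Nat.sSup_mem ⟨0, ∅, ⟨by simp, by simp⟩, rfl⟩ ⟨Fintype.card (Sym2 (Fin n)), ?_⟩
    rintro _ ⟨M, -, rfl⟩
    exact Finset.card_le_univ M
  obtain ⟨M, hM, hc⟩ := hmem
  obtain ⟨N, hN, hNc⟩ := Finset.exists_subset_card_eq (hk.trans hc.ge)
  exact ⟨N, hM.subset hN, hNc⟩

lemma matchPow_le {K : Type*} [Field K] {n : ℕ} (G : SimpleGraph (Fin n)) {k : ℕ} (hk : 1 ≤ k) :
    matchPow K G k ≤ Ideal.span (Set.range (X : Fin n → MvPolynomial (Fin n) K)) := by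
  refine Ideal.span_le.2 ?_
  rintro _ ⟨M, hM, rfl⟩
  have h : (mVerts M).Nonempty := by
    rw [← Finset.card_pos, hM.1.card_mVerts, hM.2]; omega
  obtain ⟨a, ha⟩ := h
  exact Ideal.mem_of_dvd _ (Finset.dvd_prod_of_mem _ ha) (Ideal.subset_span ⟨a, rfl⟩)

lemma dominating_aux {K : Type*} [Field K] {n : ℕ}
    (G : SimpleGraph (Fin n)) (k : ℕ) (hk1 : 1 ≤ k) (hk : k ≤ matchNum G)
    (hlq : HasLinearQuotients K (matchPow K G k))
    (hdepth : qdepth K (matchPow K G k) = 2 * k - 1) :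
    ∃ M : Finset (Sym2 (Fin n)), IsKMatching G M k ∧
      ∀ v : Fin n, v ∉ mVerts M → ∃ w ∈ mVerts M, G.Adj v w := by
  classical
  by_contra hno
  push Not at hno
  obtain ⟨L, hnd, hL, hcol⟩ := hlq
  have hL' : ∀ u, u ∈ L ↔ ∃ M, IsKMatching G M k ∧ u = matchMon K M := fun u => by
    rw [hL, mem_minGens_matchPow]
  obtain ⟨M₀, hM₀⟩ := exists_kMatching G hk
  have hcardM : ∀ M, IsKMatching G M k → (mVerts M).card = 2 * k := fun M hM => by
    rw [hM.1.card_mVerts, hM.2]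
  have hn : 2 * k + 1 ≤ n := by
    obtain ⟨v, hv, -⟩ := hno M₀ hM₀
    have := Finset.card_le_univ (insert v (mVerts M₀))
    rw [Finset.card_insert_of_notMem hv, hcardM M₀ hM₀, Fintype.card_fin] at this
    exact this
  have key := extVan_linearQuotients L (2 * k) (by rw [Fintype.card_fin]; omega) ?_ L.length le_rfl
  · have hI : Ideal.span {u | u ∈ L.take L.length} = matchPow K G k := by
      unfold matchPow
      congr 1
      ext u
      rw [List.take_length]
      exact hL' u
    rw [hI] at key
    refine qdepth_ne (d := 2 * k - 1) (by omega) (matchPow_le G hk1) ?_ hdepth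
    rw [show 2 * k - 1 + 1 = 2 * k by omega]
    exact key
  · intro i hi
    rw [Fintype.card_fin]
    obtain ⟨M, hM, hMi⟩ := (hL' L[i]).1 (List.getElem_mem hi)
    rcases Nat.eq_zero_or_pos i with rfl | hi0
    · refine ⟨∅, by simpa using hn, ?_⟩
      have hne : L[0] ≠ 0 := by
        rw [hMi, matchMon_eq, sqm_eq]
        simp
      ext f
      rw [Ideal.mem_colon_span_singleton]
      have e : {u : MvPolynomial (Fin n) K | u ∈ L.take 0} = ∅ := by ext; simp
      rw [e]
      simp [hne]
    · obtain ⟨A, hA⟩ := hcol ⟨i, hi⟩ hi0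
      refine ⟨A, ?_, hA⟩
      obtain ⟨v, hv, hvadj⟩ := hno M hM
      let F : Set (Finset (Fin n)) := {B | ∃ N, IsKMatching G N k ∧ matchMon K N ∈ L.take i ∧
        mVerts N = B}
      have hF : {u | u ∈ L.take i} = sqm K '' F := by
        ext u
        constructor
        · intro hu
          obtain ⟨N, hN, rfl⟩ := (hL' u).1 (List.mem_of_mem_take hu)
          exact ⟨_, ⟨N, hN, hu, rfl⟩, rfl⟩
        · rintro ⟨_, ⟨N, hN, hu, rfl⟩, rfl⟩
          exact hu
      change Submodule.colon (Ideal.span {u | u ∈ L.take i}) (Ideal.span {L[i]} : Ideal _) = _ at hA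
      rw [hF, hMi, matchMon_eq] at hA
      have hnot : L[i] ∉ L.take i := by
        intro h
        obtain ⟨j, hj, hji⟩ := List.mem_take_iff_getElem.1 h
        have := (List.Nodup.getElem_inj_iff hnd).1 hji
        omega
      have hsub : A ⊆ ((insert v (mVerts M))ᶜ : Finset (Fin n)) := by
        intro c hc
        have hXc : (X c : MvPolynomial (Fin n) K) ∈ Ideal.span (X '' A) :=
          Ideal.subset_span ⟨c, hc, rfl⟩
        rw [← hA, mem_colon_sqm] at hXc
        obtain ⟨_, ⟨N, hN, hNL, rfl⟩, hNc⟩ := hXc (Finsupp.single c 1) (by simp [support_X])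
        have hNc : ∀ w ∈ mVerts N, w ∉ mVerts M → w = c := by
          intro w hw hwM
          have := hNc w hw hwM
          by_contra hne
          exact this (by rw [Finsupp.single_apply, if_neg (Ne.symm hne)])
        have hne : mVerts N ≠ mVerts M := by
          intro h
          apply hnot
          rw [hMi, matchMon_eq, ← h]
          exact hNL
        have hex : ∃ w ∈ mVerts N, w ∉ mVerts M := by
          by_contra hcon
          push Not at hcon
          exact hne (Finset.eq_of_subset_of_card_le hcon (by rw [hcardM M hM, hcardM N hN]))
        obtain ⟨w, hwN, hwM⟩ := hex
        have := hNc w hwN hwM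
        subst this
        obtain ⟨z, hz⟩ := exists_partner hwN
        have hadj := hN.1.adj hz
        have hzM : z ∈ mVerts M := by
          by_contra hzM
          exact hadj.ne (hNc z (mem_mVerts_right hz) hzM).symm
        have hwv : w ≠ v := by
          rintro rfl
          exact hvadj z hzM hadj
        simp [hwv, hwM]
      have h1 := Set.ncard_le_ncard hsub
      rw [Set.ncard_coe_finset, Finset.card_compl, Finset.card_insert_of_notMem hv, hcardM M hM,
        Fintype.card_fin] at h1
      omega

/-- Let `G` be a graph on `[n]` with no isolated vertices and
`1 ≤ k ≤ ν(G)` such that `I(G)^{[k]}` has linear quotients (in particular, this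
applies whenever `G` is cochordal). If `depth(S/I(G)^{[k]}) = 2k − 1`, then `G`
has a dominating `k`-matching. -/
theorem dominating_matching_of_min_depth {K : Type*} [Field K] {n : ℕ}
    (G : SimpleGraph (Fin n))
    (hiso : ∀ v : Fin n, ∃ w, G.Adj v w)
    (k : ℕ) (hk1 : 1 ≤ k) (hk : k ≤ matchNum G)
    (hlq : HasLinearQuotients K (matchPow K G k) ∨ IsChordal Gᶜ)
    (hdepth : qdepth K (matchPow K G k) = 2 * k - 1) :
    ∃ M : Finset (Sym2 (Fin n)), IsKMatching G M k ∧
      ∀ v : Fin n, v ∉ mVerts M → ∃ w ∈ mVerts M, G.Adj v w := by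
  refine dominating_aux G k hk1 hk (hlq.elim id fun hc => ?_) hdepth
  obtain ⟨r, hr, hR⟩ := exists_rank hc
  exact linearQuotients_of_rank K G k hr hR
end

section
/- Let G be a finite simple graph on [n] with no isolated vertices. Then the highest nonzero squarefree power of its edge ideal has minimum depth: g_{I(G)}(ν(G)) = 0, i.e. depth(S/I(G)^{[ν(G)]}) = 2ν(G) − 1. -/
open MvPolynomial

namespace TopSq
open CategoryTheory Abelian
universe u

section ExtPart
variable {R : Type u} [CommRing R] (N : ModuleCat.{u} R)

/-- abbreviation for vanishing of an Ext group -/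
def ExtV (M : Type u) [AddCommGroup M] [Module R M] (i : ℕ) : Prop :=
  Subsingleton (Ext N (ModuleCat.of R M) i)

variable {A B C : Type u} [AddCommGroup A] [Module R A] [AddCommGroup B] [Module R B]
  [AddCommGroup C] [Module R C]

lemma ses (f : A →ₗ[R] B) (g : B →ₗ[R] C) (hf : Function.Injective f)
    (hg : Function.Surjective g) (h : Function.Exact f g) :
    (ModuleCat.shortComplexOfCompEqZero f g h.linearMap_comp_eq_zero).ShortExact where
  exact := ModuleCat.shortComplex_exact _ h
  mono_f := (ModuleCat.mono_iff_injective _).2 hf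
  epi_g := (ModuleCat.epi_iff_surjective _).2 hg

lemma extV_mid (f : A →ₗ[R] B) (g : B →ₗ[R] C) (hf : Function.Injective f)
    (hg : Function.Surjective g) (h : Function.Exact f g) {i : ℕ}
    (hA : ExtV N A i) (hC : ExtV N C i) : ExtV N B i := by
  have hs := ses f g hf hg h
  unfold ExtV at *
  refine subsingleton_of_forall_eq 0 fun x => ?_
  obtain ⟨y, hy⟩ := Ext.covariant_sequence_exact₂ N hs x (hC.elim _ _)
  rw [← hy, hA.elim y 0, Ext.zero_comp]

lemma extV_right (f : A →ₗ[R] B) (g : B →ₗ[R] C) (hf : Function.Injective f)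
    (hg : Function.Surjective g) (h : Function.Exact f g) {i : ℕ}
    (hA : ExtV N A (i+1)) (hB : ExtV N B i) : ExtV N C i := by
  have hs := ses f g hf hg h
  unfold ExtV at *
  refine subsingleton_of_forall_eq 0 fun x => ?_
  obtain ⟨y, hy⟩ := Ext.covariant_sequence_exact₃ N hs x rfl (hA.elim _ _)
  rw [← hy, hB.elim y 0, Ext.zero_comp]

lemma extV_left (f : A →ₗ[R] B) (g : B →ₗ[R] C) (hf : Function.Injective f)
    (hg : Function.Surjective g) (h : Function.Exact f g) {i : ℕ}
    (hB : ExtV N B (i+1)) (hC : ExtV N C i) : ExtV N A (i+1) := by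
  have hs := ses f g hf hg h
  unfold ExtV at *
  refine subsingleton_of_forall_eq 0 fun x => ?_
  obtain ⟨y, hy⟩ := Ext.covariant_sequence_exact₁ N hs x (hB.elim _ _) rfl
  rw [← hy, hC.elim y 0, Ext.zero_comp]

lemma extV_zero_of_reg (x : R) (hx : x ∈ Module.annihilator R N)
    (hr : Function.Injective (LinearMap.lsmul R B x)) : ExtV N B 0 := by
  have : Subsingleton (N →ₗ[R] B) :=
    IsSMulRegular.linearMap_subsingleton_of_mem_annihilator (r := x) (fun a b h => hr h) hx
  exact (Ext.addEquiv₀.trans ModuleCat.homAddEquiv).subsingleton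

lemma extV_succ_of_reg (x : R) (hx : x ∈ Module.annihilator R N) (g : B →ₗ[R] C)
    (hr : Function.Injective (LinearMap.lsmul R B x)) (hg : Function.Surjective g)
    (h : Function.Exact (LinearMap.lsmul R B x) g) {i : ℕ}
    (hC : ExtV N C i) : ExtV N B (i+1) := by
  have hs := ses _ g hr hg h
  unfold ExtV at *
  refine subsingleton_of_forall_eq 0 fun y => ?_
  have h0 := Ext.postcomp_smul_id_eq_zero_of_mem_annihilator (N := N) (M := ModuleCat.of R B) hx (i+1)
  have h1 : y.comp (Ext.mk₀ (x • 𝟙 (ModuleCat.of R B))) (add_zero _) = 0 := by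
    have := ConcreteCategory.congr_hom h0 y
    simpa using this
  obtain ⟨z, hz⟩ := Ext.covariant_sequence_exact₁ N hs y h1 rfl
  rw [← hz, hC.elim z 0, Ext.zero_comp]

lemma extV_lt_of_reg (x : R) (hx : x ∈ Module.annihilator R N) (g : B →ₗ[R] C)
    (hr : Function.Injective (LinearMap.lsmul R B x)) (hg : Function.Surjective g)
    (h : Function.Exact (LinearMap.lsmul R B x) g) {d : ℕ}
    (hC : ∀ i, i + 1 < d → ExtV N C i) : ∀ i < d, ExtV N B i := by
  rintro (_ | i) hi
  · exact extV_zero_of_reg N x hx hr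
  · exact extV_succ_of_reg N x hx g hr hg h (hC i hi)

end ExtPart

section IdealPart
variable {R : Type u} [CommRing R] (N : ModuleCat.{u} R)

lemma surj_id {I B : Ideal R} (h : I ≤ B) :
    Function.Surjective (Submodule.mapQ I B LinearMap.id h) := by
  intro b
  obtain ⟨b, rfl⟩ := Submodule.Quotient.mk_surjective _ b
  exact ⟨Submodule.Quotient.mk b, rfl⟩

/-- exact sequence `S/C → S/I → S/B` with `C = I : x`, `B = I + (x)`. -/
lemma colon_exact (I C B : Ideal R) (x : R) (hC : ∀ f, f ∈ C ↔ x * f ∈ I)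
    (hB : B = I ⊔ Ideal.span {x}) :
    ∃ (f : (R ⧸ C) →ₗ[R] (R ⧸ I)) (g : (R ⧸ I) →ₗ[R] (R ⧸ B)),
      Function.Injective f ∧ Function.Surjective g ∧ Function.Exact f g ∧
      (∀ a : R, f (Ideal.Quotient.mk C a) = Ideal.Quotient.mk I (x * a)) := by
  have hle : C ≤ Submodule.comap (LinearMap.lsmul R R x) I := fun a ha => (hC a).1 ha
  have hIB : I ≤ B := hB ▸ le_sup_left
  refine ⟨Submodule.mapQ C I (LinearMap.lsmul R R x) hle, Submodule.mapQ I B LinearMap.id hIB, ?_,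
    surj_id hIB, ?_, fun a => rfl⟩
  · rw [injective_iff_map_eq_zero]
    intro a
    obtain ⟨a, rfl⟩ := Submodule.Quotient.mk_surjective _ a
    intro h
    rw [Submodule.mapQ_apply, Submodule.Quotient.mk_eq_zero] at h
    rw [Submodule.Quotient.mk_eq_zero]
    exact (hC a).2 h
  · intro b
    obtain ⟨b, rfl⟩ := Submodule.Quotient.mk_surjective _ b
    constructor
    · intro h
      have h' : b ∈ B := by
        rwa [Submodule.mapQ_apply, Submodule.Quotient.mk_eq_zero] at h
      rw [hB, Submodule.mem_sup] at h'
      obtain ⟨y, hy, z, hz, rfl⟩ := h'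
      obtain ⟨c, rfl⟩ := Ideal.mem_span_singleton.1 hz
      refine ⟨Submodule.Quotient.mk c, ?_⟩
      rw [Submodule.mapQ_apply, Submodule.Quotient.eq]
      simpa using hy
    · rintro ⟨c, hc⟩
      obtain ⟨c, rfl⟩ := Submodule.Quotient.mk_surjective _ c
      rw [← hc, Submodule.mapQ_apply, Submodule.mapQ_apply, Submodule.Quotient.mk_eq_zero, hB]
      exact Ideal.mul_mem_right _ _ (Ideal.mem_sup_right (Ideal.mem_span_singleton_self x))

lemma extV_of_colon {I C B : Ideal R} (x : R) (hC : ∀ f, f ∈ C ↔ x * f ∈ I)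
    (hB : B = I ⊔ Ideal.span {x}) {i : ℕ} (h1 : ExtV N (R ⧸ C) i) (h2 : ExtV N (R ⧸ B) i) :
    ExtV N (R ⧸ I) i := by
  obtain ⟨f, g, hf, hg, h, -⟩ := colon_exact I C B x hC hB
  exact extV_mid N f g hf hg h h1 h2

lemma extV_of_reg {I B : Ideal R} (x : R) (hx : x ∈ Module.annihilator R N)
    (hC : ∀ f, f ∈ I ↔ x * f ∈ I)
    (hB : B = I ⊔ Ideal.span {x}) {d : ℕ} (h2 : ∀ i, i + 1 < d → ExtV N (R ⧸ B) i) :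
    ∀ i < d, ExtV N (R ⧸ I) i := by
  obtain ⟨f, g, hf, hg, h, hfx⟩ := colon_exact I I B x hC hB
  have : f = LinearMap.lsmul R (R ⧸ I) x := by
    ext
    have := hfx 1
    rw [mul_one] at this
    refine this.trans ?_
    simp [Algebra.smul_def]
  subst this
  exact extV_lt_of_reg N x hx g hf hg h h2

lemma sub_exact (I X B : Ideal R) (hB : B = I ⊔ X) :
    ∃ (f : (X ⧸ Submodule.comap (Submodule.subtype X) I) →ₗ[R] (R ⧸ I)) (g : (R ⧸ I) →ₗ[R] (R ⧸ B)),
      Function.Injective f ∧ Function.Surjective g ∧ Function.Exact f g := by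
  have hIB : I ≤ B := hB ▸ le_sup_left
  refine ⟨Submodule.mapQ _ I X.subtype le_rfl, Submodule.mapQ I B LinearMap.id hIB, ?_,
    surj_id hIB, ?_⟩
  · rw [injective_iff_map_eq_zero]
    intro a
    obtain ⟨a, rfl⟩ := Submodule.Quotient.mk_surjective _ a
    intro h
    rw [Submodule.mapQ_apply, Submodule.Quotient.mk_eq_zero] at h
    rw [Submodule.Quotient.mk_eq_zero]
    exact h
  · intro b
    obtain ⟨b, rfl⟩ := Submodule.Quotient.mk_surjective _ b
    constructor
    · intro h
      have h' : b ∈ B := by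
        rwa [Submodule.mapQ_apply, Submodule.Quotient.mk_eq_zero] at h
      rw [hB, Submodule.mem_sup] at h'
      obtain ⟨y, hy, z, hz, rfl⟩ := h'
      refine ⟨Submodule.Quotient.mk ⟨z, hz⟩, ?_⟩
      rw [Submodule.mapQ_apply, Submodule.Quotient.eq]
      simpa using hy
    · rintro ⟨c, hc⟩
      obtain ⟨c, rfl⟩ := Submodule.Quotient.mk_surjective _ c
      rw [← hc, Submodule.mapQ_apply, Submodule.mapQ_apply, Submodule.Quotient.mk_eq_zero, hB]
      exact Ideal.mem_sup_right c.2

/-- key nonvanishing step -/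
lemma extV_step {I J X B B' : Ideal R} (hB : B = I ⊔ X) (hB' : B' = J ⊔ X)
    (hIJ : ∀ f ∈ X, f ∈ I ↔ f ∈ J) {i : ℕ} (hJ : ExtV N (R ⧸ J) i) (hIX : ExtV N (R ⧸ B) i)
    (h : ExtV N (R ⧸ I) (i+1)) : ExtV N (R ⧸ B') i := by
  have e : Submodule.comap (Submodule.subtype X) I = Submodule.comap (Submodule.subtype X) J := by
    ext ⟨f, hf⟩
    exact hIJ f hf
  obtain ⟨f, g, hf, hg, hfg⟩ := sub_exact I X B hB
  obtain ⟨f', g', hf', hg', hfg'⟩ := sub_exact J X B' hB'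
  have h1 := extV_left N f g hf hg hfg h hIX
  rw [e] at h1
  exact extV_right N f' g' hf' hg' hfg' h1 hJ

end IdealPart
end TopSq

namespace TopSq
section SqI
variable {K : Type*} [Field K] {σ : Type*} [DecidableEq σ]

variable (K) in
/-- the squarefree monomial ideal attached to an upper set -/
noncomputable def sqI (U : UpperSet (Finset σ)) : Ideal (MvPolynomial σ K) where
  carrier := {f | ∀ m ∈ f.support, m.support ∈ U}
  add_mem' := by
    intro a b ha hb m hm
    rcases Finset.mem_union.1 (MvPolynomial.support_add hm) with h | h
    · exact ha m h
    · exact hb m h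
  zero_mem' := by simp
  smul_mem' := by
    intro c f hf m hm
    have := MvPolynomial.support_mul c f hm
    obtain ⟨a, ha, b, hb, rfl⟩ := Finset.mem_add.1 this
    exact U.upper (Finsupp.support_mono (self_le_add_left b a)) (hf b hb)

lemma mem_sqI {U : UpperSet (Finset σ)} {f : MvPolynomial σ K} :
    f ∈ sqI K U ↔ ∀ m ∈ f.support, m.support ∈ U := Iff.rfl

lemma mono_mem_sqI {U : UpperSet (Finset σ)} {m : σ →₀ ℕ} (c : K) (h : m.support ∈ U) :
    monomial m c ∈ sqI K U := by
  intro m' hm'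
  have := support_monomial_subset hm'
  rw [Finset.mem_singleton] at this
  exact this ▸ h

lemma mem_of_monos {I : Ideal (MvPolynomial σ K)} {f : MvPolynomial σ K}
    (h : ∀ m ∈ f.support, ∀ c, monomial m c ∈ I) : f ∈ I := by
  rw [f.as_sum]
  exact Ideal.sum_mem _ fun m hm => h m hm _

/-- colon -/
def colU (n : σ) (U : UpperSet (Finset σ)) : UpperSet (Finset σ) where
  carrier := {F | insert n F ∈ U}
  upper' := fun _ _ h hF => U.upper (Finset.insert_subset_insert n h) hF

/-- adding variables -/
def addU (P : Set σ) (U : UpperSet (Finset σ)) : UpperSet (Finset σ) where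
  carrier := {F | (∃ p ∈ P, p ∈ F) ∨ F ∈ U}
  upper' := by
    rintro F F' h (⟨p, hp, hF⟩ | hF)
    · exact Or.inl ⟨p, hp, h hF⟩
    · exact Or.inr (U.upper h hF)

/-- only variables -/
def varU (P : Set σ) : UpperSet (Finset σ) where
  carrier := {F | ∃ p ∈ P, p ∈ F}
  upper' := by
    rintro F F' h ⟨p, hp, hF⟩
    exact ⟨p, hp, h hF⟩

lemma mem_colU {n : σ} {U : UpperSet (Finset σ)} {F} : F ∈ colU n U ↔ insert n F ∈ U := Iff.rfl
lemma mem_addU {P : Set σ} {U : UpperSet (Finset σ)} {F} :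
  F ∈ addU P U ↔ (∃ p ∈ P, p ∈ F) ∨ F ∈ U := Iff.rfl
lemma mem_varU {P : Set σ} {F : Finset σ} : F ∈ varU P ↔ (∃ p ∈ P, p ∈ F) := Iff.rfl

lemma sqI_mono {U V : UpperSet (Finset σ)} (h : ∀ F ∈ U, F ∈ V) : sqI K U ≤ sqI K V :=
  fun _ hf m hm => h _ (hf m hm)

lemma sqI_addU (P : Set σ) (U : UpperSet (Finset σ)) :
    sqI K (addU P U) = sqI K U ⊔ sqI K (varU P) := by
  apply le_antisymm
  · intro f hf
    refine mem_of_monos fun m hm c => ?_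
    rcases hf m hm with h | h
    · exact Ideal.mem_sup_right (mono_mem_sqI _ h)
    · exact Ideal.mem_sup_left (mono_mem_sqI _ h)
  · exact sup_le (sqI_mono fun F h => Or.inr h) (sqI_mono fun F h => Or.inl h)

lemma sqI_varU_single (n : σ) : sqI K (varU {n}) = Ideal.span {(X n : MvPolynomial σ K)} := by
  apply le_antisymm
  · intro f hf
    refine mem_of_monos fun m hm c => ?_
    obtain ⟨p, rfl, h⟩ := hf m hm
    rw [Ideal.mem_span_singleton]
    refine (MvPolynomial.X_dvd_monomial).2 (Or.inr ?_)
    simpa using h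
  · rw [Ideal.span_singleton_le_iff_mem]
    exact mono_mem_sqI 1 ⟨n, rfl, by simp⟩

lemma sqI_add_single (n : σ) (U : UpperSet (Finset σ)) :
    sqI K (addU {n} U) = sqI K U ⊔ Ideal.span {(X n : MvPolynomial σ K)} := by
  rw [sqI_addU, sqI_varU_single]

lemma mem_sqI_colU (n : σ) (U : UpperSet (Finset σ)) (f : MvPolynomial σ K) :
    f ∈ sqI K (colU n U) ↔ X n * f ∈ sqI K U := by
  have key : ∀ m : σ →₀ ℕ, (Finsupp.single n 1 + m).support = insert n m.support := by
    intro m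
    ext a
    by_cases h : a = n <;> simp [h]
  simp only [mem_sqI, support_X_mul, Finset.mem_map, forall_exists_index, and_imp,
    forall_apply_eq_imp_iff₂, addLeftEmbedding_apply, key, mem_colU]

variable (K σ) in
/-- the residue field module -/
noncomputable abbrev resN : ModuleCat (MvPolynomial σ K) :=
  ModuleCat.of _ (MvPolynomial σ K ⧸ Ideal.span (Set.range (X : σ → MvPolynomial σ K)))

lemma X_ann (n : σ) : (X n : MvPolynomial σ K) ∈ Module.annihilator (MvPolynomial σ K) (resN K σ) := by
  change _ ∈ Module.annihilator _ (MvPolynomial σ K ⧸ Ideal.span (Set.range (X : σ → MvPolynomial σ K)))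
  rw [Ideal.annihilator_quotient]
  exact Ideal.subset_span ⟨n, rfl⟩

lemma vanish (e : ℕ) (V : Finset σ) (U : UpperSet (Finset σ)) (h1 : ∀ a ∉ V, {a} ∈ U)
    (h2 : ∀ F ⊆ V, F.card ≤ e → F ∉ U) (h3 : e ≤ V.card) :
    ∀ i < e, ExtV (resN K σ) (MvPolynomial σ K ⧸ sqI K U) i := by
  induction hV : V.card using Nat.strong_induction_on generalizing V e U with
  | _ c ih =>
  subst hV
  rcases Nat.eq_zero_or_pos e with rfl | he
  · intro i hi; omega
  obtain ⟨n, hn⟩ : V.Nonempty := Finset.card_pos.1 (by omega)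
  have hc : (V.erase n).card = V.card - 1 := Finset.card_erase_of_mem hn
  -- the colon ideal
  have hcol : ∀ i < e, ExtV (resN K σ) (MvPolynomial σ K ⧸ sqI K (colU n U)) i := by
    refine extV_of_reg _ (X n) (X_ann n) ?_ (sqI_add_single n _) ?_
    · intro f
      rw [← mem_sqI_colU]
      simp [mem_sqI, mem_colU]
    · intro i hi
      refine ih (V.erase n).card (by omega) (e-1) (V.erase n) _ ?_ ?_ (by omega) rfl i (by omega)
      · intro a ha
        by_cases h : a = n
        · exact Or.inl ⟨n, rfl, by simp [h]⟩
        · refine Or.inr (U.upper ?_ (h1 a (by simpa [h] using ha)))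
          simp
      · rintro F hF hFc (⟨p, rfl, hp⟩ | h)
        · exact absurd (hF hp) (by simp)
        · refine h2 (insert n F) ?_ ?_ h
          · exact Finset.insert_subset hn (hF.trans (Finset.erase_subset _ _))
          · exact (Finset.card_insert_le _ _).trans (by omega)
  by_cases hcard : e ≤ (V.erase n).card
  · intro i hi
    refine extV_of_colon _ (X n) (mem_sqI_colU n U) (sqI_add_single n _) (hcol i hi) ?_
    refine ih (V.erase n).card (by omega) e (V.erase n) _ ?_ ?_ hcard rfl i hi
    · intro a ha
      by_cases h : a = n
      · exact Or.inl ⟨n, rfl, by simp [h]⟩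
      · exact Or.inr (h1 a (by simpa [h] using ha))
    · rintro F hF hFc (⟨p, rfl, hp⟩ | h)
      · exact absurd (hF hp) (by simp)
      · exact h2 F (hF.trans (Finset.erase_subset _ _)) hFc h
  · have hVU : V ∉ U := h2 V subset_rfl (by omega)
    have : colU n U = U := by
      ext F
      change insert n F ∈ U ↔ F ∈ U
      refine ⟨fun h => ?_, fun h => U.upper (Finset.subset_insert _ _) h⟩
      by_cases hFV : F ⊆ V
      · exact absurd (U.upper (Finset.insert_subset hn hFV) h) hVU
      · obtain ⟨a, ha, haV⟩ := Finset.not_subset.1 hFV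
        exact U.upper (by simpa using ha) (h1 a haV)
    rw [this] at hcol
    exact hcol

end SqI
end TopSq

namespace TopSq
section Mat
variable {K : Type*} [Field K] {σ : Type*} [DecidableEq σ] [Fintype σ]

/-- contracted spanning-set ideal -/
def IC (M : Matroid σ) (C : Finset σ) : UpperSet (Finset σ) where
  carrier := {F | (∃ p ∈ M.closure C, p ∈ F) ∨ M.closure (↑(F ∪ C) : Set σ) = Set.univ}
  upper' := by
    rintro F F' h (⟨p, hp, hF⟩ | hF)
    · exact Or.inl ⟨p, hp, h hF⟩
    · refine Or.inr (Set.eq_univ_of_univ_subset ?_)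
      rw [← hF]
      refine M.closure_subset_closure ?_
      exact_mod_cast Finset.union_subset_union h subset_rfl

lemma mem_IC {M : Matroid σ} {C F : Finset σ} : F ∈ IC M C ↔
    (∃ p ∈ M.closure C, p ∈ F) ∨ M.closure (↑(F ∪ C) : Set σ) = Set.univ := Iff.rfl

lemma sqI_max {U : UpperSet (Finset σ)} (h0 : ∅ ∉ U) (h1 : ∀ a, {a} ∈ U) :
    sqI K U = Ideal.span (Set.range (X : σ → MvPolynomial σ K)) := by
  apply le_antisymm
  · intro f hf
    refine mem_of_monos fun m hm c => ?_
    have : m.support ≠ ∅ := fun h => h0 (h ▸ hf m hm)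
    obtain ⟨p, hp⟩ := Finset.nonempty_iff_ne_empty.2 this
    have h2 : (X p : MvPolynomial σ K) ∣ monomial m c :=
      (MvPolynomial.X_dvd_monomial).2 (Or.inr (by simpa using hp))
    exact Ideal.mem_of_dvd _ h2 (Ideal.subset_span ⟨p, rfl⟩)
  · rw [Ideal.span_le]
    rintro _ ⟨p, rfl⟩
    refine mono_mem_sqI 1 ?_
    rw [Finsupp.support_single_ne_zero _ one_ne_zero]
    exact h1 p

lemma max_ne_top : Ideal.span (Set.range (X : σ → MvPolynomial σ K)) ≠ ⊤ := by
  intro h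
  have h2 : Ideal.span (Set.range (X : σ → MvPolynomial σ K)) ≤
      RingHom.ker (MvPolynomial.constantCoeff (σ := σ) (R := K)) := by
    rw [Ideal.span_le]
    rintro _ ⟨p, rfl⟩
    simp [RingHom.mem_ker]
  rw [h] at h2
  have := h2 (Submodule.mem_top (x := 1))
  simp [RingHom.mem_ker] at this

lemma not_ext_zero : ¬ ExtV (resN K σ)
    (MvPolynomial σ K ⧸ Ideal.span (Set.range (X : σ → MvPolynomial σ K))) 0 := by
  intro h
  have h1 : Subsingleton (resN K σ ⟶ resN K σ) :=
    CategoryTheory.Abelian.Ext.addEquiv₀.subsingleton_congr.mp h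
  have h2 : Subsingleton (resN K σ →ₗ[MvPolynomial σ K] resN K σ) :=
    ModuleCat.homAddEquiv.symm.subsingleton
  have h3 := LinearMap.congr_fun (h2.elim LinearMap.id 0)
    (Ideal.Quotient.mk (Ideal.span (Set.range (X : σ → MvPolynomial σ K))) 1)
  rw [LinearMap.id_apply, LinearMap.zero_apply] at h3
  rw [Ideal.Quotient.eq_zero_iff_mem] at h3
  exact max_ne_top ((Ideal.eq_top_iff_one _).2 h3)

set_option maxHeartbeats 1000000 in
lemma nonvan (M : Matroid σ) (hE : M.E = Set.univ) (r : ℕ) (B : Finset σ) (hB : B.card = r)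
    (hBs : M.closure (B : Set σ) = Set.univ)
    (hs : ∀ F : Finset σ, M.closure (F : Set σ) = Set.univ → r ≤ F.card) (k : ℕ)
    (C : Finset σ) (hCB : C ⊆ B) (hk : C.card + (k + 1) = r) :
    ¬ ExtV (resN K σ) (MvPolynomial σ K ⧸ sqI K (IC M C)) k := by
  have hsub : ∀ X : Set σ, X ⊆ M.closure X := fun X => M.subset_closure X (by simp [hE])
  have hind : ∀ D : Finset σ, D ⊆ B → ∀ n ∈ B, n ∉ D → n ∉ M.closure (D : Set σ) := by
    intro D hD n hn hnD hcl
    have h1 : n ∈ M.closure ((B.erase n : Finset σ) : Set σ) := by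
      refine M.closure_subset_closure ?_ hcl
      intro a ha
      have : a ≠ n := by rintro rfl; exact hnD ha
      simpa [this] using hD ha
    have h2 := hs (B.erase n) (by
      rw [← Matroid.closure_insert_eq_of_mem_closure h1, ← hBs, ← Finset.coe_insert,
        Finset.insert_erase hn])
    rw [Finset.card_erase_of_mem hn] at h2
    have := Finset.card_pos.2 ⟨n, hn⟩
    omega
  induction k generalizing C with
  | zero =>
    rw [sqI_max]
    · exact not_ext_zero
    · rintro (⟨p, -, hp⟩ | h)
      · simp at hp
      · have := hs _ h
        simp at this
        omega
    · intro p
      by_cases hp : p ∈ M.closure (C : Set σ)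
      · exact Or.inl ⟨p, hp, by simp⟩
      right
      obtain ⟨b, hb, hbC⟩ : ∃ b ∈ B, b ∉ C := by
        by_contra! hcon
        have := Finset.card_le_card hcon
        omega
      have hBi : B = insert b C := by
        symm
        apply Finset.eq_of_subset_of_card_le
        · exact Finset.insert_subset hb hCB
        · rw [Finset.card_insert_of_notMem hbC]; omega
      have hp' : p ∈ M.closure (insert b (C : Set σ)) := by
        rw [← Finset.coe_insert, ← hBi, hBs]; trivial
      have hb' := Matroid.mem_closure_insert hp hp'
      rw [Finset.coe_union, Finset.coe_singleton, Set.singleton_union]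
      rw [← Matroid.closure_insert_eq_of_mem_closure hb']
      refine Set.eq_univ_of_univ_subset ?_
      rw [← hBs, hBi, Finset.coe_insert]
      exact M.closure_subset_closure (Set.insert_subset_insert (Set.subset_insert _ _))
  | succ k ih =>
    obtain ⟨n, hn, hnC⟩ : ∃ b ∈ B, b ∉ C := by
      by_contra! hcon
      have := Finset.card_le_card hcon
      omega
    have hncl := hind C hCB n hn hnC
    have hCn : insert n C ⊆ B := Finset.insert_subset hn hCB
    have hCnc : (insert n C).card = C.card + 1 := Finset.card_insert_of_notMem hnC
    intro hext
    have hmono : M.closure (C : Set σ) ⊆ M.closure (↑(insert n C) : Set σ) :=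
      M.closure_subset_closure (by simp)
    refine ih (insert n C) hCn (by omega) ?_
    have hIC : IC M (insert n C) = addU (M.closure (↑(insert n C) : Set σ)) (colU n (IC M C)) := by
      ext F
      change F ∈ IC M (insert n C) ↔ F ∈ addU _ _
      rw [mem_IC, mem_addU, mem_colU, mem_IC, Finset.union_insert, Finset.insert_union]
      constructor
      · rintro (h | h)
        · exact Or.inl h
        · exact Or.inr (Or.inr h)
      · rintro (h | ⟨p, hp, hpF⟩ | h)
        · exact Or.inl h
        · rcases Finset.mem_insert.1 hpF with rfl | h
          · exact absurd hp hncl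
          · exact Or.inl ⟨p, hmono hp, h⟩
        · exact Or.inr h
    rw [hIC]
    refine extV_step (resN K σ) (I := sqI K (IC M C)) (J := sqI K (colU n (IC M C)))
      (X := sqI K (varU (M.closure (↑(insert n C) : Set σ)))) (sqI_addU _ _) (sqI_addU _ _)
      ?_ ?_ ?_ hext
    · intro f hf
      refine forall₂_congr fun m hm => ?_
      obtain ⟨p, hp, hpF⟩ := hf m hm
      generalize m.support = F at hpF
      constructor
      · intro h
        exact (IC M C).upper (Finset.subset_insert n F) h
      · intro h
        by_cases hpC : p ∈ M.closure (C : Set σ)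
        · exact Or.inl ⟨p, hpC, hpF⟩
        rcases h with ⟨q, hq, hqF⟩ | h
        · rcases Finset.mem_insert.1 hqF with rfl | h
          · exact absurd hq hncl
          · exact Or.inl ⟨q, hq, h⟩
        · right
          rw [Finset.coe_insert] at hp
          have hn' := Matroid.mem_closure_insert hpC hp
          have hn2 : n ∈ M.closure (↑(F ∪ C) : Set σ) := by
            refine M.closure_subset_closure ?_ hn'
            rw [Finset.coe_union]
            exact Set.insert_subset (Or.inl hpF) Set.subset_union_right
          rw [← Matroid.closure_insert_eq_of_mem_closure hn2, ← Finset.coe_insert,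
            ← Finset.insert_union, h]
    · refine extV_of_reg _ (X n) (X_ann n) ?_ (sqI_add_single n _) (d := k + 1) ?_ k (by omega)
      · intro f
        rw [← mem_sqI_colU]
        simp [mem_sqI, mem_colU]
      · intro i hi
        classical
        refine vanish k ((Finset.univ.filter (fun a => a ∉ M.closure (C : Set σ))).erase n) _
          ?_ ?_ ?_ i (by omega)
        · intro a ha
          by_cases h : a = n
          · exact Or.inl ⟨n, rfl, by simp [h]⟩
          · have : a ∈ M.closure (C : Set σ) := by simpa [h] using ha
            exact Or.inr (Or.inl ⟨a, this, by simp⟩)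
        · rintro F hF hFk (⟨p, rfl, hp⟩ | (⟨p, hp, hpF⟩ | h))
          · have := hF hp
            simp at this
          · rcases Finset.mem_insert.1 hpF with rfl | h
            · exact hncl hp
            · have := hF h
              simp [hp] at this
          · have h1 := hs _ h
            have h2 := Finset.card_union_le (insert n F) C
            have h3 := Finset.card_insert_le n F
            omega
        · have : (B \ insert n C) ⊆
            (Finset.univ.filter (fun a => a ∉ M.closure (C : Set σ))).erase n := by
            intro a ha
            simp only [Finset.mem_sdiff, Finset.mem_insert, not_or] at ha
            simp [ha.2.1, hind C hCB a ha.1 ha.2.2]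
          have h4 := Finset.card_le_card this
          rw [Finset.card_sdiff_of_subset hCn] at h4
          omega
    · classical
      refine vanish (k+1) (Finset.univ.filter (fun a => a ∉ M.closure (↑(insert n C) : Set σ))) _
          ?_ ?_ ?_ k (by omega)
      · intro a ha
        have : a ∈ M.closure (↑(insert n C) : Set σ) := by simpa using ha
        exact Or.inl ⟨a, this, by simp⟩
      · rintro F hF hFk (⟨p, hp, hpF⟩ | (⟨p, hp, hpF⟩ | h))
        · exact (Finset.mem_filter.1 (hF hpF)).2 hp
        · exact (Finset.mem_filter.1 (hF hpF)).2 (hmono hp)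
        · have h1 := hs _ h
          have h2 := Finset.card_union_le F C
          omega
      · have : (B \ insert n C) ⊆
            (Finset.univ.filter (fun a => a ∉ M.closure (↑(insert n C) : Set σ))) := by
          intro a ha
          rw [Finset.mem_sdiff] at ha
          exact Finset.mem_filter.2 ⟨Finset.mem_univ _, hind _ hCn a ha.1 ha.2⟩
        have h4 := Finset.card_le_card this
        rw [Finset.card_sdiff_of_subset hCn] at h4
        omega

end Mat
end TopSq

namespace TopSq
section Matching
variable {σ : Type*} [DecidableEq σ] [Fintype σ]

/-- perfectly matchable vertex sets -/
inductive PM (G : SimpleGraph σ) : Finset σ → Prop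
  | nil : PM G ∅
  | cons (u v : σ) (T : Finset σ) (h : G.Adj u v) (hu : u ∉ T) (hv : v ∉ T) (hT : PM G T) :
      PM G (insert u (insert v T))

lemma PM.add {G : SimpleGraph σ} {u v : σ} {T S : Finset σ} (hT : PM G T) (h : G.Adj u v)
    (hu : u ∉ T) (hv : v ∉ T) (hS : S = insert u (insert v T)) : PM G S :=
  hS ▸ PM.cons u v T h hu hv hT

lemma PM.partner {G : SimpleGraph σ} {A : Finset σ} (hA : PM G A) (v : σ) (hv : v ∈ A) :
    ∃ u ∈ A, G.Adj v u ∧ PM G ((A.erase v).erase u) := by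
  induction hA with
  | nil => simp at hv
  | cons a b T h ha hb hT ih =>
    have hne := h.ne
    by_cases h1 : v = a
    · subst h1
      refine ⟨b, by simp, h, ?_⟩
      convert hT using 1
      grind
    by_cases h2 : v = b
    · subst h2
      refine ⟨a, by simp, h.symm, ?_⟩
      convert hT using 1
      grind
    have hvT : v ∈ T := by simpa [h1, h2] using hv
    obtain ⟨u, hu, huv, hP⟩ := ih hvT
    refine ⟨u, by simp [hu], huv, ?_⟩
    exact hP.add h (by grind) (by grind) (by grind)

lemma set3 {A : Finset σ} {u v w : σ} (hu : u ∈ A) (h : u ≠ v) :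
    insert w (A.erase v) = insert u (insert w ((A.erase v).erase u)) := by
  rw [Finset.insert_comm, Finset.insert_erase (by simp [hu, h])]

lemma set1 {A : Finset σ} {u v w z : σ} (hu : u ∈ A) (hw : w ∈ A) (h : u ≠ v) (hwv : w ≠ v) :
    insert z (A.erase v) = insert u (insert w (insert z (((A.erase v).erase u).erase w))) := by
  ext x
  simp only [Finset.mem_insert, Finset.mem_erase]
  by_cases h1 : x = u
  · subst h1; simp [hu, h]
  by_cases h2 : x = w
  · subst h2; simp [hw, hwv]
  simp [h1, h2]

lemma set2 {B : Finset σ} {u v w z : σ} (hu : u ∈ B) (hw : w ∈ B) :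
    insert v (insert z B) = insert v (insert u (insert w (insert z ((B.erase u).erase w)))) := by
  ext x
  simp only [Finset.mem_insert, Finset.mem_erase]
  by_cases h1 : x = u
  · subst h1; simp [hu]
  by_cases h2 : x = w
  · subst h2; simp [hw]
  simp [h1, h2]

lemma PM.exchange {G : SimpleGraph σ} (c : ℕ) : ∀ {A B : Finset σ}, A.card = c → PM G A → PM G B →
    ∀ v ∈ A, v ∉ B → (∃ w ∈ B, w ∉ A ∧ PM G (insert w (A.erase v))) ∨
      (∃ w ∈ A, w ∉ B ∧ w ≠ v ∧ PM G (insert v (insert w B))) := by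
  induction c using Nat.strong_induction_on with
  | _ c ih =>
  intro A B hc hA hB v hv hvB
  obtain ⟨u, hu, huv, hA'⟩ := hA.partner v hv
  have hne := huv.ne
  by_cases huB : u ∈ B
  · obtain ⟨w, hw, huw, hB'⟩ := hB.partner u huB
    have hne' := huw.ne
    have hwv : w ≠ v := fun h => hvB (h ▸ hw)
    by_cases hwA : w ∈ A
    · have hlt : ((A.erase v).erase u).card < c := by
        rw [← hc]
        exact Finset.card_lt_card ((Finset.erase_subset _ _).trans_ssubset (Finset.erase_ssubset hv))
      have e1 : w ∈ (A.erase v).erase u := by simp [hwA, hwv, hne'.symm]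
      have e2 : w ∉ (B.erase u).erase w := by simp
      rcases ih _ hlt rfl hA' hB' w e1 e2 with ⟨z, hz, hzA, hP⟩ | ⟨z, hz, hzB, hzw, hP⟩
      · clear ih e1 e2 hlt
        simp only [Finset.mem_erase] at hz hzA
        obtain ⟨hzw, hzu, hzB⟩ := hz
        have hzv : z ≠ v := fun h => hvB (h ▸ hzB)
        have hzA' : z ∉ A := fun h => hzA ⟨hzu, hzv, h⟩
        left
        refine ⟨z, hzB, hzA', ?_⟩
        refine hP.add huw ?_ ?_ ?_
        · simp [hzu.symm]
        · simp [hzw.symm]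
        · exact set1 hu hwA hne.symm hwv
      · clear ih e1 e2 hlt
        simp only [Finset.mem_erase] at hz hzB
        obtain ⟨hzu, hzv, hzA⟩ := hz
        have hzB' : z ∉ B := fun h => hzB ⟨hzw, hzu, h⟩
        right
        refine ⟨z, hzA, hzB', hzv, ?_⟩
        refine hP.add huv ?_ ?_ ?_
        · simp [hvB, hzv.symm, hwv.symm]
        · simp [hne', hzu.symm]
        · exact set2 huB hw
    · left
      refine ⟨w, hw, hwA, ?_⟩
      refine hA'.add huw (by simp) (by simp [hwA]) ?_
      exact set3 hu hne.symm
  · right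
    exact ⟨u, hu, huB, hne.symm, hB.add huv hvB huB rfl⟩

lemma mVerts_insert (a b : σ) (M : Finset (Sym2 σ)) :
    mVerts (insert s(a, b) M) = insert a (insert b (mVerts M)) := by
  ext x
  simp [mVerts, or_assoc]

lemma pm_of_matching {G : SimpleGraph σ} (M : Finset (Sym2 σ)) (hM : IsMatching G M) :
    PM G (mVerts M) ∧ (mVerts M).card = 2 * M.card := by
  induction M using Finset.induction_on with
  | empty =>
    have : mVerts (∅ : Finset (Sym2 σ)) = ∅ := by simp [mVerts]
    rw [this]
    exact ⟨PM.nil, by simp⟩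
  | insert e M he ih =>
    obtain ⟨hP, hc⟩ := ih ⟨fun x hx => hM.1 (by simp only [Finset.coe_insert]; exact Or.inr hx),
      hM.2.mono (by simp)⟩
    induction e using Sym2.ind with
    | _ a b =>
    have hab : s(a, b) ∈ G.edgeSet := hM.1 (Finset.mem_coe.2 (Finset.mem_insert_self _ _))
    rw [SimpleGraph.mem_edgeSet] at hab
    have hd : ∀ x ∈ s(a, b), x ∉ mVerts M := by
      intro x hx hxM
      obtain ⟨f, hf, hxf⟩ := (Finset.mem_filter.1 hxM).2
      exact hM.2 (by simp) (by simp [hf]) (by rintro rfl; exact he hf) x hx hxf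
    have ha := hd a (by simp)
    have hb := hd b (by simp)
    rw [mVerts_insert]
    refine ⟨PM.cons a b _ hab ha hb hP, ?_⟩
    rw [Finset.card_insert_of_notMem (by simp [ha, hab.ne]), Finset.card_insert_of_notMem hb, hc,
      Finset.card_insert_of_notMem he]
    ring

lemma matching_of_pm {G : SimpleGraph σ} {A : Finset σ} (hA : PM G A) :
    ∃ M, IsMatching G M ∧ mVerts M = A := by
  induction hA with
  | nil => exact ⟨∅, ⟨by simp, by simp⟩, by simp [mVerts]⟩
  | cons a b T h ha hb hT ih =>
    obtain ⟨M, hM, rfl⟩ := ih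
    refine ⟨insert s(a, b) M, ⟨?_, ?_⟩, mVerts_insert a b M⟩
    · intro x hx
      rcases Finset.mem_insert.1 hx with rfl | hx
      · exact h
      · exact hM.1 hx
    · rw [Finset.coe_insert]
      refine (Set.pairwise_insert).2 ⟨hM.2, ?_⟩
      intro f hf _
      have key : ∀ v ∈ f, v ∈ mVerts M := fun v hv =>
        Finset.mem_filter.2 ⟨Finset.mem_univ _, f, hf, hv⟩
      have : ∀ v, v ∈ s(a, b) → v ∉ f := by
        intro v hv hvf
        rcases Sym2.mem_iff.1 hv with rfl | rfl
        · exact ha (key _ hvf)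
        · exact hb (key _ hvf)
      exact ⟨this, fun v hv hv' => this v hv' hv⟩

lemma bdd (G : SimpleGraph σ) : BddAbove {k | ∃ M : Finset (Sym2 σ), IsKMatching G M k} := by
  refine ⟨Fintype.card (Sym2 σ), ?_⟩
  rintro k ⟨M, -, rfl⟩
  exact Finset.card_le_univ M

lemma exists_max (G : SimpleGraph σ) : ∃ M : Finset (Sym2 σ), IsKMatching G M (matchNum G) := by
  have := Nat.sSup_mem (s := {k | ∃ M : Finset (Sym2 σ), IsKMatching G M k})
    ⟨0, ∅, ⟨by simp, by simp⟩, rfl⟩ (bdd G)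
  exact this

lemma pm_card_le {G : SimpleGraph σ} {A : Finset σ} (hA : PM G A) : A.card ≤ 2 * matchNum G := by
  obtain ⟨M, hM, rfl⟩ := matching_of_pm hA
  rw [(pm_of_matching M hM).2]
  have : M.card ≤ matchNum G := le_csSup (bdd G) ⟨M, hM, rfl⟩
  omega

/-- vertex sets of maximum matchings -/
def MB (G : SimpleGraph σ) (A : Finset σ) : Prop := PM G A ∧ A.card = 2 * matchNum G

lemma mb_iff {G : SimpleGraph σ} {A : Finset σ} :
    MB G A ↔ ∃ M, IsKMatching G M (matchNum G) ∧ mVerts M = A := by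
  constructor
  · rintro ⟨h, hc⟩
    obtain ⟨M, hM, rfl⟩ := matching_of_pm h
    rw [(pm_of_matching M hM).2] at hc
    exact ⟨M, ⟨hM, by omega⟩, rfl⟩
  · rintro ⟨M, hM, rfl⟩
    obtain ⟨h1, h2⟩ := pm_of_matching M hM.1
    exact ⟨h1, by rw [h2, hM.2]⟩

lemma mb_exists (G : SimpleGraph σ) : ∃ A, MB G A := by
  obtain ⟨M, hM⟩ := exists_max G
  exact ⟨_, mb_iff.2 ⟨M, hM, rfl⟩⟩

lemma mb_exchange {G : SimpleGraph σ} {A B : Finset σ} (hA : MB G A) (hB : MB G B) (v : σ)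
    (hv : v ∈ A) (hvB : v ∉ B) : ∃ w ∈ B, w ∉ A ∧ MB G (insert w (A.erase v)) := by
  rcases PM.exchange _ rfl hA.1 hB.1 v hv hvB with ⟨w, hw, hwA, h⟩ | ⟨w, hw, hwB, hne, h⟩
  · refine ⟨w, hw, hwA, h, ?_⟩
    rw [Finset.card_insert_of_notMem (by simp [hwA]), Finset.card_erase_of_mem hv, ← hA.2]
    have := Finset.card_pos.2 ⟨v, hv⟩
    omega
  · have := pm_card_le h
    rw [Finset.card_insert_of_notMem (by simp [hvB, hne.symm]), Finset.card_insert_of_notMem hwB,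
      hB.2] at this
    omega

/-- every non-isolated vertex is covered by some maximum matching -/
lemma mb_cover {G : SimpleGraph σ} (v : σ) (h : ∃ w, G.Adj v w) : ∃ A, MB G A ∧ v ∈ A := by
  obtain ⟨A, hA⟩ := mb_exists G
  obtain ⟨w, hw⟩ := h
  by_cases hv : v ∈ A
  · exact ⟨A, hA, hv⟩
  have hne := hw.ne
  by_cases hwA : w ∈ A
  · obtain ⟨u, hu, hwu, hP⟩ := hA.1.partner w hwA
    have hne' := hwu.ne
    refine ⟨insert v (A.erase u), ⟨hP.add hw (by grind) (by grind) (by grind), ?_⟩, by simp⟩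
    rw [Finset.card_insert_of_notMem (by simp [hv]), Finset.card_erase_of_mem hu, ← hA.2]
    have := Finset.card_pos.2 ⟨u, hu⟩
    omega
  · have := pm_card_le (hA.1.add hw hv hwA rfl)
    rw [Finset.card_insert_of_notMem (by simp [hv, hne]), Finset.card_insert_of_notMem hwA,
      hA.2] at this
    omega

lemma exists_matroid (G : SimpleGraph σ) : ∃ M : Matroid σ, M.E = Set.univ ∧
    ∀ A : Finset σ, M.IsBase (A : Set σ) ↔ MB G A := by
  classical
  refine ⟨Matroid.ofIsBaseOfFinite (E := Set.univ) Set.finite_univ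
    (fun B => ∃ A : Finset σ, (A : Set σ) = B ∧ MB G A) ?_ ?_ ?_, rfl, ?_⟩
  · obtain ⟨A, hA⟩ := mb_exists G
    exact ⟨_, A, rfl, hA⟩
  · rintro _ _ ⟨A, rfl, hA⟩ ⟨B, rfl, hB⟩ v hv
    obtain ⟨w, hw, hwA, h⟩ := mb_exchange hA hB v (by simpa using hv.1) (by simpa using hv.2)
    exact ⟨w, ⟨hw, hwA⟩, insert w (A.erase v), by simp, h⟩
  · simp
  · intro A
    change (∃ A' : Finset σ, (A' : Set σ) = A ∧ MB G A') ↔ MB G A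
    constructor
    · rintro ⟨A', h, hA⟩
      exact Finset.coe_injective h ▸ hA
    · exact fun h => ⟨A, rfl, h⟩

end Matching
end TopSq

namespace TopSq
section Fin
variable {K : Type*} [Field K] {σ : Type*} [DecidableEq σ] [Fintype σ]

lemma prod_X_eq (A : Finset σ) :
    (∏ v ∈ A, X v : MvPolynomial σ K) = monomial (∑ v ∈ A, Finsupp.single v 1) 1 := by
  rw [monomial_sum_one]
  rfl

lemma ind_apply (A : Finset σ) (x : σ) :
    (∑ v ∈ A, Finsupp.single v 1 : σ →₀ ℕ) x = if x ∈ A then 1 else 0 := by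
  simp [Finsupp.finsetSum_apply, Finsupp.single_apply]

lemma ind_support (A : Finset σ) :
    (∑ v ∈ A, Finsupp.single v 1 : σ →₀ ℕ).support = A := by
  ext x
  rw [Finsupp.mem_support_iff, ind_apply]
  simp

lemma IC_empty_iff (G : SimpleGraph σ) (hiso : ∀ v, ∃ w, G.Adj v w) (M : Matroid σ)
    (hE : M.E = Set.univ) (hM : ∀ A : Finset σ, M.IsBase (A : Set σ) ↔ MB G A) (F : Finset σ) :
    F ∈ IC M ∅ ↔ ∃ A, MB G A ∧ A ⊆ F := by
  have hl : M.closure ∅ = ∅ := by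
    ext v
    simp only [Set.mem_empty_iff_false, iff_false]
    intro hv
    obtain ⟨A, hA, hvA⟩ := mb_cover v (hiso v)
    have hi : M.Indep {v} := ((hM A).2 hA).indep.subset (by simpa using hvA)
    have := hi.notMem_closure_diff_of_mem (e := v) rfl
    simp at this
    exact this hv
  rw [mem_IC]
  simp only [Finset.coe_empty, hl, Set.mem_empty_iff_false, false_and, exists_false, false_or,
    Finset.union_empty]
  rw [← hE, ← Matroid.spanning_iff_closure_eq (by simp [hE]),
    Matroid.spanning_iff_exists_isBase_subset (by simp [hE])]
  constructor
  · rintro ⟨B, hB, hBF⟩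
    obtain ⟨A, rfl⟩ := (Set.toFinite B).exists_finset_coe
    exact ⟨A, (hM A).1 hB, Finset.coe_subset.1 hBF⟩
  · rintro ⟨A, hA, h⟩
    exact ⟨A, (hM A).2 hA, Finset.coe_subset.2 h⟩

lemma matchPow_eq (G : SimpleGraph σ) (U : UpperSet (Finset σ))
    (hU : ∀ F, F ∈ U ↔ ∃ A, MB G A ∧ A ⊆ F) :
    matchPow K G (matchNum G) = sqI K U := by
  apply le_antisymm
  · unfold matchPow
    rw [Ideal.span_le]
    rintro _ ⟨M, hM, rfl⟩
    unfold matchMon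
    rw [prod_X_eq]
    refine mono_mem_sqI _ ?_
    rw [ind_support, hU]
    exact ⟨_, mb_iff.2 ⟨M, hM, rfl⟩, subset_rfl⟩
  · intro f hf
    refine mem_of_monos fun m hm c => ?_
    obtain ⟨A, hA, hAm⟩ := (hU _).1 (hf m hm)
    obtain ⟨M, hM, rfl⟩ := mb_iff.1 hA
    have hle : (∑ v ∈ mVerts M, Finsupp.single v 1 : σ →₀ ℕ) ≤ m := by
      intro x
      rw [ind_apply]
      split_ifs with h
      · exact Nat.one_le_iff_ne_zero.2 (Finsupp.mem_support_iff.1 (hAm h))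
      · exact Nat.zero_le _
    have : (monomial m c : MvPolynomial σ K) =
        monomial (m - ∑ v ∈ mVerts M, Finsupp.single v 1) c * matchMon K M := by
      unfold matchMon
      rw [prod_X_eq, monomial_mul, tsub_add_cancel_of_le hle, mul_one]
    rw [this]
    exact Ideal.mul_mem_left _ _ (Ideal.subset_span ⟨M, hM, rfl⟩)

end Fin

section Final
universe u
open CategoryTheory Abelian

lemma main_pos {K : Type u} [Field K] {n : ℕ} (hn : 0 < n)
    (G : SimpleGraph (Fin n)) (hiso : ∀ v : Fin n, ∃ w, G.Adj v w) :
    qdepth K (matchPow K G (matchNum G)) = 2 * matchNum G - 1 := by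
  obtain ⟨M, hE, hM⟩ := exists_matroid G
  have hU := IC_empty_iff G hiso M hE hM
  rw [matchPow_eq G (IC M ∅) hU]
  obtain ⟨B, hB⟩ := mb_exists G
  have hpos : 1 ≤ matchNum G := by
    obtain ⟨w, hw⟩ := hiso ⟨0, hn⟩
    have := pm_card_le (PM.nil.add hw (by simp) (by simp) rfl)
    rw [Finset.card_insert_of_notMem (by simpa using hw.ne), Finset.card_insert_of_notMem (by simp)]
      at this
    simp at this
    omega
  have hcard : ∀ F ∈ IC M ∅, 2 * matchNum G ≤ F.card := by
    intro F hF
    obtain ⟨A, hA, hAF⟩ := (hU F).1 hF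
    rw [← hA.2]
    exact Finset.card_le_card hAF
  have hspan : ∀ F : Finset (Fin n), M.closure (F : Set (Fin n)) = Set.univ → F ∈ IC M ∅ := by
    intro F hF
    rw [mem_IC]
    right
    simpa using hF
  have hBs : M.closure (B : Set (Fin n)) = Set.univ := by
    rw [((hM B).2 hB).closure_eq, hE]
  have hnv : ¬ ExtV (resN K (Fin n)) (MvPolynomial (Fin n) K ⧸ sqI K (IC M ∅))
      (2 * matchNum G - 1) :=
    nonvan M hE (2 * matchNum G) B hB.2 hBs (fun F hF => hcard F (hspan F hF)) _ ∅ (by simp)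
      (by simp; omega)
  have hv : ∀ i < 2 * matchNum G - 1,
      ExtV (resN K (Fin n)) (MvPolynomial (Fin n) K ⧸ sqI K (IC M ∅)) i := by
    refine vanish _ Finset.univ _ (fun a ha => absurd (Finset.mem_univ a) ha) ?_ ?_
    · intro F _ hF hFU
      have := hcard F hFU
      omega
    · have := Finset.card_le_univ B
      rw [hB.2] at this
      rw [Finset.card_univ]
      omega
  set I := sqI K (IC M ∅) with hI
  set m := Ideal.span (Set.range (X : Fin n → MvPolynomial (Fin n) K)) with hm
  have hIm : I ≤ m := by
    intro f hf
    refine mem_of_monos fun d hd c => ?_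
    have h1 := hcard _ (hf d hd)
    obtain ⟨x, hx⟩ := Finset.card_pos.1 (show 0 < d.support.card by omega)
    have : (monomial d c : MvPolynomial (Fin n) K) =
        monomial (d - Finsupp.single x 1) c * X x := by
      rw [X, monomial_mul, tsub_add_cancel_of_le, mul_one]
      rw [Finsupp.single_le_iff]
      exact Nat.one_le_iff_ne_zero.2 (Finsupp.mem_support_iff.1 hx)
    rw [this]
    exact Ideal.mul_mem_left _ _ (Ideal.subset_span ⟨x, rfl⟩)
  have hlt : m • (⊤ : Submodule (MvPolynomial (Fin n) K) (MvPolynomial (Fin n) K ⧸ I)) < ⊤ := by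
    rw [lt_top_iff_ne_top]
    intro h
    apply max_ne_top (K := K) (σ := Fin n)
    rw [← hm, Ideal.eq_top_iff_one]
    have hle : m • (⊤ : Submodule (MvPolynomial (Fin n) K) (MvPolynomial (Fin n) K ⧸ I)) ≤
        Submodule.map I.mkQ m := by
      rw [Submodule.smul_le]
      rintro r hr y -
      obtain ⟨y, rfl⟩ := I.mkQ_surjective y
      exact ⟨r * y, Ideal.mul_mem_right _ _ hr, rfl⟩
    have h1 : I.mkQ 1 ∈ Submodule.map I.mkQ m := hle (by rw [h]; exact Submodule.mem_top)
    obtain ⟨y, hy, hy1⟩ := h1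
    have : y - 1 ∈ I := (Submodule.Quotient.eq I).1 hy1
    have h2 := m.sub_mem hy (hIm this)
    simpa using h2
  have hsupp : Module.support (MvPolynomial (Fin n) K) (resN K (Fin n)) =
      PrimeSpectrum.zeroLocus (m : Set (MvPolynomial (Fin n) K)) := by
    change Module.support _ (MvPolynomial (Fin n) K ⧸ m) = _
    rw [Module.support_eq_zeroLocus, Ideal.annihilator_quotient]
  have hfin : Module.Finite (MvPolynomial (Fin n) K) (resN K (Fin n)) :=
    inferInstanceAs (Module.Finite _ (MvPolynomial (Fin n) K ⧸ m))
  have hfin2 : Module.Finite (MvPolynomial (Fin n) K)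
      (ModuleCat.of (MvPolynomial (Fin n) K) (MvPolynomial (Fin n) K ⧸ I)) :=
    inferInstanceAs (Module.Finite _ (MvPolynomial (Fin n) K ⧸ I))
  have hmem := ModuleCat.exists_isRegular_of_exists_subsingleton_ext m (2 * matchNum G - 1)
    (ModuleCat.of (MvPolynomial (Fin n) K) (MvPolynomial (Fin n) K ⧸ I)) hlt
    (resN K (Fin n)) hsupp hv
  have hub : ∀ k ∈ {k | ∃ l : List (MvPolynomial (Fin n) K), l.length = k ∧
      (∀ f ∈ l, f ∈ m) ∧ RingTheory.Sequence.IsRegular (MvPolynomial (Fin n) K ⧸ I) l},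
      k ≤ 2 * matchNum G - 1 := by
    rintro k ⟨l, rfl, hl, hreg⟩
    by_contra hk
    push Not at hk
    exact hnv (ModuleCat.subsingleton_ext_of_exists_isRegular m (resN K (Fin n)) hsupp.le
      (ModuleCat.of (MvPolynomial (Fin n) K) (MvPolynomial (Fin n) K ⧸ I)) hlt l hl hreg _ hk)
  exact le_antisymm (csSup_le ⟨_, hmem⟩ hub) (le_csSup ⟨_, hub⟩ hmem)

lemma main_zero {K : Type u} [Field K]
    (G : SimpleGraph (Fin 0)) :
    qdepth K (matchPow K G (matchNum G)) = 2 * matchNum G - 1 := by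
  obtain ⟨M, hM⟩ := exists_max G
  have hM0 : M = ∅ := by
    ext e
    induction e using Sym2.ind with
    | _ a b => exact a.elim0
  subst hM0
  have h0 : matchNum G = 0 := by
    rw [← hM.2]; rfl
  have htop : matchPow K G (matchNum G) = ⊤ := by
    rw [Ideal.eq_top_iff_one]
    refine Ideal.subset_span ⟨∅, hM, ?_⟩
    simp [matchMon, mVerts]
  rw [htop, h0]
  unfold qdepth
  refine (congrArg sSup ?_).trans csSup_empty
  rw [Set.eq_empty_iff_forall_notMem]
  rintro k ⟨l, -, -, hl⟩
  have := hl.nontrivial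
  exact (Submodule.Quotient.nontrivial_iff.1 this) rfl

end Final
end TopSq
/-- Let `G` be a graph on `[n]` with no isolated vertices. Then
the highest nonzero squarefree power of `I(G)` has minimum depth:
`depth(S/I(G)^{[ν(G)]}) = 2ν(G) − 1`. -/
theorem min_depth_of_top_sqPow {K : Type*} [Field K] {n : ℕ}
    (G : SimpleGraph (Fin n))
    (hiso : ∀ v : Fin n, ∃ w, G.Adj v w) :
    qdepth K (matchPow K G (matchNum G)) = 2 * matchNum G - 1 := by
  rcases Nat.eq_zero_or_pos n with rfl | hn
  · exact TopSq.main_zero G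
  · exact TopSq.main_pos hn G hiso
end
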